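/- arXiv:2403.17079 — 3 statements merged into one kernel-verified Lean document; each statement's English description precedes it below -/
import Mathlib

section
/- Let (Q, m, k) be a commutative Noetherian local ring, let f_1, …, f_n be a Q-regular sequence contained in m, set I = (f_1, …, f_n) and R = Q/I. Then for every finitely generated R-module M and every integer i ≥ 0 one has the coefficient-wise inequality β_i^R(M) ≤ Σ_{j ≥ 0, 2j ≤ i} C(n−1+j, n−1) · β_{i−2j}^Q(M), where C(a,b) denotes the binomial coefficient. (Equivalently, P_M^R(t) ≼ P_M^Q(t)·(1−t²)^{−n} coefficient-wise.) -/
open CategoryTheory TensorProduct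

/-- The `i`-th Betti number of a module `M` over a local ring `A`:
`β_i^A(M) = dim_k Tor_i^A(M, k)`, computed as the `k`-dimension of
`k ⊗_A Tor_i^A(M, k)` (the two agree since `Tor_i^A(M, k)` is a `k`-vector
space, being annihilated by the maximal ideal of `A`). -/
noncomputable def bettiNumber (A : Type) [CommRing A] [IsLocalRing A]
    (M : Type) [AddCommGroup M] [Module A M] (i : ℕ) : ℕ :=
  Module.finrank (IsLocalRing.ResidueField A)
    (IsLocalRing.ResidueField A ⊗[A]
      (((Tor (ModuleCat A) i).obj (ModuleCat.of A M)).obj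
        (ModuleCat.of A (IsLocalRing.ResidueField A))))

/-!
Let `Q → R` be a surjection of local rings and let `M` be a finite `R`-module with minimal free
cover `0 → N → R^b → M → 0`. The long exact sequence of `Tor^Q(-, k)` bounds the Betti numbers of
`N` over `Q` by those of `M` and of `R`, while over `R` the Betti numbers of `N` are those of `M`
shifted by one. Iterating gives Serre's bound `P_M^R ≼ P_M^Q + t (P_R^Q - 1) P_M^R`.
If `R = Q / (f)` with `f` regular, then `P_R^Q ≼ 1 + t`, hence `P_M^R ≼ P_M^Q + t² P_M^R`, so
that every element of the regular sequence costs a factor `1 / (1 - t²)`.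

Betti numbers are measured as lengths in `ℕ∞`, so that exact sequences of `Tor` modules yield the
inequalities without finiteness assumptions.
-/

universe u

section Length

variable {A X Y Z W : Type*} [Ring A] [AddCommGroup X] [AddCommGroup Y] [AddCommGroup Z]
  [AddCommGroup W] [Module A X] [Module A Y] [Module A Z] [Module A W]

lemma length_le_add_of_exact {f : X →ₗ[A] Y} {g : Y →ₗ[A] Z} (h : Function.Exact f g) :
    Module.length A Y ≤ Module.length A X + Module.length A Z := by
  rw [Module.length_eq_add_of_exact (LinearMap.ker g).subtype g.rangeRestrict
    (Submodule.subtype_injective _) g.surjective_rangeRestrict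
    (fun y ↦ by simp [Subtype.ext_iff]), h.linearMap_ker_eq]
  gcongr
  · exact Module.length_le_of_surjective _ f.surjective_rangeRestrict
  · exact Module.length_le_of_injective _ (Submodule.subtype_injective _)

lemma length_add_length_le_of_exact {f : X →ₗ[A] Y} {g : Y →ₗ[A] Z} {h : Z →ₗ[A] W}
    (hfg : Function.Exact f g) (hgh : Function.Exact g h) (hh : Function.Surjective h) :
    Module.length A Y + Module.length A W ≤ Module.length A X + Module.length A Z := by
  have hker : Function.Exact f (g.codRestrict (LinearMap.ker h) hgh.apply_apply_eq_zero) :=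
    fun y ↦ Subtype.ext_iff.trans (hfg y)
  rw [Module.length_eq_add_of_exact (LinearMap.ker h).subtype h
    (Submodule.subtype_injective _) hh h.exact_subtype_ker_map, ← add_assoc]
  gcongr
  exact length_le_add_of_exact hker

end Length

section HomologySequence

variable {A : Type*} [Ring A] {ι : Type*} {c : ComplexShape ι}
  {S : ShortComplex (HomologicalComplex (ModuleCat A) c)}

lemma length_homology_X₁_le (hS : S.ShortExact) {i j : ι} (hij : c.Rel i j) :
    Module.length A (S.X₁.homology j) ≤
      Module.length A (S.X₃.homology i) + Module.length A (S.X₂.homology j) :=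
  length_le_add_of_exact <|
    (ShortComplex.ShortExact.moduleCat_exact_iff_function_exact _).mp (hS.homology_exact₁ i j hij)

lemma length_homology_X₂_le (hS : S.ShortExact) (i : ι) :
    Module.length A (S.X₂.homology i) ≤
      Module.length A (S.X₁.homology i) + Module.length A (S.X₃.homology i) :=
  length_le_add_of_exact <|
    (ShortComplex.ShortExact.moduleCat_exact_iff_function_exact _).mp (hS.homology_exact₂ i)

lemma length_homology_X₃_le (hS : S.ShortExact) {i j : ι} (hij : c.Rel i j) :
    Module.length A (S.X₃.homology i) ≤
      Module.length A (S.X₂.homology i) + Module.length A (S.X₁.homology j) :=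
  length_le_add_of_exact <|
    (ShortComplex.ShortExact.moduleCat_exact_iff_function_exact _).mp (hS.homology_exact₃ i j hij)

lemma length_homology_X₁_add_X₃_le (hS : S.ShortExact) {i j : ι} (hij : c.Rel i j)
    (hj : ∀ k, ¬ c.Rel j k) :
    Module.length A (S.X₁.homology j) + Module.length A (S.X₃.homology j) ≤
      Module.length A (S.X₃.homology i) + Module.length A (S.X₂.homology j) := by
  have := hS.epi_g
  have : Epi (HomologicalComplex.homologyMap S.g j) :=
    HomologicalComplex.epi_homologyMap_of_epi_of_not_rel _ _ hj
  exact length_add_length_le_of_exact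
    ((ShortComplex.ShortExact.moduleCat_exact_iff_function_exact _).mp
      (hS.homology_exact₁ i j hij))
    ((ShortComplex.ShortExact.moduleCat_exact_iff_function_exact _).mp (hS.homology_exact₂ j))
    ((ModuleCat.epi_iff_surjective _).mp this)

end HomologySequence

section LeftDerived

variable {R C D : Type*} [Semiring R] [Category C] [Category D] [Abelian C] [Abelian D]
  [HasProjectiveResolutions C] [Linear R C] [Linear R D]

lemma leftDerived_map_smul (F : C ⥤ D) [F.Additive] [F.Linear R] (n : ℕ) {X Y : C} (a : R)
    (f : X ⟶ Y) : (F.leftDerived n).map (a • f) = a • (F.leftDerived n).map f := by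
  let P := projectiveResolution X
  let P' := projectiveResolution Y
  let φ := ProjectiveResolution.lift f P P'
  have hφ : φ.f 0 ≫ P'.π.f 0 = P.π.f 0 ≫ f := ProjectiveResolution.lift_commutes_zero f P P'
  have homologyMap_smul {K L : ChainComplex D ℕ} (ψ : K ⟶ L) :
      (HomologicalComplex.homologyFunctor D _ n).map (a • ψ) =
        a • (HomologicalComplex.homologyFunctor D _ n).map ψ :=
    ShortComplex.homologyMap_smul ((HomologicalComplex.shortComplexFunctor D _ n).map ψ) a
  rw [← cancel_mono (P'.isoLeftDerivedObj F n).hom, Linear.smul_comp,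
    ProjectiveResolution.isoLeftDerivedObj_hom_naturality f P P' φ hφ F n,
    ProjectiveResolution.isoLeftDerivedObj_hom_naturality (a • f) P P' (a • φ)
      (by
        rw [HomologicalComplex.smul_f_apply, Linear.smul_comp, hφ]
        exact (Linear.comp_smul ..).symm) F n]
  simp only [Functor.comp_map, Functor.map_smul, homologyMap_smul, Linear.comp_smul]

end LeftDerived

section TorModule

variable (A : Type u) [CommRing A]

/-- The module `Tor_i^A(M, K)`, as computed by `CategoryTheory.Tor`, for unbundled modules. -/
noncomputable abbrev torModule (M K : Type u) [AddCommGroup M] [Module A M] [AddCommGroup K]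
    [Module A K] (i : ℕ) : ModuleCat.{u} A :=
  ((Tor (ModuleCat A) i).obj (ModuleCat.of A M)).obj (ModuleCat.of A K)

/-- The complex `M ⊗ P`, for `P` a projective resolution of `K`, whose homology is `Tor(M, K)`. -/
noncomputable abbrev torComplex (M K : Type u) [AddCommGroup M] [Module A M] [AddCommGroup K]
    [Module A K] : ChainComplex (ModuleCat.{u} A) ℕ :=
  (((MonoidalCategory.tensoringLeft (ModuleCat A)).obj (ModuleCat.of A M)).mapHomologicalComplex
    _).obj (projectiveResolution (ModuleCat.of A K)).complex

variable {A} {N F M : Type u} [AddCommGroup N] [AddCommGroup F] [AddCommGroup M]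
  [Module A N] [Module A F] [Module A M] (K : Type u) [AddCommGroup K] [Module A K]

lemma length_torModule (M : Type u) [AddCommGroup M] [Module A M] (i : ℕ) :
    Module.length A (torModule A M K i) = Module.length A ((torComplex A M K).homology i) :=
  ((projectiveResolution (ModuleCat.of A K)).isoLeftDerivedObj
    _ i).toLinearEquiv.length_eq

/-- The isomorphism `Tor₀(M, K) ≃ M ⊗ K`. -/
noncomputable def torModuleZeroEquiv (M : Type u) [AddCommGroup M] [Module A M] :
    torModule A M K 0 ≃ₗ[A] M ⊗[A] K :=
  (((MonoidalCategory.tensoringLeft (ModuleCat A)).obj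
    (ModuleCat.of A M)).leftDerivedZeroIsoSelf.app (ModuleCat.of A K)).toLinearEquiv

lemma flat_projectiveResolution (i : ℕ) :
    Module.Flat A ((projectiveResolution (ModuleCat.of A K)).complex.X i) := by
  have : Module.Projective A ((projectiveResolution (ModuleCat.of A K)).complex.X i) :=
    (IsProjective.iff_projective _).mpr ((projectiveResolution (ModuleCat.of A K)).projective i)
  infer_instance

lemma isTorsionBy_torModule {a : A} (ha : Module.IsTorsionBy A K a) (i : ℕ) :
    Module.IsTorsionBy A (torModule A M K i) a := by
  let F := (MonoidalCategory.tensoringLeft (ModuleCat A)).obj (ModuleCat.of A M)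
  have hK : a • 𝟙 (ModuleCat.of A K) = (0 : A) • 𝟙 (ModuleCat.of A K) := by
    ext x
    exact (ha (x := x)).trans (zero_smul A x).symm
  have hT : a • 𝟙 ((F.leftDerived i).obj (ModuleCat.of A K)) = 0 := by
    rw [← (F.leftDerived i).map_id, ← leftDerived_map_smul, hK, leftDerived_map_smul, zero_smul]
  exact fun t ↦ congrArg (fun φ ↦ φ.hom t) hT

lemma length_torModule_succ_of_flat [Module.Flat A M] (i : ℕ) :
    Module.length A (torModule A M K (i + 1)) = 0 := by
  rw [length_torModule, Module.length_eq_zero_iff]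
  refine ModuleCat.subsingleton_of_isZero ?_
  rw [← HomologicalComplex.exactAt_iff_isZero_homology]
  have hP := (projectiveResolution (ModuleCat.of A K)).complex_exactAt_succ i
  rw [HomologicalComplex.exactAt_iff' _ (i + 2) (i + 1) i (by simp) (by simp),
    ShortComplex.ShortExact.moduleCat_exact_iff_function_exact] at hP ⊢
  exact Module.Flat.lTensor_exact M hP

section ShortExact

variable {g : N →ₗ[A] F} {h : F →ₗ[A] M}

/-- The sequence `N ⊗ P → F ⊗ P → M ⊗ P` of complexes, for `P` a projective resolution of `K`,
induced by `N → F → M`. -/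
noncomputable def torShortComplex (hgh : h ∘ₗ g = 0) :
    ShortComplex (ChainComplex (ModuleCat.{u} A) ℕ) where
  X₁ := torComplex A N K
  X₂ := torComplex A F K
  X₃ := torComplex A M K
  f := (NatTrans.mapHomologicalComplex ((MonoidalCategory.tensoringLeft (ModuleCat A)).map
    (ModuleCat.ofHom g)) _).app _
  g := (NatTrans.mapHomologicalComplex ((MonoidalCategory.tensoringLeft (ModuleCat A)).map
    (ModuleCat.ofHom h)) _).app _
  zero := by
    ext i : 2
    change LinearMap.rTensor _ h ∘ₗ LinearMap.rTensor _ g = 0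
    rw [← LinearMap.rTensor_comp, hgh, LinearMap.rTensor_zero]

lemma torShortComplex_shortExact (hg : Function.Injective g) (hh : Function.Surjective h)
    (hgh : Function.Exact g h) : (torShortComplex K hgh.linearMap_comp_eq_zero).ShortExact := by
  refine HomologicalComplex.shortExact_of_degreewise_shortExact _ fun i ↦ ?_
  have := flat_projectiveResolution (A := A) K i
  exact ModuleCat.shortComplex_shortExact _ (rTensor_exact _ hgh hh)
    (Module.Flat.rTensor_preserves_injective_linearMap g hg) (LinearMap.rTensor_surjective _ hh)

variable (hg : Function.Injective g) (hh : Function.Surjective h) (hgh : Function.Exact g h)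
include hg hh hgh

lemma length_torModule_left_le (i : ℕ) : Module.length A (torModule A N K i) ≤
    Module.length A (torModule A M K (i + 1)) + Module.length A (torModule A F K i) := by
  simp only [length_torModule]
  exact length_homology_X₁_le (torShortComplex_shortExact K hg hh hgh) (by simp)

lemma length_torModule_middle_le (i : ℕ) : Module.length A (torModule A F K i) ≤
    Module.length A (torModule A N K i) + Module.length A (torModule A M K i) := by
  simp only [length_torModule]
  exact length_homology_X₂_le (torShortComplex_shortExact K hg hh hgh) i

lemma length_torModule_right_le (i : ℕ) : Module.length A (torModule A M K (i + 1)) ≤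
    Module.length A (torModule A F K (i + 1)) + Module.length A (torModule A N K i) := by
  simp only [length_torModule]
  exact length_homology_X₃_le (torShortComplex_shortExact K hg hh hgh) (by simp)

lemma length_torModule_zero_add_le :
    Module.length A (torModule A N K 0) + Module.length A (torModule A M K 0) ≤
      Module.length A (torModule A M K 1) + Module.length A (torModule A F K 0) := by
  simp only [length_torModule]
  exact length_homology_X₁_add_X₃_le (torShortComplex_shortExact K hg hh hgh) (by simp) (by simp)

end ShortExact

lemma length_torModule_fin_le (b i : ℕ) :
    Module.length A (torModule A (Fin b → M) K i) ≤ b * Module.length A (torModule A M K i) := by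
  induction b with
  | zero =>
    cases i with
    | zero => simp [(torModuleZeroEquiv K (Fin 0 → M)).length_eq, Module.length_eq_zero]
    | succ i => simp [length_torModule_succ_of_flat]
  | succ b ih =>
    have hexact : Function.Exact (LinearMap.single A (fun _ : Fin (b + 1) ↦ M) 0)
        (LinearMap.funLeft A M Fin.succ) := by
      refine fun x ↦ ⟨fun hx ↦ ⟨x 0, ?_⟩, ?_⟩
      · ext j
        cases j using Fin.cases with
        | zero => simp
        | succ j => simpa using (congr_fun hx j).symm
      · rintro ⟨m, rfl⟩
        ext j
        simp [LinearMap.funLeft_apply]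
    calc Module.length A (torModule A (Fin (b + 1) → M) K i)
      _ ≤ Module.length A (torModule A M K i) + Module.length A (torModule A (Fin b → M) K i) :=
        length_torModule_middle_le K (Pi.single_injective (M := fun _ ↦ M) 0)
          (LinearMap.funLeft_surjective_of_injective _ _ _ (Fin.succ_injective b)) hexact i
      _ ≤ ↑(b + 1) * Module.length A (torModule A M K i) := by
        grw [ih]
        push_cast
        rw [add_one_mul, add_comm]

end TorModule

section LocalRing

variable (A : Type u) [CommRing A] [IsLocalRing A]

/-- The `i`-th Betti number of `M` as the extended length of `Tor_i(M, k)`; unlike `bettiNumber`,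
it takes the value `⊤` rather than `0` when `Tor_i(M, k)` is infinite. -/
noncomputable abbrev eBettiNumber (M : Type u) [AddCommGroup M] [Module A M] (i : ℕ) : ℕ∞ :=
  Module.length A (torModule A M (IsLocalRing.ResidueField A) i)

variable (M : Type u) [AddCommGroup M] [Module A M]

lemma eBettiNumber_zero [Module.Finite A M] :
    eBettiNumber A M 0 = (⊤ : Submodule A M).spanFinrank := by
  let k := IsLocalRing.ResidueField A
  calc Module.length A (torModule A M k 0)
    _ = Module.length A (k ⊗[A] M) :=
      (torModuleZeroEquiv k M ≪≫ₗ TensorProduct.comm A M k).length_eq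
    _ = Module.finrank k (k ⊗[A] M) := by
      rw [Module.length_eq_of_surjective (R := k) Ideal.Quotient.mk_surjective,
        Module.length_eq_finrank]
    _ = Module.finrank k (k ⊗[A] (⊤ : Submodule A M)) := by
      rw [(Submodule.topEquiv.baseChange A k (⊤ : Submodule A M) M).finrank_eq]
    _ = (⊤ : Submodule A M).spanFinrank := by
      rw [Module.finrank_eq_spanFinrank_of_free,
        TensorProduct.spanFinrank_top_eq_of_residueField _ Module.Finite.fg_top]

lemma exists_surjective_eBettiNumber_zero_eq [Module.Finite A M] :
    ∃ (b : ℕ) (p : (Fin b → A) →ₗ[A] M), Function.Surjective p ∧ eBettiNumber A M 0 = b := by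
  obtain ⟨s, hcard, hspan⟩ :=
    (Module.Finite.fg_top (R := A) (M := M)).exists_span_finset_card_eq_spanFinrank
  refine ⟨s.card, Fintype.linearCombination A (Subtype.val ∘ s.equivFin.symm), ?_, ?_⟩
  · rw [← LinearMap.range_eq_top, Fintype.range_linearCombination, ← hspan,
      s.equivFin.symm.surjective.range_comp Subtype.val, Subtype.range_coe]
  · rw [eBettiNumber_zero, hcard]

lemma eBettiNumber_ne_top [IsNoetherianRing A] [Module.Finite A M] (i : ℕ) :
    eBettiNumber A M i ≠ ⊤ := by
  induction i generalizing M with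
  | zero => simp [eBettiNumber_zero]
  | succ i ih =>
    obtain ⟨b, p, hp⟩ := Module.Finite.exists_fin' A M
    refine ne_top_of_le_ne_top (ih (LinearMap.ker p)) ?_
    simpa [length_torModule_succ_of_flat] using length_torModule_right_le
      (IsLocalRing.ResidueField A) (Submodule.subtype_injective _) hp p.exact_subtype_ker_map i

end LocalRing

section ChangeOfRings

variable {Q R : Type u} [CommRing Q] [IsLocalRing Q] [CommRing R] [Algebra Q R]
  {M : Type u} [AddCommGroup M] [Module Q M] [Module R M] [IsScalarTower Q R M]

lemma eBettiNumber_ker_le {b : ℕ} {p : (Fin b → R) →ₗ[R] M} (hp : Function.Surjective p) (i : ℕ) :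
    eBettiNumber Q (LinearMap.ker p) i ≤
      eBettiNumber Q M (i + 1) + b * eBettiNumber Q R i := by
  calc eBettiNumber Q (LinearMap.ker p) i
    _ ≤ eBettiNumber Q M (i + 1) + eBettiNumber Q (Fin b → R) i :=
      length_torModule_left_le _ (g := (LinearMap.ker p).subtype.restrictScalars Q)
        (h := p.restrictScalars Q) (Submodule.subtype_injective _) hp p.exact_subtype_ker_map i
    _ ≤ eBettiNumber Q M (i + 1) + b * eBettiNumber Q R i := by
      gcongr
      exact length_torModule_fin_le _ b i

section Surjective

variable (hQR : Function.Surjective (algebraMap Q R))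
include hQR

lemma eBettiNumber_zero_self_le : eBettiNumber Q R 0 ≤ 1 := by
  have : Module.Finite Q R := .of_surjective (Algebra.linearMap Q R) hQR
  have hspan : (⊤ : Submodule Q R) = Submodule.span Q {1} := by
    rw [← Submodule.one_eq_span, Submodule.one_eq_range, eq_comm, LinearMap.range_eq_top]
    exact hQR
  rw [eBettiNumber_zero, hspan]
  exact_mod_cast (Submodule.spanFinrank_span_le_ncard_of_finite (Set.finite_singleton 1)).trans
    (Set.ncard_singleton _).le

variable [IsLocalRing R] [Module.Finite R M]

lemma eBettiNumber_zero_le : eBettiNumber R M 0 ≤ eBettiNumber Q M 0 := by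
  have : RingHomSurjective (algebraMap Q R) := ⟨hQR⟩
  have : Module.Finite Q R := .of_surjective (Algebra.linearMap Q R) hQR
  have : Module.Finite Q M := .trans R M
  let ι : M →ₛₗ[algebraMap Q R] M :=
    { AddMonoidHom.id M with map_smul' q m := (algebraMap_smul R q m).symm }
  have hι : (⊤ : Submodule Q M).map ι = ⊤ :=
    Submodule.map_top ι ▸ LinearMap.range_eq_top.mpr Function.surjective_id
  rw [eBettiNumber_zero, eBettiNumber_zero, ← hι]
  exact_mod_cast Submodule.spanFinrank_map_le_of_fg ι Module.Finite.fg_top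

lemma eBettiNumber_ker_zero_le {b : ℕ} {p : (Fin b → R) →ₗ[R] M} (hp : Function.Surjective p)
    (hb : eBettiNumber R M 0 = b) :
    eBettiNumber Q (LinearMap.ker p) 0 ≤ eBettiNumber Q M 1 := by
  have : Module.Finite Q R := .of_surjective (Algebra.linearMap Q R) hQR
  have : Module.Finite Q M := .trans R M
  have hM : eBettiNumber Q M 0 ≠ ⊤ := by simp [eBettiNumber_zero]
  refine (ENat.add_le_add_iff_right hM).mp ?_
  calc eBettiNumber Q (LinearMap.ker p) 0 + eBettiNumber Q M 0
    _ ≤ eBettiNumber Q M 1 + eBettiNumber Q (Fin b → R) 0 :=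
      length_torModule_zero_add_le _ (g := (LinearMap.ker p).subtype.restrictScalars Q)
        (h := p.restrictScalars Q) (Submodule.subtype_injective _) hp p.exact_subtype_ker_map
    _ ≤ eBettiNumber Q M 1 + b * eBettiNumber Q R 0 := by
      gcongr
      exact length_torModule_fin_le _ b 0
    _ ≤ eBettiNumber Q M 1 + eBettiNumber Q M 0 := by
      grw [eBettiNumber_zero_self_le hQR, mul_one, ← hb, eBettiNumber_zero_le hQR]

end Surjective

lemma eBettiNumber_succ_self_le (hQR : Function.Surjective (algebraMap Q R)) {f : Q}
    (hf : IsSMulRegular Q f) (hker : RingHom.ker (algebraMap Q R) = Ideal.span {f}) (i : ℕ) :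
    eBettiNumber Q R (i + 1) ≤ eBettiNumber Q Q i := by
  have hexact : Function.Exact (LinearMap.lsmul Q Q f) (Algebra.linearMap Q R) := fun x ↦ by
    rw [Algebra.linearMap_apply, ← RingHom.mem_ker, hker, Ideal.mem_span_singleton']
    simp [mul_comm]
  simpa [length_torModule_succ_of_flat] using length_torModule_right_le
    (IsLocalRing.ResidueField Q) (g := LinearMap.lsmul Q Q f) hf hQR hexact i

lemma eBettiNumber_ker [IsLocalRing R] [Module.Finite R M] {b : ℕ} {p : (Fin b → R) →ₗ[R] M}
    (hp : Function.Surjective p) (hb : eBettiNumber R M 0 = b) (i : ℕ) :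
    eBettiNumber R (LinearMap.ker p) i = eBettiNumber R M (i + 1) := by
  apply le_antisymm
  · cases i with
    | zero => exact eBettiNumber_ker_zero_le Function.surjective_id hp hb
    | succ i => simpa [length_torModule_succ_of_flat] using eBettiNumber_ker_le (Q := R) hp (i + 1)
  · simpa [length_torModule_succ_of_flat] using length_torModule_right_le
      (IsLocalRing.ResidueField R) (Submodule.subtype_injective _) hp p.exact_subtype_ker_map i

/-- In terms of Poincaré series, this is Serre's bound `P_M^R ≼ P_M^Q + t (P_R^Q - 1) P_M^R`. -/
lemma eBettiNumber_succ_le [IsLocalRing R] [IsNoetherianRing R] [Module.Finite R M]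
    (hQR : Function.Surjective (algebraMap Q R)) (i : ℕ) :
    eBettiNumber R M (i + 1) ≤ eBettiNumber Q M (i + 1) +
      ∑ j ∈ Finset.range i, eBettiNumber Q R (i - j) * eBettiNumber R M j := by
  induction i generalizing M with
  | zero =>
    obtain ⟨b, p, hp, hb⟩ := exists_surjective_eBettiNumber_zero_eq R M
    calc eBettiNumber R M 1
      _ = eBettiNumber R (LinearMap.ker p) 0 := (eBettiNumber_ker hp hb 0).symm
      _ ≤ eBettiNumber Q (LinearMap.ker p) 0 := eBettiNumber_zero_le hQR
      _ ≤ eBettiNumber Q M 1 := eBettiNumber_ker_zero_le hQR hp hb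
      _ = _ := by simp
  | succ i ih =>
    obtain ⟨b, p, hp, hb⟩ := exists_surjective_eBettiNumber_zero_eq R M
    calc eBettiNumber R M (i + 2)
      _ = eBettiNumber R (LinearMap.ker p) (i + 1) := (eBettiNumber_ker hp hb (i + 1)).symm
      _ ≤ eBettiNumber Q (LinearMap.ker p) (i + 1) +
          ∑ j ∈ Finset.range i, eBettiNumber Q R (i - j) * eBettiNumber R (LinearMap.ker p) j := ih
      _ ≤ eBettiNumber Q M (i + 2) + eBettiNumber R M 0 * eBettiNumber Q R (i + 1) +
          ∑ j ∈ Finset.range i, eBettiNumber Q R (i - j) * eBettiNumber R M (j + 1) := by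
        rw [hb]
        simp only [eBettiNumber_ker hp hb]
        grw [eBettiNumber_ker_le hp (i + 1)]
      _ = _ := by
        rw [Finset.sum_range_succ']
        simp only [Nat.add_sub_add_right, Nat.sub_zero]
        ring

section Noetherian

variable [IsLocalRing R] [IsNoetherianRing R] [Module.Finite R M]
  (hQR : Function.Surjective (algebraMap Q R))
include hQR

lemma eBettiNumber_le_of_lt_two {i : ℕ} (hi : i < 2) : eBettiNumber R M i ≤ eBettiNumber Q M i := by
  interval_cases i
  · exact eBettiNumber_zero_le hQR
  · simpa using eBettiNumber_succ_le hQR 0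

lemma eBettiNumber_le_of_flat [Module.Flat Q R] (i : ℕ) :
    eBettiNumber R M i ≤ eBettiNumber Q M i := by
  cases i with
  | zero => exact eBettiNumber_zero_le hQR
  | succ i =>
    have hvanish : ∀ j ∈ Finset.range i, eBettiNumber Q R (i - j) * eBettiNumber R M j = 0 := by
      intro j hj
      obtain ⟨k, hk⟩ : ∃ k, i - j = k + 1 := ⟨i - j - 1, by grind⟩
      simp [hk, length_torModule_succ_of_flat]
    simpa [Finset.sum_eq_zero hvanish] using eBettiNumber_succ_le (M := M) hQR i

lemma eBettiNumber_add_two_le {f : Q} (hf : IsSMulRegular Q f)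
    (hker : RingHom.ker (algebraMap Q R) = Ideal.span {f}) (i : ℕ) :
    eBettiNumber R M (i + 2) ≤ eBettiNumber Q M (i + 2) + eBettiNumber R M i := by
  have hvanish : ∀ j ∈ Finset.range i, eBettiNumber Q R (i + 1 - j) * eBettiNumber R M j = 0 := by
    intro j hj
    obtain ⟨k, hk⟩ : ∃ k, i + 1 - j = k + 2 := ⟨i - j - 1, by grind⟩
    have := eBettiNumber_succ_self_le hQR hf hker (k + 1)
    simp_all [length_torModule_succ_of_flat]
  have hone : eBettiNumber Q R 1 ≤ 1 :=
    (eBettiNumber_succ_self_le hQR hf hker 0).trans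
      (eBettiNumber_zero_self_le Function.surjective_id)
  calc eBettiNumber R M (i + 2)
    _ ≤ eBettiNumber Q M (i + 2) + eBettiNumber Q R 1 * eBettiNumber R M i := by
      simpa [Finset.sum_range_succ, Finset.sum_eq_zero hvanish] using
        eBettiNumber_succ_le (M := M) hQR (i + 1)
    _ ≤ eBettiNumber Q M (i + 2) + eBettiNumber R M i := by grw [hone, one_mul]

end Noetherian

end ChangeOfRings

section ShamashSum

variable {α : Type*} [Semiring α]

/-- The coefficient of `t^i` in `(∑ β_j t^j) / (1 - t²)^n`. -/
def shamashSum (β : ℕ → α) (n i : ℕ) : α :=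
  ∑ j ∈ Finset.range (i / 2 + 1), Nat.choose (n + j - 1) j * β (i - 2 * j)

lemma shamashSum_zero (β : ℕ → α) (i : ℕ) : shamashSum β 0 i = β i := by
  rw [shamashSum, Finset.sum_range_succ', Finset.sum_eq_zero]
  · simp
  · intro j _
    rw [Nat.choose_eq_zero_of_lt (by lia), Nat.cast_zero, zero_mul]

lemma shamashSum_of_lt_two (β : ℕ → α) (n : ℕ) {i : ℕ} (hi : i < 2) : shamashSum β n i = β i := by
  simp [shamashSum, Nat.div_eq_of_lt hi]

lemma shamashSum_succ_add_two (β : ℕ → α) (n i : ℕ) :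
    shamashSum β (n + 1) (i + 2) = shamashSum β n (i + 2) + shamashSum β (n + 1) i := by
  have hpascal (j : ℕ) : Nat.choose (n + 1 + (j + 1) - 1) (j + 1) =
      Nat.choose (n + (j + 1) - 1) (j + 1) + Nat.choose (n + 1 + j - 1) j := by
    simp only [Nat.add_right_comm n 1, ← add_assoc, Nat.add_sub_cancel]
    exact (Nat.choose_succ_succ' (n + j) j).trans (add_comm ..)
  have hindex (j : ℕ) : i + 2 - 2 * (j + 1) = i - 2 * j := by lia
  simp only [shamashSum, Nat.add_div_right i two_pos, Finset.sum_range_succ' _ (i / 2 + 1),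
    Nat.choose_zero_right, hpascal, hindex, Nat.cast_add, add_mul, Finset.sum_add_distrib]
  exact add_right_comm ..

lemma le_shamashSum_succ [PartialOrder α] [IsOrderedAddMonoid α] {β γ : ℕ → α} {n : ℕ}
    (hlt : ∀ i < 2, γ i ≤ β i)
    (hadd : ∀ i, γ (i + 2) ≤ shamashSum β n (i + 2) + γ i) (i : ℕ) :
    γ i ≤ shamashSum β (n + 1) i := by
  induction i using Nat.twoStepInduction with
  | zero => exact (hlt 0 two_pos).trans_eq (shamashSum_of_lt_two β _ two_pos).symm
  | one => exact (hlt 1 one_lt_two).trans_eq (shamashSum_of_lt_two β _ one_lt_two).symm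
  | more i ih _ =>
    rw [shamashSum_succ_add_two]
    grw [hadd, ih]

end ShamashSum

section RegularSequence

lemma isSMulRegular_quotient_of_isWeaklyRegular_append {Q : Type*} [CommRing Q] {rs : List Q}
    {r : Q} (h : RingTheory.Sequence.IsWeaklyRegular Q (rs ++ [r])) :
    IsSMulRegular (Q ⧸ Ideal.ofList rs) (Ideal.Quotient.mk (Ideal.ofList rs) r) := by
  have hr := (RingTheory.Sequence.isWeaklyRegular_append_iff ..).mp h |>.2
  rw [RingTheory.Sequence.isWeaklyRegular_singleton_iff] at hr
  have e := Submodule.quotEquivOfEq (Ideal.ofList rs • (⊤ : Ideal Q)) (Ideal.ofList rs)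
    (Ideal.mul_top _)
  exact (isSMulRegular_algebraMap_iff _).mpr ((e.isSMulRegular_congr r).mp hr)

lemma ker_algebraMap_quotient_eq_span_singleton {Q R : Type*} [CommRing Q] [CommRing R]
    [Algebra Q R] {rs : List Q} {r : Q} [Algebra (Q ⧸ Ideal.ofList rs) R]
    [IsScalarTower Q (Q ⧸ Ideal.ofList rs) R]
    (hker : RingHom.ker (algebraMap Q R) = Ideal.ofList (rs ++ [r])) :
    RingHom.ker (algebraMap (Q ⧸ Ideal.ofList rs) R) =
      Ideal.span {Ideal.Quotient.mk (Ideal.ofList rs) r} := by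
  rw [← Ideal.map_comap_of_surjective _ Ideal.Quotient.mk_surjective (RingHom.ker _),
    RingHom.comap_ker, ← Ideal.Quotient.algebraMap_eq, ← IsScalarTower.algebraMap_eq, hker,
    Ideal.ofList_append, Ideal.map_sup, Ideal.Quotient.algebraMap_eq, Ideal.map_quotient_self,
    bot_sup_eq, Ideal.ofList_singleton, Ideal.map_span, Set.image_singleton]

variable {Q : Type u} [CommRing Q] [IsLocalRing Q] [IsNoetherianRing Q]

theorem eBettiNumber_le_shamashSum {R : Type u} [CommRing R] [IsLocalRing R] [Algebra Q R]
    (hQR : Function.Surjective (algebraMap Q R)) {rs : List Q}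
    (hrs : RingTheory.Sequence.IsWeaklyRegular Q rs)
    (hker : RingHom.ker (algebraMap Q R) = Ideal.ofList rs)
    (M : Type u) [AddCommGroup M] [Module Q M] [Module R M] [IsScalarTower Q R M]
    [Module.Finite R M] (i : ℕ) :
    eBettiNumber R M i ≤ shamashSum (eBettiNumber Q M) rs.length i := by
  induction rs using List.reverseRecOn generalizing R i with
  | nil =>
    have : IsNoetherianRing R := isNoetherianRing_of_surjective Q R _ hQR
    rw [Ideal.ofList_nil, ← RingHom.injective_iff_ker_eq_bot] at hker
    have : Module.Flat Q R :=
      .of_linearEquiv (LinearEquiv.ofBijective (Algebra.linearMap Q R) ⟨hker, hQR⟩).symm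
    simpa [shamashSum_zero] using eBettiNumber_le_of_flat hQR i
  | append_singleton rs r ih =>
    have : IsNoetherianRing R := isNoetherianRing_of_surjective Q R _ hQR
    let S := Q ⧸ Ideal.ofList rs
    have hle : Ideal.ofList rs ≤ RingHom.ker (algebraMap Q R) := by
      rw [hker, Ideal.ofList_append]
      exact le_sup_left
    let _ : Algebra S R := (Ideal.Quotient.lift _ (algebraMap Q R) hle).toAlgebra
    have : IsScalarTower Q S R := .of_algebraMap_eq fun _ ↦ rfl
    let _ : Module S M := Module.compHom M (algebraMap S R)
    have : IsScalarTower S R M := .of_compHom ..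
    have : IsScalarTower Q S M := .to₁₂₄ Q S R M
    have hSR : Function.Surjective (algebraMap S R) := .of_comp (g := algebraMap Q S) hQR
    have : Module.Finite S R := .of_surjective (Algebra.linearMap S R) hSR
    have : Module.Finite S M := .trans R M
    have : Nontrivial S := hSR.nontrivial
    have : IsLocalRing S := .of_surjective' (algebraMap Q S) Ideal.Quotient.mk_surjective
    have hreg : IsSMulRegular S (Ideal.Quotient.mk (Ideal.ofList rs) r) :=
      isSMulRegular_quotient_of_isWeaklyRegular_append hrs
    have hS (i : ℕ) : eBettiNumber S M i ≤ shamashSum (eBettiNumber Q M) rs.length i :=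
      ih Ideal.Quotient.mk_surjective
        ((RingTheory.Sequence.isWeaklyRegular_append_iff ..).mp hrs).1 Ideal.mk_ker i
    rw [List.length_append, List.length_singleton]
    refine le_shamashSum_succ (fun i hi ↦ eBettiNumber_le_of_lt_two hQR hi) (fun i ↦ ?_) i
    grw [← hS]
    exact eBettiNumber_add_two_le hSR hreg (ker_algebraMap_quotient_eq_span_singleton hker) i

end RegularSequence

section BettiNumber

lemma length_residueField_tensorProduct {A T : Type*} [CommRing A] [IsLocalRing A]
    [AddCommGroup T] [Module A T]
    (hT : ∀ a ∈ IsLocalRing.maximalIdeal A, Module.IsTorsionBy A T a) :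
    Module.length (IsLocalRing.ResidueField A) (IsLocalRing.ResidueField A ⊗[A] T) =
      Module.length A T := by
  have hbot : IsLocalRing.maximalIdeal A • (⊤ : Submodule A T) = ⊥ :=
    eq_bot_iff.mpr <| Submodule.smul_le.mpr fun a ha x _ ↦
      (Submodule.mem_bot A).mpr (hT a ha (x := x))
  have e : IsLocalRing.ResidueField A ⊗[A] T ≃ₗ[A] T :=
    TensorProduct.quotTensorEquivQuotSMul T (IsLocalRing.maximalIdeal A) ≪≫ₗ
      Submodule.quotEquivOfEqBot _ hbot
  have hA : Function.Surjective (algebraMap A (IsLocalRing.ResidueField A)) :=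
    Ideal.Quotient.mk_surjective
  rw [← Module.length_eq_of_surjective hA, e.length_eq]

lemma natCast_bettiNumber (A : Type) [CommRing A] [IsLocalRing A] [IsNoetherianRing A] (M : Type)
    [AddCommGroup M] [Module A M] [Module.Finite A M] (i : ℕ) :
    (bettiNumber A M i : ℕ∞) = eBettiNumber A M i := by
  let k := IsLocalRing.ResidueField A
  have hlength : Module.length k (k ⊗[A] torModule A M k i) = eBettiNumber A M i :=
    length_residueField_tensorProduct fun a ha ↦ isTorsionBy_torModule k (fun x ↦ by
      rw [Algebra.smul_def, IsLocalRing.ResidueField.algebraMap_eq,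
        (IsLocalRing.residue_eq_zero_iff a).mpr ha, zero_mul]) i
  have : Module.Finite k (k ⊗[A] torModule A M k i) := by
    have : IsFiniteLength k (k ⊗[A] torModule A M k i) :=
      Module.length_ne_top_iff.mp (hlength ▸ eBettiNumber_ne_top A M i)
    have := (isFiniteLength_iff_isNoetherian_isArtinian.mp this).1
    infer_instance
  exact (Module.length_eq_finrank k _).symm.trans hlength

end BettiNumber

/-- **Shamash's inequality.** If `f₁, …, fₙ` is a `Q`-regular sequence contained in
the maximal ideal of a Noetherian local ring `Q`, `I = (f₁, …, fₙ)`, `R = Q/I`, then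
for every finitely generated `R`-module `M` and all `i ≥ 0`,
`β_i^R(M) ≤ ∑_{2j ≤ i} C(n−1+j, n−1) · β_{i−2j}^Q(M)`, i.e.
`P_M^R(t) ≼ P_M^Q(t)·(1−t²)^{−n}` coefficient-wise. -/
theorem betti_quotient_le_of_regular_sequence
    (Q : Type) [CommRing Q] [IsNoetherianRing Q] [IsLocalRing Q]
    (n : ℕ) (f : Fin n → Q)
    (hreg : RingTheory.Sequence.IsRegular Q (List.ofFn f))
    (hfm : ∀ j, f j ∈ IsLocalRing.maximalIdeal Q)
    (I : Ideal Q) (hI : I = Ideal.span (Set.range f))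
    [IsLocalRing (Q ⧸ I)]
    (M : Type) [AddCommGroup M] [Module Q M] [Module (Q ⧸ I) M]
    [IsScalarTower Q (Q ⧸ I) M] [Module.Finite (Q ⧸ I) M]
    (i : ℕ) :
    bettiNumber (Q ⧸ I) M i ≤
      ∑ j ∈ Finset.range (i / 2 + 1),
        Nat.choose (n + j - 1) j * bettiNumber Q M (i - 2 * j) := by
  subst hI
  have : Module.Finite Q M := .trans (Q ⧸ Ideal.span (Set.range f)) M
  have hker : RingHom.ker (algebraMap Q (Q ⧸ Ideal.span (Set.range f))) =
      Ideal.ofList (List.ofFn f) :=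
    Ideal.mk_ker.trans <| congrArg Ideal.span <| Set.ext fun x ↦ by simp [List.mem_ofFn]
  have := eBettiNumber_le_shamashSum Ideal.Quotient.mk_surjective hreg.toIsWeaklyRegular hker M i
  simp only [shamashSum, List.length_ofFn, ← natCast_bettiNumber] at this
  exact_mod_cast this
end

section
/- Let (Q, m, k) be a commutative Noetherian local ring, let f_1, …, f_n be a Q-regular sequence contained in m, set I = (f_1, …, f_n) and R = Q/I. If M is a finitely generated R-module with I ⊆ m·ann_Q(M), then for every integer i ≥ 0 one has the equality β_i^R(M) = Σ_{j ≥ 0, 2j ≤ i} C(n−1+j, n−1) · β_{i−2j}^Q(M), where C(a,b) denotes the binomial coefficient. (Equivalently, P_M^R(t) = P_M^Q(t)·(1−t²)^{−n}.) -/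
open CategoryTheory TensorProduct

/-!
Let `F` be a free resolution of `k` over `Q` and `f ∈ m · ann M` a nonzerodivisor. Writing `f` as a
combination of products of elements of `m` and `ann M`, one finds higher homotopies `s₀ = d, s₁, …`
on `F`, a square root of `f` in the form of the power series `s = ∑ sₚ Xᵖ` with `s² = f X`, such
that every `sₚ` with `p > 0` has coefficients in `ann M`. Reducing modulo `f`, they make
`⨁ₖ R yₖ ⊗ F`, with `yₖ` of degree `2k`, into a resolution of `k` over `R = Q/(f)` (Shamash).
After tensoring with `M` only `s₀ = d` survives, so the complex splits as a direct sum of shifted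
copies of `F ⊗ M`. Hence `β_{i+2}^R(M) = β_{i+2}^Q(M) + β_i^R(M)`, and the theorem follows by
dividing out one element of the regular sequence at a time.
-/

namespace Shamash

section Recursion

lemma sum_multichoose_eq_of_recursion {S : Type*} [CommSemiring S] {g h : ℕ → S}
    (h_zero : h 0 = g 0) (h_one : h 1 = g 1) (h_add_two : ∀ i, h (i + 2) = g (i + 2) + h i)
    (n i : ℕ) :
    ∑ j ∈ Finset.range (i / 2 + 1), (n.multichoose j : S) * h (i - 2 * j) =
      ∑ j ∈ Finset.range (i / 2 + 1), ((n + 1).multichoose j : S) * g (i - 2 * j) := by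
  induction i using Nat.twoStepInduction with
  | zero => simp [h_zero]
  | one => simp [h_one]
  | more i ih _ =>
    have lhs_add_two : ∑ j ∈ Finset.range (i / 2 + 2), (n.multichoose j : S) * h (i + 2 - 2 * j) =
        ∑ j ∈ Finset.range (i / 2 + 2), (n.multichoose j : S) * g (i + 2 - 2 * j) +
          ∑ j ∈ Finset.range (i / 2 + 1), (n.multichoose j : S) * h (i - 2 * j) := by
      have last : h (i + 2 - 2 * (i / 2 + 1)) = g (i + 2 - 2 * (i / 2 + 1)) := by
        rw [show i + 2 - 2 * (i / 2 + 1) = i % 2 by omega]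
        rcases Nat.mod_two_eq_zero_or_one i with hi | hi <;> simp only [hi, h_zero, h_one]
      rw [Finset.sum_range_succ, Finset.sum_range_succ _ (i / 2 + 1), last, add_right_comm,
        ← Finset.sum_add_distrib]
      congr 1
      refine Finset.sum_congr rfl fun j hj => ?_
      rw [show i + 2 - 2 * j = i - 2 * j + 2 by grind, h_add_two, mul_add]
    have rhs_add_two :
        ∑ j ∈ Finset.range (i / 2 + 2), ((n + 1).multichoose j : S) * g (i + 2 - 2 * j) =
        ∑ j ∈ Finset.range (i / 2 + 2), (n.multichoose j : S) * g (i + 2 - 2 * j) +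
          ∑ j ∈ Finset.range (i / 2 + 1), ((n + 1).multichoose j : S) * g (i - 2 * j) := by
      have sub_eq (j : ℕ) : i + 2 - 2 * (j + 1) = i - 2 * j := by omega
      simp only [Finset.sum_range_succ' _ (i / 2 + 1), sub_eq, Nat.multichoose_succ_succ,
        Nat.cast_add, add_mul, Finset.sum_add_distrib, Nat.multichoose_zero_right]
      exact add_right_comm _ _ _
    rw [Nat.add_div_right i two_pos, lhs_add_two, rhs_add_two, ih]

lemma exists_of_degreewise_choice {ι V : Type*} [Nonempty V] (deg : ι → ℕ)
    (P : ι → (ι → V) → V → Prop)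
    (P_congr : ∀ i g g' v, (∀ j, deg j < deg i → g j = g' j) → P i g v → P i g' v)
    (P_exists : ∀ i g, (∀ j, deg j < deg i → P j g (g j)) → ∃ v, P i g v) :
    ∃ g : ι → V, ∀ i, P i g (g i) := by
  classical
  let G : ι → V := (measure deg).wf.fix fun i rec =>
    Classical.epsilon (P i fun j => if hj : deg j < deg i then rec j hj else Classical.arbitrary V)
  have G_eq (i : ι) : G i =
      Classical.epsilon (P i fun j => if deg j < deg i then G j else Classical.arbitrary V) :=
    (measure deg).wf.fix_eq _ i
  refine ⟨G, fun i => ?_⟩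
  induction i using (measure deg).wf.induction with
  | _ i ih =>
    obtain ⟨v, hv⟩ := P_exists i G ih
    have hv' : P i (fun j => if deg j < deg i then G j else Classical.arbitrary V) v :=
      P_congr i _ _ v (fun j hj => (if_pos hj).symm) hv
    rw [G_eq]
    exact P_congr i _ _ _ (fun j hj => if_pos hj) (Classical.epsilon_spec ⟨v, hv'⟩)

end Recursion

section GradedModules

variable {A B V W : Type*} [CommRing A] [AddCommGroup V] [Module A V] [AddCommGroup W] [Module A W]

/-- The endomorphisms of `V` that are homogeneous of degree `q` for the grading `𝒢`. -/
def gradedEnd (𝒢 : ℤ → Submodule A V) (q : ℤ) : Submodule A (Module.End A V) :=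
  ⨅ z, Submodule.compatibleMaps (𝒢 z) (𝒢 (z + q))

lemma mem_gradedEnd {𝒢 : ℤ → Submodule A V} {q : ℤ} {e : Module.End A V} :
    e ∈ gradedEnd 𝒢 q ↔ ∀ z, ∀ v ∈ 𝒢 z, e v ∈ 𝒢 (z + q) := by
  simp only [gradedEnd, Submodule.mem_iInf]
  rfl

lemma apply_mem_of_mem_gradedEnd {𝒢 : ℤ → Submodule A V} {q z w : ℤ} {e : Module.End A V}
    (he : e ∈ gradedEnd 𝒢 q) {v : V} (hv : v ∈ 𝒢 z) (hw : w = z + q := by ring) : e v ∈ 𝒢 w :=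
  hw ▸ mem_gradedEnd.1 he z v hv

instance (𝒢 : ℤ → Submodule A V) : SetLike.GradedMonoid (gradedEnd 𝒢) where
  one_mem := mem_gradedEnd.2 fun z v hv => by rwa [add_zero]
  mul_mem p q e e' he he' := mem_gradedEnd.2 fun z v hv =>
    apply_mem_of_mem_gradedEnd (w := z + (p + q)) he (apply_mem_of_mem_gradedEnd he' hv rfl)

/-- The homology in degree `z` of the differential `d` of degree `-1` on the graded module `V`. -/
abbrev homology (𝒢 : ℤ → Submodule A V) (d : Module.End A V) (z : ℤ) : Type _ :=
  ↥(LinearMap.ker d ⊓ 𝒢 z) ⧸ ((𝒢 (z + 1)).map d).submoduleOf (LinearMap.ker d ⊓ 𝒢 z)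

variable {𝒢 : ℤ → Submodule A V} {d : Module.End A V}

lemma homology_mk_eq_zero {z : ℤ} (v : ↥(LinearMap.ker d ⊓ 𝒢 z)) :
    (Submodule.Quotient.mk v : homology 𝒢 d z) = 0 ↔ ∃ w ∈ 𝒢 (z + 1), d w = v :=
  Submodule.Quotient.mk_eq_zero _

lemma length_homology_eq_of_surjective {P : Type*} [AddCommGroup P] [Module A P] {z : ℤ}
    (φ : ↥(LinearMap.ker d ⊓ 𝒢 z) →ₗ[A] P) (hφ : Function.Surjective φ)
    (ker_φ : ∀ v, φ v = 0 ↔ ∃ w ∈ 𝒢 (z + 1), d w = v) :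
    Module.length A (homology 𝒢 d z) = Module.length A P := by
  have : ((𝒢 (z + 1)).map d).submoduleOf (LinearMap.ker d ⊓ 𝒢 z) = LinearMap.ker φ :=
    Submodule.ext fun v => (ker_φ v).symm
  exact ((Submodule.quotEquivOfEq _ _ this).trans (φ.quotKerEquivOfSurjective hφ)).length_eq

lemma length_homology_eq_zero {z : ℤ} (h : 𝒢 z = ⊥) :
    Module.length A (homology 𝒢 d z) = 0 := by
  have : Subsingleton ↥(LinearMap.ker d ⊓ 𝒢 z) := by
    rw [h, inf_bot_eq]
    infer_instance
  exact Module.length_eq_zero_iff.2 inferInstance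

lemma length_homology_prod {𝓗 : ℤ → Submodule A W} {e : Module.End A W} (z : ℤ) :
    Module.length A (homology (fun z => (𝒢 z).prod (𝓗 z)) (d.prodMap e) z) =
      Module.length A (homology 𝒢 d z) + Module.length A (homology 𝓗 e z) := by
  rw [← Module.length_prod]
  have cycle {v : V × W} (hv : v ∈ LinearMap.ker (d.prodMap e) ⊓ (𝒢 z).prod (𝓗 z)) :
      v.1 ∈ LinearMap.ker d ⊓ 𝒢 z ∧ v.2 ∈ LinearMap.ker e ⊓ 𝓗 z :=
    ⟨⟨congrArg Prod.fst hv.1, hv.2.1⟩, ⟨congrArg Prod.snd hv.1, hv.2.2⟩⟩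
  refine length_homology_eq_of_surjective
    ((Submodule.mkQ _ ∘ₗ (LinearMap.fst A V W).restrict fun v hv => (cycle hv).1).prod
      (Submodule.mkQ _ ∘ₗ (LinearMap.snd A V W).restrict fun v hv => (cycle hv).2)) ?_ fun v => ?_
  · rintro ⟨x, y⟩
    obtain ⟨⟨v, hv⟩, rfl⟩ := Submodule.mkQ_surjective _ x
    obtain ⟨⟨w, hw⟩, rfl⟩ := Submodule.mkQ_surjective _ y
    exact ⟨⟨(v, w), Prod.ext hv.1 hw.1, hv.2, hw.2⟩, rfl⟩
  · refine Prod.ext_iff.trans ((and_congr (homology_mk_eq_zero _) (homology_mk_eq_zero _)).trans ?_)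
    constructor
    · rintro ⟨⟨x, hx, hdx⟩, y, hy, hey⟩
      exact ⟨(x, y), ⟨hx, hy⟩, Prod.ext hdx hey⟩
    · rintro ⟨w, hw, hdw⟩
      exact ⟨⟨w.1, hw.1, congrArg Prod.fst hdw⟩, w.2, hw.2, congrArg Prod.snd hdw⟩

variable [CommRing B] [Algebra A B] [Module B W] [IsScalarTower A B W]

lemma length_homology_congr (hAB : Function.Surjective (algebraMap A B))
    {𝓗 : ℤ → Submodule B W} {e : Module.End B W} (φ : V ≃ₗ[A] W)
    (hφ : ∀ z v, φ v ∈ 𝓗 z ↔ v ∈ 𝒢 z) (φ_d : ∀ v, φ (d v) = e (φ v)) (z : ℤ) :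
    Module.length A (homology 𝒢 d z) = Module.length B (homology 𝓗 e z) := by
  have cycle (v : V) : φ v ∈ LinearMap.ker e ⊓ 𝓗 z ↔ v ∈ LinearMap.ker d ⊓ 𝒢 z :=
    and_congr (by simp [← φ_d]) (hφ z v)
  let ψ : ↥(LinearMap.ker d ⊓ 𝒢 z) →ₗ[A] homology 𝓗 e z :=
    (Submodule.mkQ _).restrictScalars A ∘ₗ
      { toFun v := ⟨φ v, (cycle v).2 v.2⟩
        map_add' v w := Subtype.ext (map_add φ v.1 w.1)
        map_smul' a v := Subtype.ext (map_smul φ a v.1) }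
  rw [← Module.length_eq_of_surjective hAB]
  refine length_homology_eq_of_surjective ψ (fun x => ?_) fun v => ?_
  · obtain ⟨w, rfl⟩ := Submodule.mkQ_surjective _ x
    obtain ⟨v, hv⟩ := φ.surjective w
    exact ⟨⟨v, (cycle v).1 (hv ▸ w.2)⟩, congrArg Submodule.Quotient.mk (Subtype.ext hv)⟩
  · refine (homology_mk_eq_zero ⟨φ v, (cycle v).2 v.2⟩).trans ?_
    simp only [φ.surjective.exists, hφ, ← φ_d, φ.injective.eq_iff]

end GradedModules

section FinsuppGrading

variable {ι A N : Type*} [CommRing A] [AddCommGroup N] [Module A N]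

/-- The degree `z` part of `ι →₀ N`, where the basis element `i` has degree `deg i`. Degrees are
integers so that differentials may have degree `-1` everywhere. -/
def gr (deg : ι → ℕ) (A N : Type*) [CommRing A] [AddCommGroup N] [Module A N] (z : ℤ) :
    Submodule A (ι →₀ N) :=
  Finsupp.supported N A {i | (deg i : ℤ) = z}

variable {deg : ι → ℕ} {z : ℤ}

lemma mem_gr {v : ι →₀ N} : v ∈ gr deg A N z ↔ ∀ i, v i ≠ 0 → (deg i : ℤ) = z := by
  simp [gr, Finsupp.mem_supported, Set.subset_def]

lemma single_mem_gr {i : ι} (h : (deg i : ℤ) = z) (x : N) : Finsupp.single i x ∈ gr deg A N z :=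
  Finsupp.single_mem_supported A x h

lemma gr_eq_bot_of_neg (hz : z < 0) : gr deg A N z = ⊥ :=
  (Submodule.eq_bot_iff _).2 fun v hv => Finsupp.ext fun i => by
    by_contra hi
    have := mem_gr.1 hv i hi
    omega

lemma gr_le_iff {S : Submodule A (ι →₀ N)} :
    gr deg A N z ≤ S ↔ ∀ i, (deg i : ℤ) = z → ∀ x, Finsupp.single i x ∈ S := by
  refine ⟨fun h i hi x => h (single_mem_gr hi x), fun h v hv => ?_⟩
  rw [← Finsupp.sum_single v]
  exact Submodule.sum_mem _ fun i hi => h i (mem_gr.1 hv i (Finsupp.mem_support_iff.1 hi)) _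

lemma gr_le_iff_single_one {S : Submodule A (ι →₀ A)} :
    gr deg A A z ≤ S ↔ ∀ i, (deg i : ℤ) = z → Finsupp.single i 1 ∈ S :=
  gr_le_iff.trans <| forall₂_congr fun i _ => ⟨fun h => h 1, fun h x => by
    simpa using S.smul_mem x h⟩

lemma mem_gradedEnd_iff_single {e : Module.End A (ι →₀ N)} {q : ℤ} :
    e ∈ gradedEnd (gr deg A N) q ↔
      ∀ i x, e (Finsupp.single i x) ∈ gr deg A N (deg i + q) := by
  rw [mem_gradedEnd]
  refine ⟨fun h i x => h _ _ (single_mem_gr rfl x), fun h z => ?_⟩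
  exact gr_le_iff (S := (gr deg A N (z + q)).comap e) |>.2 fun i hi x => hi ▸ h i x

/-- The differential `d` makes the free module on `ι`, graded by `deg`, a resolution of `A ⧸ J`
with the single basis element `i₀` in degree zero. -/
structure IsResolution (deg : ι → ℕ) (d : Module.End A (ι →₀ A)) (i₀ : ι) (J : Ideal A) :
    Prop where
  deg_eq_zero_iff : ∀ i, deg i = 0 ↔ i = i₀
  differential_mem : d ∈ gradedEnd (gr deg A A) (-1)
  mul_self : d * d = 0
  exact : ∀ z ≥ 1, ∀ v ∈ gr deg A A z, d v = 0 → ∃ w ∈ gr deg A A (z + 1), d w = v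
  mem_iff : ∀ a, a ∈ J ↔ ∃ w ∈ gr deg A A 1, d w = Finsupp.single i₀ a

variable {d : Module.End A (ι →₀ A)} {i₀ : ι} {J : Ideal A}

namespace IsResolution

variable (H : IsResolution deg d i₀ J)
include H

lemma apply_apply (v : ι →₀ A) : d (d v) = 0 := LinearMap.congr_fun H.mul_self v

lemma apply_mem {v : ι →₀ A} (hv : v ∈ gr deg A A (z + 1)) : d v ∈ gr deg A A z :=
  apply_mem_of_mem_gradedEnd H.differential_mem hv

lemma apply_eq_zero_of_mem_gr_zero {v : ι →₀ A} (hv : v ∈ gr deg A A 0) : d v = 0 := by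
  have := apply_mem_of_mem_gradedEnd (w := -1) H.differential_mem hv
  rwa [gr_eq_bot_of_neg (by norm_num), Submodule.mem_bot] at this

lemma eq_single_of_mem_gr_zero {v : ι →₀ N} (hv : v ∈ gr deg A N 0) :
    v = Finsupp.single i₀ (v i₀) := by
  ext i
  by_cases hi : v i = 0
  · by_cases h : i = i₀ <;> simp_all
  · obtain rfl := (H.deg_eq_zero_iff i).1 (by exact_mod_cast mem_gr.1 hv i hi)
    simp

section Homotopy

variable {c : Module.End A (ι →₀ A)} {q : ℤ}

lemma exists_homotopy_column (hq : 0 ≤ q) (hc : c ∈ gradedEnd (gr deg A A) q)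
    (hcd : Commute d c) (hc₀ : ∀ v ∈ gr deg A A 0, ∃ w ∈ gr deg A A (q + 1), d w = c v)
    {h : Module.End A (ι →₀ A)} {i : ι}
    (hh : ∀ j, deg j < deg i → h (Finsupp.single j 1) ∈ gr deg A A (deg j + (q + 1)) ∧
      d (h (Finsupp.single j 1)) = c (Finsupp.single j 1) - h (d (Finsupp.single j 1))) :
    ∃ w ∈ gr deg A A (deg i + (q + 1)),
      d w = c (Finsupp.single i 1) - h (d (Finsupp.single i 1)) := by
  rcases Nat.eq_zero_or_pos (deg i) with hi | hi
  · have hi' : Finsupp.single i (1 : A) ∈ gr deg A A 0 := single_mem_gr (by simp [hi]) 1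
    simpa [H.apply_eq_zero_of_mem_gr_zero hi', hi] using hc₀ _ hi'
  have d_single : d (Finsupp.single i 1) ∈ gr deg A A (deg i - 1) :=
    H.apply_mem (single_mem_gr (by ring) 1)
  have h_mem : gr deg A A (deg i - 1) ≤ (gr deg A A (deg i + q)).comap h :=
    gr_le_iff_single_one.2 fun j hj => by
      rw [Submodule.mem_comap, show (deg i : ℤ) + q = deg j + (q + 1) by omega]
      exact (hh j (by omega)).1
  have h_comm : gr deg A A (deg i - 1) ≤ LinearMap.eqLocus (d * h + h * d) c :=
    gr_le_iff_single_one.2 fun j hj => by simp [(hh j (by omega)).2]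
  have hd : d (h (d (Finsupp.single i 1))) = c (d (Finsupp.single i 1)) := by
    simpa [H.apply_apply] using h_comm d_single
  rw [← add_assoc]
  refine H.exact (deg i + q) (by omega) _
    (sub_mem (apply_mem_of_mem_gradedEnd hc (single_mem_gr rfl 1)) (h_mem d_single)) ?_
  rw [map_sub, hd, sub_eq_zero]
  exact LinearMap.congr_fun hcd.eq _

lemma exists_homotopy (hq : 0 ≤ q) (hc : c ∈ gradedEnd (gr deg A A) q) (hcd : Commute d c)
    (hc₀ : ∀ v ∈ gr deg A A 0, ∃ w ∈ gr deg A A (q + 1), d w = c v) :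
    ∃ h ∈ gradedEnd (gr deg A A) (q + 1), d * h + h * d = c := by
  obtain ⟨g, hg⟩ := exists_of_degreewise_choice deg
    (fun i g v => v ∈ gr deg A A (deg i + (q + 1)) ∧
      d v = c (Finsupp.single i 1) - Finsupp.linearCombination A g (d (Finsupp.single i 1)))
    (fun i g g' v hgg' ⟨hv, hdv⟩ => ⟨hv, hdv.trans <| congrArg _ <| Finset.sum_congr rfl
      fun j hj => by
        have : (deg j : ℤ) = deg i - 1 := mem_gr.1 (H.apply_mem (single_mem_gr (by ring) 1)) j
          (Finsupp.mem_support_iff.1 hj)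
        simp only [hgg' j (by omega)]⟩)
    (fun i g hg => H.exists_homotopy_column hq hc hcd hc₀ (h := Finsupp.linearCombination A g)
      (by simpa using hg))
  refine ⟨Finsupp.linearCombination A g, mem_gradedEnd.2 fun z => ?_, ?_⟩
  · exact gr_le_iff_single_one (S := (gr deg A A (z + (q + 1))).comap _) |>.2 fun i hi => by
      simpa [← hi] using (hg i).1
  · refine Finsupp.lhom_ext' fun i => LinearMap.ext_ring ?_
    simp [(hg i).2]

lemma exists_homotopy_of_pos (hq : 0 < q)
    (hc : c ∈ gradedEnd (gr deg A A) q) (hcd : Commute d c) :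
    ∃ h ∈ gradedEnd (gr deg A A) (q + 1), d * h + h * d = c :=
  H.exists_homotopy hq.le hc hcd fun v hv =>
    H.exact q hq (c v) (apply_mem_of_mem_gradedEnd hc hv) <| by
      rw [← Module.End.mul_apply, hcd.eq, Module.End.mul_apply, H.apply_eq_zero_of_mem_gr_zero hv,
        map_zero]

end Homotopy

lemma exists_homotopy_smul_one {a : A} (ha : a ∈ J) :
    ∃ h ∈ gradedEnd (gr deg A A) 1, d * h + h * d = a • 1 := by
  obtain ⟨w, hw, hdw⟩ := (H.mem_iff a).1 ha
  have smul_mem : a • 1 ∈ gradedEnd (gr deg A A) 0 :=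
    Submodule.smul_mem _ a (SetLike.GradedOne.one_mem (A := gradedEnd (gr deg A A)))
  refine H.exists_homotopy (q := 0) le_rfl smul_mem ((Commute.one_right d).smul_right a)
    fun v hv => ⟨v i₀ • w, Submodule.smul_mem _ _ hw, ?_⟩
  conv_rhs => rw [H.eq_single_of_mem_gr_zero hv]
  simp [hdw, mul_comm]

end IsResolution

end FinsuppGrading

section SquareRoots

open PowerSeries

variable {E : Type*} [Ring E] {p : ℕ}

lemma coeff_mul_of_coeff_eq_zero {a b : E⟦X⟧} (hb : ∀ i < p, coeff i b = 0) :
    coeff p (a * b) = coeff 0 a * coeff p b := by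
  rw [coeff_mul, Finset.sum_eq_single (0, p) _ (by simp)]
  rintro ⟨i, j⟩ hij hne
  have : i + j = p := Finset.HasAntidiagonal.mem_antidiagonal.1 hij
  simp only [hb j (by grind), mul_zero]

lemma coeff_mul_of_coeff_eq_zero_left {a b : E⟦X⟧} (ha : ∀ i < p, coeff i a = 0) :
    coeff p (a * b) = coeff p a * coeff 0 b := by
  rw [coeff_mul, Finset.sum_eq_single (p, 0) _ (by simp)]
  rintro ⟨i, j⟩ hij hne
  have : i + j = p := Finset.HasAntidiagonal.mem_antidiagonal.1 hij
  simp only [ha i (by grind), zero_mul]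

lemma coeff_mul_self_eq_add_trunc (hp : p ≠ 0) (S : E⟦X⟧) :
    coeff p (S * S) = coeff 0 S * coeff p S + coeff p S * coeff 0 S +
      coeff p (trunc p S * trunc p S : E⟦X⟧) := by
  obtain ⟨T, hT⟩ : ∃ T : E⟦X⟧, S = trunc p S + T := ⟨S - trunc p S, by simp⟩
  have T_coeff_lt (i : ℕ) (hi : i < p) : coeff i T = 0 := by
    simpa [coeff_trunc, hi] using congrArg (coeff i) hT
  have T_coeff : coeff p T = coeff p S := by
    simpa [coeff_trunc] using (congrArg (coeff p) hT).symm
  have T_sq : coeff p (T * T) = 0 := by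
    rw [coeff_mul_of_coeff_eq_zero T_coeff_lt, T_coeff_lt 0 (Nat.pos_of_ne_zero hp), zero_mul]
  have S_zero : coeff 0 (trunc p S : E⟦X⟧) = coeff 0 S := by
    simp [coeff_trunc, Nat.pos_of_ne_zero hp]
  conv_lhs => rw [hT]
  simp only [add_mul, mul_add, map_add, T_sq, coeff_mul_of_coeff_eq_zero T_coeff_lt,
    coeff_mul_of_coeff_eq_zero_left T_coeff_lt, T_coeff, S_zero]
  abel

lemma commute_coeff_sub_mul_self {S L : E⟦X⟧} (hSL : Commute S L)
    (h : ∀ i < p, coeff i (S * S) = coeff i L) :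
    Commute (coeff 0 S) (coeff p (L - S * S)) := by
  have lower (i : ℕ) (hi : i < p) : coeff i (L - S * S) = 0 := by rw [map_sub, h i hi, sub_self]
  have comm : S * (L - S * S) = (L - S * S) * S := by
    rw [mul_sub, sub_mul, hSL.eq, mul_assoc]
  rw [Commute, SemiconjBy, ← coeff_mul_of_coeff_eq_zero lower, comm,
    coeff_mul_of_coeff_eq_zero_left lower]

variable {𝒜 ℬ : ℕ → AddSubgroup E} {d ℓ : E}

lemma exists_anticommutator_eq_coeff_sub_mul_self
    (mul_mem : ∀ {i j x y}, x ∈ 𝒜 i → y ∈ 𝒜 j → x * y ∈ ℬ (i + j)) (hℓ : ∀ x, Commute x ℓ)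
    (exists_one : ∃ h ∈ 𝒜 1, d * h + h * d = ℓ)
    (exists_of_commute : ∀ p ≥ 2, ∀ c ∈ ℬ p, Commute d c → ∃ h ∈ 𝒜 p, d * h + h * d = c)
    {T : E⟦X⟧} (T_zero : coeff 0 T = d) (T_mem : ∀ i, coeff i T ∈ 𝒜 i) (hp : 0 < p)
    (T_p : coeff p T = 0) (T_sq : ∀ i < p, coeff i (T * T) = coeff i (C ℓ * X)) :
    ∃ v ∈ 𝒜 p, d * v + v * d = coeff p (C ℓ * X - T * T) := by
  obtain rfl | hp2 : p = 1 ∨ 2 ≤ p := by omega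
  · have T_sq_one : coeff 1 (T * T) = 0 := by
      simp [coeff_mul, Finset.Nat.antidiagonal_succ, T_p]
    simpa [T_sq_one, coeff_C_mul] using exists_one
  · have CX_p : coeff p (C ℓ * X) = 0 := by
      rw [coeff_C_mul, coeff_X, if_neg (by omega), mul_zero]
    have mem_ℬ : coeff p (C ℓ * X - T * T) ∈ ℬ p := by
      rw [map_sub, CX_p, zero_sub, neg_mem_iff, coeff_mul]
      exact sum_mem fun ij hij =>
        Finset.HasAntidiagonal.mem_antidiagonal.1 hij ▸ mul_mem (T_mem ij.1) (T_mem ij.2)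
    have commute_Cℓ : Commute T (C ℓ) := PowerSeries.ext fun n => by
      simp only [coeff_mul_C, coeff_C_mul, (hℓ _).eq]
    exact exists_of_commute p hp2 _ mem_ℬ
      (T_zero ▸ commute_coeff_sub_mul_self (commute_Cℓ.mul_right (commute_X T)) T_sq)

lemma exists_mul_self_eq_C_mul_X
    (mul_mem : ∀ {i j x y}, x ∈ 𝒜 i → y ∈ 𝒜 j → x * y ∈ ℬ (i + j)) (hℓ : ∀ x, Commute x ℓ)
    (hd : d ∈ 𝒜 0) (d_sq : d * d = 0) (exists_one : ∃ h ∈ 𝒜 1, d * h + h * d = ℓ)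
    (exists_of_commute : ∀ p ≥ 2, ∀ c ∈ ℬ p, Commute d c → ∃ h ∈ 𝒜 p, d * h + h * d = c) :
    ∃ S : E⟦X⟧, coeff 0 S = d ∧ (∀ p, coeff p S ∈ 𝒜 p) ∧ S * S = C ℓ * X := by
  obtain ⟨s, hs⟩ := exists_of_degreewise_choice id
    (fun p s v => v ∈ 𝒜 p ∧ (p = 0 → v = d) ∧ ∀ S : E⟦X⟧, (∀ i < p, coeff i S = s i) →
      coeff p S = v → coeff p (S * S) = coeff p (C ℓ * X))
    (fun p s s' v hss' ⟨hv, hv₀, hvS⟩ => ⟨hv, hv₀, fun S hS => hvS S fun i hi =>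
      (hS i hi).trans (hss' i hi).symm⟩)
    (fun p s hs => by
      rcases Nat.eq_zero_or_pos p with rfl | hp
      · exact ⟨d, hd, fun _ => rfl, fun S _ hS => by simp [coeff_mul, hS, d_sq]⟩
      let T : E⟦X⟧ := trunc p (mk s)
      have T_coeff (i : ℕ) : coeff i T = if i < p then s i else 0 := by simp [T, coeff_trunc]
      have T_zero : coeff 0 T = d := by rw [T_coeff, if_pos hp, (hs 0 hp).2.1 rfl]
      have T_mem (i : ℕ) : coeff i T ∈ 𝒜 i := by
        rw [T_coeff]
        split_ifs with hi
        exacts [(hs i hi).1, zero_mem _]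
      obtain ⟨v, hv, hdv⟩ := exists_anticommutator_eq_coeff_sub_mul_self mul_mem hℓ exists_one
        exists_of_commute T_zero T_mem hp (by simp [T_coeff]) fun i hi =>
          (hs i hi).2.2 T (fun j hj => by simp [T_coeff, hj.trans hi]) (by simp [T_coeff, hi])
      refine ⟨v, hv, fun h => absurd h hp.ne', fun S hS hSv => ?_⟩
      have S_zero : coeff 0 S = d := by rw [hS 0 hp, (hs 0 hp).2.1 rfl]
      have trunc_S : trunc p S = trunc p (mk s) := Polynomial.ext fun i => by
        simp only [coeff_trunc, coeff_mk]
        split_ifs with hi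
        exacts [hS i hi, rfl]
      rw [coeff_mul_self_eq_add_trunc hp.ne', S_zero, hSv, hdv, trunc_S, map_sub, sub_add_cancel])
  refine ⟨mk s, ?_, fun p => ?_, PowerSeries.ext fun p => ?_⟩
  · simpa using (hs 0).2.1 rfl
  · simpa using (hs p).1
  · exact (hs p).2.2 (mk s) (fun i _ => coeff_mk i s) (coeff_mk p s)

end SquareRoots

section FormalCoefficients

open PowerSeries MonoidAlgebra

variable {A E : Type*} [CommRing A] [Ring E] [Algebra A E] {G : ℤ → Submodule A E}
  {𝔞 𝔟 : Ideal A} {q r : ℤ}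

/-- The formal linear combinations of elements of the ideal `𝔞` whose coefficients are homogeneous
of degree `q`. Keeping the combinations formal makes it possible to solve an equation over them
one coefficient at a time. -/
def formalCombinations (G : ℤ → Submodule A E) (𝔞 : Ideal A) (q : ℤ) :
    AddSubgroup (MonoidAlgebra E A) where
  carrier := {x | ∀ a, x.coeff a ∈ G q ∧ (x.coeff a ≠ 0 → a ∈ 𝔞)}
  zero_mem' a := ⟨zero_mem _, fun h => absurd rfl h⟩
  add_mem' {x y} hx hy a := ⟨add_mem (hx a).1 (hy a).1, fun h => by
    by_cases hxa : x.coeff a = 0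
    · exact (hy a).2 fun hya => h (by simp [hxa, hya])
    · exact (hx a).2 hxa⟩
  neg_mem' {x} hx a := ⟨neg_mem (hx a).1, fun h => (hx a).2 fun hxa => h (by simp [hxa])⟩

lemma single_mem_formalCombinations {a : A} (ha : a ∈ 𝔞) {e : E} (he : e ∈ G q) :
    single a e ∈ formalCombinations G 𝔞 q := fun b => by
  by_cases hab : a = b
  · simp [hab ▸ ha, hab, he]
  · simp [Finsupp.single_eq_of_ne' hab]

lemma mul_mem_formalCombinations [SetLike.GradedMul G] {x y : MonoidAlgebra E A}
    (hx : x ∈ formalCombinations G 𝔞 q) (hy : y ∈ formalCombinations G 𝔟 r) :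
    x * y ∈ formalCombinations G (𝔞 * 𝔟) (q + r) := by
  rw [← sum_coeff_single x, ← sum_coeff_single y, Finsupp.sum, Finsupp.sum, Finset.sum_mul_sum]
  refine sum_mem fun a ha => sum_mem fun b hb => ?_
  rw [single_mul_single]
  exact single_mem_formalCombinations
    (Ideal.mul_mem_mul ((hx a).2 (Finsupp.mem_support_iff.1 ha))
      ((hy b).2 (Finsupp.mem_support_iff.1 hb)))
    (SetLike.GradedMul.mul_mem (hx a).1 (hy b).1)

/-- The evaluation of formal linear combinations. -/
noncomputable def evalCombination : MonoidAlgebra E A →+* E :=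
  liftNCRingHom (RingHom.id E) (algebraMap A E) fun x a => (Algebra.commutes a x).symm

@[simp]
lemma evalCombination_single (a : A) (e : E) : evalCombination (single a e) = a • e := by
  rw [Algebra.smul_def, Algebra.commutes]
  exact liftNCRingHom_single ..

lemma evalCombination_mem {x : MonoidAlgebra E A} (hx : x ∈ formalCombinations G 𝔞 q) :
    evalCombination x ∈ 𝔞 • G q := by
  rw [← sum_coeff_single x, Finsupp.sum, map_sum]
  refine sum_mem fun a ha => ?_
  rw [evalCombination_single]
  exact Submodule.smul_mem_smul ((hx a).2 (Finsupp.mem_support_iff.1 ha)) (hx a).1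

variable {d : E}

lemma exists_formal_homotopy (hG : ∀ c ∈ G q, Commute d c → ∃ h ∈ G r, d * h + h * d = c)
    {c : MonoidAlgebra E A} (hc : c ∈ formalCombinations G 𝔞 q) (hdc : Commute (single 1 d) c) :
    ∃ h ∈ formalCombinations G 𝔞 r, single 1 d * h + h * single 1 d = c := by
  have hd_coeff (a : A) : Commute d (c.coeff a) := by
    simpa [commute_iff_eq, coeff_single_one_mul, coeff_mul_single_one] using
      congrArg (fun x => x.coeff a) hdc.eq
  choose h h_mem dh using fun a => hG (c.coeff a) (hc a).1 (hd_coeff a)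
  refine ⟨∑ a ∈ c.coeff.support, single a (h a), sum_mem fun a ha =>
    single_mem_formalCombinations ((hc a).2 (Finsupp.mem_support_iff.1 ha)) (h_mem a), ?_⟩
  conv_rhs => rw [← sum_coeff_single c, Finsupp.sum]
  simp only [Finset.mul_sum, Finset.sum_mul, ← Finset.sum_add_distrib, single_mul_single, one_mul,
    mul_one, ← single_add, dh]

lemma exists_formal_homotopy_of_mem_mul {J : Ideal A}
    (hJ : ∀ b ∈ J, ∃ h ∈ G 1, d * h + h * d = b • 1) {f : A} (hf : f ∈ J * 𝔞) :
    ∃ h ∈ formalCombinations G 𝔞 1, ∃ ℓ, single 1 d * h + h * single 1 d = ℓ ∧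
      (∀ x, Commute x ℓ) ∧ evalCombination ℓ = f • (1 : E) := by
  induction hf using Submodule.mul_induction_on' with
  | mem_mul_mem b hb a ha =>
    obtain ⟨h, hh, dh⟩ := hJ b hb
    refine ⟨single a h, single_mem_formalCombinations ha hh, single a (b • 1), ?_, fun x => ?_, ?_⟩
    · simp [single_mul_single, ← single_add, dh]
    · exact (single_commute (Commute.all a) (fun e => (Commute.one_left e).smul_left b) x).symm
    · rw [evalCombination_single, smul_smul, mul_comm]
  | add f₁ _ f₂ _ ih₁ ih₂ =>
    obtain ⟨h₁, hh₁, ℓ₁, dh₁, comm₁, eval₁⟩ := ih₁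
    obtain ⟨h₂, hh₂, ℓ₂, dh₂, comm₂, eval₂⟩ := ih₂
    refine ⟨h₁ + h₂, add_mem hh₁ hh₂, ℓ₁ + ℓ₂, ?_, fun x => (comm₁ x).add_right (comm₂ x), ?_⟩
    · rw [← dh₁, ← dh₂, mul_add, add_mul, add_add_add_comm]
    · rw [map_add, eval₁, eval₂, add_smul]

lemma exists_mul_self_eq_C_mul_X_of_mem_mul [SetLike.GradedMul G] {J : Ideal A}
    (hd : d ∈ G (-1)) (d_sq : d * d = 0) (hJ : ∀ b ∈ J, ∃ h ∈ G 1, d * h + h * d = b • 1)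
    (hG : ∀ q > 0, ∀ c ∈ G q, Commute d c → ∃ h ∈ G (q + 1), d * h + h * d = c)
    {f : A} (hf : f ∈ J * 𝔞) :
    ∃ s : E⟦X⟧, PowerSeries.coeff 0 s = d ∧
      (∀ p : ℕ, PowerSeries.coeff p s ∈ 𝔞 ^ p • G (2 * p - 1)) ∧ s * s = C (f • 1) * X := by
  obtain ⟨h, hh, ℓ, dh, hℓ, eval_ℓ⟩ := exists_formal_homotopy_of_mem_mul hJ hf
  obtain ⟨S, S_zero, S_mem, S_sq⟩ := exists_mul_self_eq_C_mul_X
    (𝒜 := fun p => formalCombinations G (𝔞 ^ p) (2 * p - 1))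
    (ℬ := fun p => formalCombinations G (𝔞 ^ p) (2 * p - 2)) (d := single 1 d)
    (fun {i j x y} hx hy => by
      have := mul_mem_formalCombinations hx hy
      rwa [← pow_add, show (2 * i - 1 + (2 * j - 1) : ℤ) = 2 * (i + j : ℕ) - 2 by omega] at this)
    hℓ (single_mem_formalCombinations (by simp) (by simpa using hd))
    (by simp [single_mul_single, d_sq]) ⟨h, by simpa using hh, dh⟩
    (fun p hp c hc hdc => exists_formal_homotopy (fun c hc hdc => by
      rw [show (2 * p - 1 : ℤ) = 2 * p - 2 + 1 by ring]
      exact hG (2 * p - 2) (by omega) c hc hdc) hc hdc)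
  refine ⟨S.map evalCombination, ?_, fun p => ?_, ?_⟩
  · simp [S_zero]
  · exact coeff_map evalCombination p S ▸ evalCombination_mem (S_mem p)
  · rw [← map_mul, S_sq, map_mul, map_C, map_X, eval_ℓ]

end FormalCoefficients

section HigherHomotopies

open PowerSeries

variable {ι A : Type*} [CommRing A] {deg : ι → ℕ} {d : Module.End A (ι →₀ A)} {i₀ : ι}
  {J 𝔞 : Ideal A}

lemma IsResolution.exists_higherHomotopies (H : IsResolution deg d i₀ J) {f : A}
    (hf : f ∈ J * 𝔞) :
    ∃ s : (Module.End A (ι →₀ A))⟦X⟧, coeff 0 s = d ∧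
      (∀ p : ℕ, coeff p s ∈ 𝔞 ^ p • gradedEnd (gr deg A A) (2 * p - 1)) ∧ s * s = C (f • 1) * X :=
  exists_mul_self_eq_C_mul_X_of_mem_mul H.differential_mem H.mul_self
    (fun _ => H.exists_homotopy_smul_one) (fun _ hq _ => H.exists_homotopy_of_pos hq) hf

end HigherHomotopies

section InversePolynomials

open PowerSeries Finset.HasAntidiagonal Finset.Nat

variable {A V : Type*} [CommRing A] [AddCommGroup V] [Module A V]

/-- The action of a power series with endomorphism coefficients on `V`-valued polynomials in
`X⁻¹`, where `Finsupp.single j v` stands for `v X⁻ʲ` and positive powers of `X` are discarded.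
This is the divided power algebra on one variable tensored with `V`. -/
noncomputable def inverseAction : (Module.End A V)⟦X⟧ →+* Module.End A (ℕ →₀ V) where
  toFun S := Finsupp.lsum A fun j =>
    ∑ x ∈ antidiagonal j, Finsupp.lsingle x.2 ∘ₗ coeff x.1 S
  map_one' := Finsupp.lhom_ext fun j v => by
    cases j <;> simp [sum_antidiagonal_succ, coeff_one]
  map_mul' S T := Finsupp.lhom_ext fun j v => by
    simp only [Module.End.mul_apply, Finsupp.lsum_single, LinearMap.sum_apply, map_sum,
      LinearMap.comp_apply, Finsupp.lsingle_apply, coeff_mul, Finset.sum_sigma']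
    apply Finset.sum_nbij' (fun ⟨⟨_, y⟩, ⟨a, b⟩⟩ => ⟨(b, a + y), (a, y)⟩)
      (fun ⟨⟨b, _⟩, ⟨a, y⟩⟩ => ⟨(a + b, y), (a, b)⟩) <;>
        simp only [Finset.mem_sigma, mem_antidiagonal] <;> grind
  map_zero' := Finsupp.lhom_ext fun j v => by simp
  map_add' S T := Finsupp.lhom_ext fun j v => by
    simp [Finset.sum_add_distrib]

lemma inverseAction_single (S : (Module.End A V)⟦X⟧) (j : ℕ) (v : V) :
    inverseAction S (Finsupp.single j v) =
      ∑ x ∈ antidiagonal j, Finsupp.single x.2 (coeff x.1 S v) := by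
  simp [inverseAction]

lemma inverseAction_C_smul_one (a : A) : inverseAction (C (a • (1 : Module.End A V))) = a • 1 := by
  refine Finsupp.lhom_ext fun j v => ?_
  cases j <;> simp [inverseAction_single, sum_antidiagonal_succ, coeff_C]

lemma inverseAction_X_apply (w : ℕ →₀ V) (j : ℕ) :
    inverseAction (A := A) X w j = w (j + 1) := by
  suffices h : Finsupp.lapply j ∘ₗ inverseAction (A := A) X =
      (Finsupp.lapply (j + 1) : (ℕ →₀ V) →ₗ[A] V) from LinearMap.congr_fun h w
  refine Finsupp.lhom_ext fun k v => ?_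
  rcases k with _ | _ | k <;>
    simp [inverseAction_single, sum_antidiagonal_succ, coeff_X, Finsupp.single_apply, @eq_comm _ 0]

/-- The grading of `V`-valued polynomials in `X⁻¹` in which `X⁻¹` has degree two. -/
noncomputable def inverseGrading (𝒢 : ℤ → Submodule A V) (z : ℤ) : Submodule A (ℕ →₀ V) :=
  ⨅ j : ℕ, (𝒢 (z - 2 * j)).comap (Finsupp.lapply j)

variable {𝒢 : ℤ → Submodule A V} {z : ℤ} {s : (Module.End A V)⟦X⟧} {f : A}

lemma mem_inverseGrading {w : ℕ →₀ V} : w ∈ inverseGrading 𝒢 z ↔ ∀ j : ℕ, w j ∈ 𝒢 (z - 2 * j) := by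
  simp [inverseGrading]

lemma single_mem_inverseGrading {j : ℕ} {v : V} (hv : v ∈ 𝒢 (z - 2 * j)) :
    Finsupp.single j v ∈ inverseGrading 𝒢 z := mem_inverseGrading.2 fun k => by
  by_cases hjk : j = k
  · simpa [← hjk] using hv
  · simp [Finsupp.single_eq_of_ne' hjk]

lemma mapDomain_succ_mem_inverseGrading {y : ℕ →₀ V} (hy : y ∈ inverseGrading 𝒢 z) :
    y.mapDomain Nat.succ ∈ inverseGrading 𝒢 (z + 2) := mem_inverseGrading.2 fun j => by
  rcases j with _ | j
  · simp [Finsupp.mapDomain_of_notMem_range]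
  · rw [Finsupp.mapDomain_apply Nat.succ_injective]
    convert mem_inverseGrading.1 hy j using 2
    push_cast
    ring

lemma inverseAction_mem_gradedEnd (hs : ∀ p : ℕ, coeff p s ∈ gradedEnd 𝒢 (2 * p - 1)) :
    inverseAction s ∈ gradedEnd (inverseGrading 𝒢) (-1) := mem_gradedEnd.2 fun z w hw => by
  rw [← Finsupp.sum_single w, Finsupp.sum, map_sum]
  refine sum_mem fun j _ => ?_
  rw [inverseAction_single]
  refine sum_mem fun x hx => single_mem_inverseGrading ?_
  have : x.1 + x.2 = j := mem_antidiagonal.1 hx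
  exact apply_mem_of_mem_gradedEnd (hs x.1) (mem_inverseGrading.1 hw j) (by grind)

lemma inverseAction_apply_apply (s_sq : s * s = C (f • 1) * X) (w : ℕ →₀ V) :
    inverseAction s (inverseAction s w) = f • inverseAction (A := A) X w := by
  rw [← Module.End.mul_apply, ← map_mul, s_sq, map_mul, inverseAction_C_smul_one]
  rfl

lemma inverseAction_single_zero (v : V) :
    inverseAction s (Finsupp.single 0 v) = Finsupp.single 0 (coeff 0 s v) := by
  simp [inverseAction_single]

-- Modulo `f` the operator `s` is a differential on inverse polynomials. If `s v = f y` then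
-- `f (X v) = s (s v) = f (s y)`, so `v` and `s (X⁻¹ y)` have the same image under `X` and differ
-- by a constant polynomial, which is a cycle for the constant coefficient of `s`.
lemma exists_eq_inverseAction_add_single (s_sq : s * s = C (f • 1) * X)
    (f_reg : IsSMulRegular V f) {v y : ℕ →₀ V} (hvy : inverseAction s v = f • y) :
    ∃ x, coeff 0 s x = 0 ∧ inverseAction s (y.mapDomain Nat.succ) + Finsupp.single 0 x = v := by
  set u : ℕ →₀ V := y.mapDomain Nat.succ
  have X_u : inverseAction (A := A) X u = y := Finsupp.ext fun j => by
    rw [inverseAction_X_apply, Finsupp.mapDomain_apply Nat.succ_injective]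
  have X_v : inverseAction (A := A) X v = inverseAction s y := Finsupp.ext fun j =>
    f_reg <| by
      simp only [← Finsupp.smul_apply, ← inverseAction_apply_apply s_sq, hvy, map_smul]
  have X_su : inverseAction (A := A) X (inverseAction s u) = inverseAction s y := by
    rw [← Module.End.mul_apply, ← map_mul, ← (commute_X s).eq, map_mul, Module.End.mul_apply, X_u]
  have constant : v - inverseAction s u = Finsupp.single 0 ((v - inverseAction s u) 0) := by
    refine Finsupp.ext fun j => ?_
    rcases j with _ | j
    · simp
    · rw [← inverseAction_X_apply (A := A), map_sub, X_v, X_su]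
      simp
  refine ⟨(v - inverseAction s u) 0, ?_, by rw [← constant, add_sub_cancel]⟩
  rw [← Finsupp.single_eq_zero (a := 0), ← inverseAction_single_zero, ← constant, map_sub,
    inverseAction_apply_apply s_sq, X_u, hvy, sub_self]

lemma exists_inverseAction_eq (s_sq : s * s = C (f • 1) * X) (f_reg : IsSMulRegular V f)
    (f_gr : ∀ z x, f • x ∈ 𝒢 z → x ∈ 𝒢 z)
    (hs : ∀ p : ℕ, coeff p s ∈ gradedEnd 𝒢 (2 * p - 1))
    (exact : ∀ v ∈ 𝒢 z, coeff 0 s v = 0 → ∃ w ∈ 𝒢 (z + 1), coeff 0 s w = v)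
    {v y : ℕ →₀ V} (hv : v ∈ inverseGrading 𝒢 z) (hvy : inverseAction s v = f • y) :
    ∃ w ∈ inverseGrading 𝒢 (z + 1), inverseAction s w = v := by
  have s_mem := inverseAction_mem_gradedEnd hs
  obtain ⟨x, hx, hxv⟩ := exists_eq_inverseAction_add_single s_sq f_reg hvy
  have hy : y ∈ inverseGrading 𝒢 (z - 1) := mem_inverseGrading.2 fun j => f_gr _ _ <| by
    rw [← Finsupp.smul_apply, ← hvy]
    exact mem_inverseGrading.1 (apply_mem_of_mem_gradedEnd s_mem hv) j
  have hu : y.mapDomain Nat.succ ∈ inverseGrading 𝒢 (z + 1) := by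
    rw [show z + 1 = z - 1 + 2 by ring]
    exact mapDomain_succ_mem_inverseGrading hy
  have hx_mem : x ∈ 𝒢 z := by
    rw [← eq_sub_iff_add_eq'] at hxv
    have := sub_mem hv (apply_mem_of_mem_gradedEnd (w := z) s_mem hu)
    simpa [← hxv] using mem_inverseGrading.1 this 0
  obtain ⟨w, hw, hdw⟩ := exact x hx_mem hx
  refine ⟨y.mapDomain Nat.succ + Finsupp.single 0 w,
    add_mem hu (single_mem_inverseGrading (by simpa using hw)), ?_⟩
  rw [map_add, inverseAction_single_zero, hdw, hxv]

end InversePolynomials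

section CoefficientChange

variable {ι A B N : Type*} [CommRing A] [CommRing B] [Algebra A B] [AddCommGroup N] [Module A N]
  [Module B N] [IsScalarTower A B N] {deg : ι → ℕ} {q z : ℤ}

variable (ι A B N) in
/-- The pairing `v ⊗ x ↦ (v i • x)ᵢ`, which identifies `A^(ι) ⊗ N` with `N^(ι)`. -/
noncomputable def scale : (ι →₀ A) →ₗ[A] N →ₗ[B] (ι →₀ N) :=
  Finsupp.linearCombination A fun i => Finsupp.lsingle i

lemma scale_single (i : ι) (a : A) (x : N) :
    scale ι A B N (Finsupp.single i a) x = Finsupp.single i (a • x) := by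
  simp [scale]

lemma scale_single_one (i : ι) (a : A) :
    scale ι A B B (Finsupp.single i a) 1 = Finsupp.single i (algebraMap A B a) := by
  rw [scale_single, Algebra.algebraMap_eq_smul_one]

lemma scale_apply (v : ι →₀ A) (x : N) (i : ι) : scale ι A B N v x i = v i • x := by
  induction v using Finsupp.induction_linear with
  | zero => simp
  | add v w hv hw => simp [hv, hw, add_smul]
  | single j a => by_cases h : j = i <;> simp [scale_single, h]

lemma scale_mem_gr {v : ι →₀ A} (hv : v ∈ gr deg A A z) (x : N) :
    scale ι A B N v x ∈ gr deg B N z :=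
  mem_gr.2 fun i hi => mem_gr.1 hv i fun h => hi (by rw [scale_apply, h, zero_smul])

variable (B N) in
/-- The endomorphism of `N^(ι)` given by the matrix over `A` of an endomorphism of `A^(ι)`. -/
noncomputable def coeffEnd (e : Module.End A (ι →₀ A)) : Module.End B (ι →₀ N) :=
  Finsupp.lsum B fun i => scale ι A B N (e (Finsupp.single i 1))

variable {e : Module.End A (ι →₀ A)}

lemma coeffEnd_single (i : ι) (x : N) :
    coeffEnd B N e (Finsupp.single i x) = scale ι A B N (e (Finsupp.single i 1)) x := by
  simp [coeffEnd]

lemma coeffEnd_scale (v : ι →₀ A) (x : N) :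
    coeffEnd B N e (scale ι A B N v x) = scale ι A B N (e v) x := by
  induction v using Finsupp.induction_linear with
  | zero => simp
  | add v w hv hw => simp [hv, hw]
  | single i a =>
    have apply_single : e (Finsupp.single i a) = a • e (Finsupp.single i 1) := by
      rw [← map_smul, Finsupp.smul_single_one]
    rw [scale_single, coeffEnd_single, apply_single]
    exact Finsupp.ext fun j => by simp [scale_apply, smul_comm a]

lemma coeffEnd_mem_gradedEnd (he : e ∈ gradedEnd (gr deg A A) q) :
    coeffEnd B N e ∈ gradedEnd (gr deg B N) q :=
  mem_gradedEnd_iff_single.2 fun i x => by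
    rw [coeffEnd_single]
    exact scale_mem_gr (apply_mem_of_mem_gradedEnd he (single_mem_gr rfl 1) rfl) x

lemma coeffEnd_coeffEnd (v : ι →₀ N) :
    coeffEnd B N (coeffEnd B B e) v = coeffEnd A N e v := by
  suffices h : (coeffEnd B N (coeffEnd B B e)).restrictScalars A = coeffEnd A N e from
    LinearMap.congr_fun h v
  refine Finsupp.lhom_ext fun i x => Finsupp.ext fun j => ?_
  simp [coeffEnd_single, scale_apply]

lemma length_homology_coeffEnd_coeffEnd (hAB : Function.Surjective (algebraMap A B)) :
    Module.length B (homology (gr deg B N) (coeffEnd B N (coeffEnd B B e)) z) =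
      Module.length A (homology (gr deg A N) (coeffEnd A N e) z) :=
  (length_homology_congr hAB (.refl A _) (fun _ _ => Iff.rfl) (fun v => (coeffEnd_coeffEnd v).symm)
    z).symm

lemma scale_apply_eq_zero {𝔞 : Ideal A} (h𝔞 : ∀ a ∈ 𝔞, ∀ x : N, a • x = 0)
    (he : e ∈ 𝔞 • (⊤ : Submodule A (Module.End A (ι →₀ A)))) (v : ι →₀ A) (x : N) :
    scale ι A B N (e v) x = 0 := by
  refine Submodule.smul_induction_on he (fun a ha e' _ => ?_) fun e₁ e₂ h₁ h₂ => by simp [h₁, h₂]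
  exact Finsupp.ext fun i => by simp [scale_apply, h𝔞 a ha]

lemma exists_scale_eq (hAB : Function.Surjective (algebraMap A B)) {w : ι →₀ B}
    (hw : w ∈ gr deg B B z) : ∃ v ∈ gr deg A A z, scale ι A B B v 1 = w := by
  choose σ hσ using hAB
  refine ⟨w.sum fun i b => Finsupp.single i (σ b), Submodule.sum_mem _ fun i hi =>
    single_mem_gr (mem_gr.1 hw i (Finsupp.mem_support_iff.1 hi)) _, ?_⟩
  simp only [Finsupp.sum, map_sum, LinearMap.sum_apply, scale_single, Algebra.smul_def, hσ, mul_one]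
  exact Finsupp.sum_single w

lemma IsResolution.of_lift (hAB : Function.Surjective (algebraMap A B)) {i₀ : ι} {K : Ideal B}
    (deg_eq_zero_iff : ∀ i, deg i = 0 ↔ i = i₀)
    (differential_mem : e ∈ gradedEnd (gr deg A A) (-1))
    (mul_self : ∀ v, scale ι A B B (e (e v)) 1 = 0)
    (exact : ∀ z ≥ 1, ∀ v ∈ gr deg A A z, scale ι A B B (e v) 1 = 0 →
      ∃ w ∈ gr deg A A (z + 1), scale ι A B B (e w) 1 = scale ι A B B v 1)
    (mem_iff : ∀ a, algebraMap A B a ∈ K ↔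
      ∃ w ∈ gr deg A A 1, scale ι A B B (e w) 1 = Finsupp.single i₀ (algebraMap A B a)) :
    IsResolution deg (coeffEnd B B e) i₀ K where
  deg_eq_zero_iff := deg_eq_zero_iff
  differential_mem := coeffEnd_mem_gradedEnd differential_mem
  mul_self := Finsupp.lhom_ext fun i b => by
    obtain ⟨a, rfl⟩ := hAB b
    rw [← scale_single_one, Module.End.mul_apply, coeffEnd_scale, coeffEnd_scale, mul_self,
      LinearMap.zero_apply]
  exact z hz v hv hdv := by
    obtain ⟨v, hv', rfl⟩ := exists_scale_eq hAB hv
    obtain ⟨w, hw, hew⟩ := exact z hz v hv' (by rwa [← coeffEnd_scale])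
    exact ⟨_, scale_mem_gr hw 1, by rw [coeffEnd_scale, hew]⟩
  mem_iff b := by
    obtain ⟨a, rfl⟩ := hAB b
    refine (mem_iff a).trans ⟨fun ⟨w, hw, hew⟩ => ⟨_, scale_mem_gr hw 1, ?_⟩, ?_⟩
    · rw [coeffEnd_scale, hew]
    · rintro ⟨w, hw, hew⟩
      obtain ⟨w, hw', rfl⟩ := exists_scale_eq hAB hw
      exact ⟨w, hw', by rwa [← coeffEnd_scale]⟩

lemma IsResolution.baseChange_of_bijective {d : Module.End A (ι →₀ A)} {i₀ : ι} {J : Ideal A}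
    (H : IsResolution deg d i₀ J) (hAB : Function.Bijective (algebraMap A B)) {K : Ideal B}
    (hJK : J = K.comap (algebraMap A B)) : IsResolution deg (coeffEnd B B d) i₀ K := by
  have scale_one_injective : Function.Injective fun v => scale ι A B B v 1 := fun v w h =>
    Finsupp.ext fun i => hAB.1 <| by
      simpa [scale_apply, Algebra.algebraMap_eq_smul_one] using DFunLike.congr_fun h i
  refine .of_lift hAB.2 H.deg_eq_zero_iff H.differential_mem (fun v => ?_) ?_ fun a => ?_
  · rw [H.apply_apply, map_zero, LinearMap.zero_apply]
  · intro z hz v hv hdv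
    obtain ⟨w, hw, rfl⟩ := H.exact z hz v hv (scale_one_injective (by simpa using hdv))
    exact ⟨w, hw, rfl⟩
  · rw [← Ideal.mem_comap, ← hJK, H.mem_iff, ← scale_single_one]
    simp_rw [scale_one_injective.eq_iff]

end CoefficientChange

section ShamashResolution

open PowerSeries

variable {ι A B N : Type*} [CommRing A] [CommRing B] [Algebra A B] [AddCommGroup N] [Module A N]
  {deg : ι → ℕ} {z : ℤ}

lemma scale_one_eq_zero_iff {f : A} (ker_eq : RingHom.ker (algebraMap A B) = Ideal.span {f})
    (v : ι →₀ A) : scale ι A B B v 1 = 0 ↔ ∃ y, v = f • y := by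
  have dvd_iff (a : A) : a • (1 : B) = 0 ↔ f ∣ a := by
    rw [← Algebra.algebraMap_eq_smul_one, ← RingHom.mem_ker, ker_eq, Ideal.mem_span_singleton]
  simp only [Finsupp.ext_iff (g := (0 : ι →₀ B)), scale_apply, Finsupp.zero_apply, dvd_iff]
  constructor
  · intro h
    choose c hc using h
    refine ⟨∑ i ∈ v.support, Finsupp.single i (c i), ?_⟩
    simp only [Finset.smul_sum, Finsupp.smul_single, smul_eq_mul, ← hc]
    exact (Finsupp.sum_single v).symm
  · rintro ⟨y, rfl⟩ i
    exact Dvd.intro (y i) rfl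

/-- The degree of the basis element `X⁻ʲ ⊗ i` of the inverse polynomials with coefficients in the
free module on `ι`. -/
def shamashDegree (deg : ι → ℕ) (x : ℕ × ι) : ℕ := 2 * x.1 + deg x.2

lemma curry_mem_inverseGrading {v : ℕ × ι →₀ N} :
    v.curry ∈ inverseGrading (gr deg A N) z ↔ v ∈ gr (shamashDegree deg) A N z := by
  simp only [mem_inverseGrading, mem_gr, Finsupp.curry_apply, Prod.forall, shamashDegree]
  refine forall_congr' fun j => forall_congr' fun i => imp_congr_right fun _ => ?_
  omega

/-- The differential of the Shamash resolution before reduction modulo `f`: the action on inverse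
polynomials of a system `s` of higher homotopies for `f`. -/
noncomputable def shamashDifferential (s : (Module.End A (ι →₀ A))⟦X⟧) :
    Module.End A (ℕ × ι →₀ A) :=
  (Finsupp.curryLinearEquiv A).symm.conj (inverseAction s)

variable {s : (Module.End A (ι →₀ A))⟦X⟧}

lemma curry_shamashDifferential (v : ℕ × ι →₀ A) :
    (shamashDifferential s v).curry = inverseAction s v.curry :=
  (Finsupp.curryLinearEquiv A).apply_symm_apply _

lemma shamashDifferential_uncurry (w : ℕ →₀ ι →₀ A) :
    shamashDifferential s w.uncurry = (inverseAction s w).uncurry := by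
  rw [← Finsupp.uncurry_curry (shamashDifferential s _), curry_shamashDifferential,
    Finsupp.curry_uncurry]

lemma shamashDifferential_mem_gradedEnd
    (hs : ∀ p : ℕ, coeff p s ∈ gradedEnd (gr deg A A) (2 * p - 1)) :
    shamashDifferential s ∈ gradedEnd (gr (shamashDegree deg) A A) (-1) :=
  mem_gradedEnd.2 fun z v hv => by
    rw [← curry_mem_inverseGrading, curry_shamashDifferential]
    exact mem_gradedEnd.1 (inverseAction_mem_gradedEnd hs) z _ (curry_mem_inverseGrading.2 hv)

lemma exists_shamashDifferential_shamashDifferential_eq {f : A} (s_sq : s * s = C (f • 1) * X)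
    (v : ℕ × ι →₀ A) :
    ∃ y, shamashDifferential s (shamashDifferential s v) = f • y := by
  refine ⟨(inverseAction (A := A) X v.curry).uncurry, ?_⟩
  nth_rw 1 [← Finsupp.uncurry_curry v]
  rw [shamashDifferential_uncurry, shamashDifferential_uncurry, inverseAction_apply_apply s_sq]
  exact map_smul (Finsupp.curryLinearEquiv A).symm f _

variable {d : Module.End A (ι →₀ A)} {i₀ : ι} {J : Ideal A}

lemma IsResolution.exists_shamashDifferential_eq (H : IsResolution deg d i₀ J) {f : A}
    (f_reg : IsSMulRegular A f) (s_zero : coeff 0 s = d)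
    (hs : ∀ p : ℕ, coeff p s ∈ gradedEnd (gr deg A A) (2 * p - 1))
    (s_sq : s * s = C (f • 1) * X) (hz : 1 ≤ z) {v y : ℕ × ι →₀ A}
    (hv : v ∈ gr (shamashDegree deg) A A z) (hvy : shamashDifferential s v = f • y) :
    ∃ w ∈ gr (shamashDegree deg) A A (z + 1), shamashDifferential s w = v := by
  have f_gr (z) (x : ι →₀ A) (hx : f • x ∈ gr deg A A z) : x ∈ gr deg A A z :=
    mem_gr.2 fun i hi => mem_gr.1 hx i fun h => hi (f_reg.right_eq_zero_of_smul h)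
  have f_reg' : IsSMulRegular (ι →₀ A) f := fun x x' h =>
    Finsupp.ext fun i => f_reg (DFunLike.congr_fun h i)
  obtain ⟨w, hw, hsw⟩ := exists_inverseAction_eq (y := y.curry) s_sq f_reg' f_gr hs
    (s_zero ▸ H.exact z hz) (curry_mem_inverseGrading.2 hv)
    (by rw [← curry_shamashDifferential, hvy]; exact map_smul (Finsupp.curryLinearEquiv A) f y)
  refine ⟨w.uncurry, curry_mem_inverseGrading.1 (by rwa [Finsupp.curry_uncurry]), ?_⟩
  rw [shamashDifferential_uncurry, hsw, Finsupp.uncurry_curry]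

lemma IsResolution.mem_iff_exists_shamashDifferential (H : IsResolution deg d i₀ J) {K : Ideal B}
    (hJK : J = K.comap (algebraMap A B)) (s_zero : coeff 0 s = d) (a : A) :
    algebraMap A B a ∈ K ↔ ∃ w ∈ gr (shamashDegree deg) A A 1,
      scale _ A B B (shamashDifferential s w) 1 = Finsupp.single (0, i₀) (algebraMap A B a) := by
  have on_constants (w : ι →₀ A) : shamashDifferential s (Finsupp.single 0 w).uncurry =
      (Finsupp.single 0 (d w)).uncurry := by
    rw [shamashDifferential_uncurry, inverseAction_single_zero, s_zero]
  constructor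
  · intro ha
    obtain ⟨w, hw, hdw⟩ := (H.mem_iff a).1 (hJK ▸ ha)
    refine ⟨(Finsupp.single 0 w).uncurry, curry_mem_inverseGrading.1 ?_, ?_⟩
    · rw [Finsupp.curry_uncurry]
      exact single_mem_inverseGrading (by simpa using hw)
    · rw [on_constants, hdw, Finsupp.uncurry_single, scale_single, Algebra.algebraMap_eq_smul_one]
  · rintro ⟨w, hw, hsw⟩
    have hw' := mem_inverseGrading.1 (curry_mem_inverseGrading.2 hw)
    have hw₀ : w.curry 0 ∈ gr deg A A (0 + 1) := by simpa using hw' 0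
    have constant : w.curry = Finsupp.single 0 (w.curry 0) := Finsupp.ext fun j => by
      rcases j with _ | j
      · simp
      · simpa [gr_eq_bot_of_neg (show 1 - 2 * ((j : ℤ) + 1) < 0 by omega)] using hw' (j + 1)
    rw [← Finsupp.uncurry_curry w, constant, on_constants] at hsw
    have := DFunLike.congr_fun hsw (0, i₀)
    rw [scale_apply, Finsupp.uncurry_apply, Finsupp.single_eq_same, Finsupp.single_eq_same,
      ← Algebra.algebraMap_eq_smul_one] at this
    rw [← this, ← Ideal.mem_comap, ← hJK, H.mem_iff]
    exact ⟨_, hw₀, H.eq_single_of_mem_gr_zero (H.apply_mem hw₀)⟩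

lemma IsResolution.shamash (H : IsResolution deg d i₀ J)
    (hAB : Function.Surjective (algebraMap A B)) {f : A} (f_reg : IsSMulRegular A f)
    (ker_eq : RingHom.ker (algebraMap A B) = Ideal.span {f}) {K : Ideal B}
    (hJK : J = K.comap (algebraMap A B)) (s_zero : coeff 0 s = d)
    (hs : ∀ p : ℕ, coeff p s ∈ gradedEnd (gr deg A A) (2 * p - 1))
    (s_sq : s * s = C (f • 1) * X) :
    IsResolution (shamashDegree deg) (coeffEnd B B (shamashDifferential s)) (0, i₀) K :=
  .of_lift hAB
    (fun x => by simp [shamashDegree, H.deg_eq_zero_iff, Prod.ext_iff])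
    (shamashDifferential_mem_gradedEnd hs)
    (fun v => (scale_one_eq_zero_iff ker_eq _).2
      (exists_shamashDifferential_shamashDifferential_eq s_sq v))
    (fun z hz v hv hsv => by
      obtain ⟨y, hy⟩ := (scale_one_eq_zero_iff ker_eq _).1 hsv
      obtain ⟨w, hw, rfl⟩ := H.exists_shamashDifferential_eq f_reg s_zero hs s_sq hz hv hy
      exact ⟨w, hw, rfl⟩)
    (H.mem_iff_exists_shamashDifferential hJK s_zero)

end ShamashResolution

section Splitting

open PowerSeries Finset.HasAntidiagonal

variable {ι A N : Type*} [CommRing A] [AddCommGroup N] [Module A N] {deg : ι → ℕ}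
  {d : Module.End A (ι →₀ A)} {s : (Module.End A (ι →₀ A))⟦X⟧} {𝔞 : Ideal A}

lemma curry_scale (v : ℕ × ι →₀ A) (x : N) (j : ℕ) :
    (scale (ℕ × ι) A A N v x).curry j = scale ι A A N (v.curry j) x :=
  Finsupp.ext fun i => by simp [scale_apply]

lemma curry_coeffEnd_shamashDifferential (h𝔞 : ∀ a ∈ 𝔞, ∀ x : N, a • x = 0)
    (s_zero : coeff 0 s = d)
    (hs : ∀ p ≠ 0, coeff p s ∈ 𝔞 • (⊤ : Submodule A (Module.End A (ι →₀ A))))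
    (v : ℕ × ι →₀ N) (j : ℕ) :
    (coeffEnd A N (shamashDifferential s) v).curry j = coeffEnd A N d (v.curry j) := by
  have on_column (k : ℕ) (w : ι →₀ A) (x : N) :
      scale ι A A N (inverseAction s (Finsupp.single k w) j) x =
        scale ι A A N (Finsupp.single k (d w) j) x := by
    rw [inverseAction_single, Finsupp.finsetSum_apply, map_sum, LinearMap.sum_apply,
      Finset.sum_eq_single (0, k)]
    · rw [s_zero]
    · rintro ⟨p, q⟩ hpq hne
      have hp : p ≠ 0 := by
        rintro rfl
        exact hne (by simpa using hpq)
      by_cases hq : q = j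
      · simpa [hq] using scale_apply_eq_zero h𝔞 (hs p hp) w x
      · simp [Finsupp.single_eq_of_ne' hq]
    · simp
  suffices h : Finsupp.lapply j ∘ₗ (Finsupp.curryLinearEquiv A).toLinearMap ∘ₗ
      coeffEnd A N (shamashDifferential s) =
        coeffEnd A N d ∘ₗ Finsupp.lapply j ∘ₗ (Finsupp.curryLinearEquiv A).toLinearMap from
    LinearMap.congr_fun h v
  refine Finsupp.lhom_ext fun k x => ?_
  change (coeffEnd A N (shamashDifferential s) (Finsupp.single k x)).curry j =
    coeffEnd A N d ((Finsupp.single k x).curry j)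
  rw [coeffEnd_single, curry_scale, curry_shamashDifferential, Finsupp.curry_single, on_column,
    Finsupp.curry_single]
  by_cases hk : k.1 = j
  · simp [hk, coeffEnd_single]
  · simp [Finsupp.single_eq_of_ne' hk]

/-- The basis of inverse polynomials splits into the constants and the multiples of `X⁻¹`. -/
def constantsSumShift (ι : Type*) : ℕ × ι ≃ ι ⊕ ℕ × ι where
  toFun | (0, i) => .inl i
        | (j + 1, i) => .inr (j, i)
  invFun | .inl i => (0, i)
         | .inr (j, i) => (j + 1, i)
  left_inv := by rintro ⟨_ | j, i⟩ <;> rfl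
  right_inv := by rintro (i | ⟨j, i⟩) <;> rfl

lemma length_homology_shamash (h𝔞 : ∀ a ∈ 𝔞, ∀ x : N, a • x = 0)
    (s_zero : coeff 0 s = d)
    (hs : ∀ p ≠ 0, coeff p s ∈ 𝔞 • (⊤ : Submodule A (Module.End A (ι →₀ A)))) (z : ℤ) :
    Module.length A
        (homology (gr (shamashDegree deg) A N) (coeffEnd A N (shamashDifferential s)) z) =
      Module.length A (homology (gr deg A N) (coeffEnd A N d) z) +
        Module.length A (homology (gr (shamashDegree deg) A N)
          (coeffEnd A N (shamashDifferential s)) (z - 2)) := by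
  let φ : (ℕ × ι →₀ N) ≃ₗ[A] (ι →₀ N) × (ℕ × ι →₀ N) :=
    (Finsupp.domLCongr (constantsSumShift ι)).trans (Finsupp.sumFinsuppLEquivProdFinsupp A)
  have fst_φ (v : ℕ × ι →₀ N) : (φ v).1 = v.curry 0 := Finsupp.ext fun i => rfl
  have snd_φ (v : ℕ × ι →₀ N) (j : ℕ) : (φ v).2.curry j = v.curry (j + 1) :=
    Finsupp.ext fun i => rfl
  have grading (z : ℤ) (v : ℕ × ι →₀ N) :
      φ v ∈ (gr deg A N z).prod (gr (shamashDegree deg) A N (z - 2)) ↔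
        v ∈ gr (shamashDegree deg) A N z := by
    simp_rw [Submodule.mem_prod, ← curry_mem_inverseGrading, mem_inverseGrading, fst_φ, snd_φ]
    rw [← Nat.and_forall_add_one (p := fun j => v.curry j ∈ gr deg A N (z - 2 * j))]
    simp [mul_add, sub_sub, add_comm]
  have differential (v : ℕ × ι →₀ N) : φ (coeffEnd A N (shamashDifferential s) v) =
      (coeffEnd A N d).prodMap (coeffEnd A N (shamashDifferential s)) (φ v) := by
    refine Prod.ext ?_ ((Finsupp.curryLinearEquiv A).injective (Finsupp.ext fun j => ?_))
    · rw [fst_φ, curry_coeffEnd_shamashDifferential h𝔞 s_zero hs, ← fst_φ]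
      rfl
    · refine (snd_φ _ j).trans ?_
      rw [curry_coeffEnd_shamashDifferential h𝔞 s_zero hs, ← snd_φ]
      exact (curry_coeffEnd_shamashDifferential h𝔞 s_zero hs _ j).symm
  rw [length_homology_congr Function.surjective_id φ grading differential, length_homology_prod z]
  simp only [homology]
  rw [sub_add_eq_add_sub]

end Splitting

section TorRecursion

open PowerSeries

variable {ι A B N : Type*} [CommRing A] [CommRing B] [Algebra A B] [AddCommGroup N] [Module A N]
  [Module B N] [IsScalarTower A B N] {deg : ι → ℕ} {d : Module.End A (ι →₀ A)} {i₀ : ι}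
  {J : Ideal A} {K : Ideal B} {f : A}

lemma IsResolution.exists_shamash (H : IsResolution deg d i₀ J)
    (hAB : Function.Surjective (algebraMap A B)) (f_reg : IsSMulRegular A f)
    (ker_eq : RingHom.ker (algebraMap A B) = Ideal.span {f}) (hJK : J = K.comap (algebraMap A B))
    (hf : f ∈ J * Module.annihilator A N) :
    ∃ (deg' : ℕ × ι → ℕ) (e : Module.End B (ℕ × ι →₀ B)), IsResolution deg' e (0, i₀) K ∧
      ∀ z, Module.length B (homology (gr deg' B N) (coeffEnd B N e) z) =
        Module.length A (homology (gr deg A N) (coeffEnd A N d) z) +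
          Module.length B (homology (gr deg' B N) (coeffEnd B N e) (z - 2)) := by
  obtain ⟨s, s_zero, hs, s_sq⟩ := H.exists_higherHomotopies hf
  refine ⟨shamashDegree deg, coeffEnd B B (shamashDifferential s),
    H.shamash hAB f_reg ker_eq hJK s_zero (fun p => Submodule.smul_le_right (hs p)) s_sq,
    fun z => ?_⟩
  simp only [length_homology_coeffEnd_coeffEnd hAB]
  refine length_homology_shamash (𝔞 := Module.annihilator A N)
    (fun a ha x => Module.mem_annihilator.1 ha x) s_zero (fun p hp => ?_) z
  exact Submodule.smul_mono (Ideal.pow_le_self hp) le_top (hs p)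

end TorRecursion

section Tor

universe u

lemma nonempty_shortComplex_homology_linearEquiv {A V : Type u} [CommRing A]
    [AddCommGroup V] [Module A V] {𝒢 : ℤ → Submodule A V} {d : Module.End A V} {z : ℤ}
    (S : ShortComplex (ModuleCat.{u} A))
    (ψ₁ : S.X₁ →ₗ[A] V) (ψ₂ : S.X₂ →ₗ[A] V) (ψ₂_inj : Function.Injective ψ₂)
    (range_ψ₁ : LinearMap.range ψ₁ = 𝒢 (z + 1)) (range_ψ₂ : LinearMap.range ψ₂ = 𝒢 z)
    (hf : ∀ x, ψ₂ (S.f.hom x) = d (ψ₁ x)) (hg : ∀ x, S.g.hom x = 0 ↔ d (ψ₂ x) = 0) :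
    Nonempty (S.homology ≃ₗ[A] homology 𝒢 d z) := by
  have cycle (x : LinearMap.ker S.g.hom) : ψ₂ x ∈ LinearMap.ker d ⊓ 𝒢 z :=
    ⟨(hg x).1 x.2, range_ψ₂.le ⟨x, rfl⟩⟩
  let φ : LinearMap.ker S.g.hom ≃ₗ[A] ↥(LinearMap.ker d ⊓ 𝒢 z) :=
    .ofBijective ((ψ₂ ∘ₗ (LinearMap.ker S.g.hom).subtype).codRestrict _ cycle)
      ⟨fun x y hxy => Subtype.ext (ψ₂_inj (congrArg Subtype.val hxy)), fun v => by
        obtain ⟨x, hx⟩ := range_ψ₂.ge v.2.2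
        exact ⟨⟨x, (hg x).2 (by rw [hx]; exact v.2.1)⟩, Subtype.ext hx⟩⟩
  refine ⟨S.moduleCatHomologyIso.toLinearEquiv.trans
    (Submodule.Quotient.equiv (LinearMap.range S.moduleCatToCycles) _ φ ?_)⟩
  ext v
  constructor
  · rintro ⟨_, ⟨x, rfl⟩, rfl⟩
    exact ⟨ψ₁ x, range_ψ₁.le ⟨x, rfl⟩, (hf x).symm⟩
  · rintro ⟨w, hw, hdw⟩
    obtain ⟨x, rfl⟩ := range_ψ₁.ge hw
    exact ⟨_, ⟨x, rfl⟩, Subtype.ext ((hf x).trans hdw)⟩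

variable {ι A N : Type u} [CommRing A] [AddCommGroup N] [Module A N] {deg : ι → ℕ} {n : ℕ}

variable (A N deg n) in
/-- The pairing `scale`, restricted to the degree `n` part. -/
noncomputable def grTensor : N ⊗[A] gr deg A A n →ₗ[A] (ι →₀ N) :=
  TensorProduct.lift ((scale ι A A N).domRestrict (gr deg A A n)).flip

lemma grTensor_tmul (x : N) (v : gr deg A A n) : grTensor A N deg n (x ⊗ₜ v) = scale ι A A N v x :=
  rfl

lemma grTensor_injective : Function.Injective (grTensor A N deg n) := by
  classical
  have h : grTensor A N deg n = (TensorProduct.finsuppScalarRight A A N ι).toLinearMap ∘ₗ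
      (gr deg A A n).subtype.lTensor N := TensorProduct.ext' fun x v => Finsupp.ext fun i => by
    simp [grTensor_tmul, scale_apply]
  rw [h]
  let r : (ι →₀ A) →ₗ[A] gr deg A A n := Finsupp.restrictDom A A {i | (deg i : ℤ) = n}
  have splitting : r ∘ₗ (gr deg A A n).subtype = .id := Finsupp.restrictDom_comp_subtype _
  refine (TensorProduct.finsuppScalarRight A A N ι).injective.comp
    (Function.LeftInverse.injective (g := r.lTensor N) fun y => ?_)
  rw [← LinearMap.lTensor_comp_apply, splitting, LinearMap.lTensor_id, LinearMap.id_apply]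

lemma range_grTensor : LinearMap.range (grTensor A N deg n) = gr deg A N n := by
  refine le_antisymm ?_ (gr_le_iff.2 fun i hi x => ⟨x ⊗ₜ ⟨_, single_mem_gr hi 1⟩, ?_⟩)
  · rintro _ ⟨x, rfl⟩
    induction x with
    | zero => simp
    | add x y hx hy => simpa using add_mem hx hy
    | tmul x v => exact scale_mem_gr v.2 x
  · rw [grTensor_tmul, scale_single, one_smul]

variable {d : Module.End A (ι →₀ A)} {i₀ : ι} {J : Ideal A}

namespace IsResolution

variable (H : IsResolution deg d i₀ J)

/-- The differential of a graded resolution in degree `n + 1`. -/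
noncomputable def component (n : ℕ) : gr deg A A (n + 1 : ℕ) →ₗ[A] gr deg A A n :=
  d.restrict fun _ hv => H.apply_mem hv

/-- The chain complex underlying a graded resolution. -/
noncomputable def chainComplex : ChainComplex (ModuleCat.{u} A) ℕ :=
  .of (fun n : ℕ => ModuleCat.of A (gr deg A A n)) (fun n => ModuleCat.ofHom (H.component n))
    fun _ => ModuleCat.hom_ext <| LinearMap.ext fun v => Subtype.ext (H.apply_apply v)

variable (deg i₀ J) in
/-- The augmentation of a graded resolution of `A ⧸ J`. -/
noncomputable def augmentation : gr deg A A (0 : ℕ) →ₗ[A] A ⧸ J :=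
  J.mkQ ∘ₗ Finsupp.lapply i₀ ∘ₗ (gr deg A A (0 : ℕ)).subtype

include H in
lemma augmentation_eq_zero_iff (v : gr deg A A (0 : ℕ)) :
    augmentation deg i₀ J v = 0 ↔ ∃ w, H.component 0 w = v := by
  have hv := H.eq_single_of_mem_gr_zero v.2
  rw [show augmentation deg i₀ J v = Submodule.Quotient.mk (v.1 i₀) from rfl,
    Submodule.Quotient.mk_eq_zero, H.mem_iff, ← hv]
  exact ⟨fun ⟨w, hw, hdw⟩ => ⟨⟨w, hw⟩, Subtype.ext hdw⟩,
    fun ⟨w, hw⟩ => ⟨w, w.2, congrArg Subtype.val hw⟩⟩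

include H in
lemma augmentation_surjective : Function.Surjective (augmentation deg i₀ J) := fun x => by
  obtain ⟨a, rfl⟩ := J.mkQ_surjective x
  refine ⟨⟨Finsupp.single i₀ a, single_mem_gr ?_ a⟩, ?_⟩
  · simp [(H.deg_eq_zero_iff i₀).2 rfl]
  · simp [augmentation]

lemma exists_component_eq {n : ℕ} {v : gr deg A A (n + 1 : ℕ)} (hv : H.component n v = 0) :
    ∃ w, H.component (n + 1) w = v := by
  obtain ⟨w, hw, hdw⟩ := H.exact _ (by simp) v v.2 (congrArg Subtype.val hv)
  exact ⟨⟨w, hw⟩, Subtype.ext hdw⟩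

lemma chainComplex_d (n : ℕ) : H.chainComplex.d (n + 1) n = ModuleCat.ofHom (H.component n) :=
  ChainComplex.of_d (fun n : ℕ => ModuleCat.of A (gr deg A A n))
    (fun n => ModuleCat.ofHom (H.component n)) n

lemma chainComplex_d_apply (n : ℕ) (v : gr deg A A (n + 1 : ℕ)) :
    (H.chainComplex.d (n + 1) n).hom v = H.component n v := by
  rw [chainComplex_d]
  rfl

/-- A graded resolution as a projective resolution. -/
noncomputable def projectiveResolution : ProjectiveResolution (ModuleCat.of A (A ⧸ J)) where
  complex := H.chainComplex
  projective n := by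
    have : Module.Free A (gr deg A A n) := .of_equiv (Finsupp.supportedEquivFinsupp _).symm
    exact ModuleCat.projective_of_free (Module.Free.chooseBasis A (gr deg A A n))
  π := (ChainComplex.toSingle₀Equiv _ _).symm ⟨ModuleCat.ofHom (augmentation deg i₀ J), by
    rw [H.chainComplex_d]
    exact ModuleCat.hom_ext <| LinearMap.ext fun v => (H.augmentation_eq_zero_iff _).2 ⟨v, rfl⟩⟩
  quasiIso := ⟨fun n => by
    rcases n with _ | n
    · rw [ChainComplex.quasiIsoAt₀_iff, ShortComplex.quasiIso_iff_of_zeros' _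
        (H.chainComplex.shape 0 0 (by simp)) rfl rfl, ShortComplex.moduleCat_exact_iff,
        ModuleCat.epi_iff_surjective]
      refine ⟨fun v hv => ?_, H.augmentation_surjective⟩
      obtain ⟨w, hw⟩ := (H.augmentation_eq_zero_iff v).1 hv
      exact ⟨w, (H.chainComplex_d_apply 0 w).trans hw⟩
    · rw [quasiIsoAt_iff_exactAt' (hL := ChainComplex.exactAt_succ_single_obj ..),
        HomologicalComplex.exactAt_iff' _ (n + 2) (n + 1) n (by simp) (by simp),
        ShortComplex.moduleCat_exact_iff]
      intro v hv
      obtain ⟨w, hw⟩ := H.exists_component_eq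
        ((H.chainComplex_d_apply n v).symm.trans hv)
      exact ⟨w, (H.chainComplex_d_apply _ w).trans hw⟩⟩

lemma grTensor_component (n : ℕ) (x : N ⊗[A] gr deg A A (n + 1 : ℕ)) :
    grTensor A N deg n ((H.component n).lTensor N x) =
      coeffEnd A N d (grTensor A N deg (n + 1) x) := by
  induction x with
  | zero => simp
  | add x y hx hy => simp_all
  | tmul x v => exact (coeffEnd_scale v.1 x).symm

include H in
lemma nonempty_tor_linearEquiv (i : ℕ) :
    Nonempty (((Tor (ModuleCat.{u} A) i).obj (ModuleCat.of A N)).obj (ModuleCat.of A (A ⧸ J)) ≃ₗ[A]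
      homology (gr deg A N) (coeffEnd A N d) i) := by
  let F := (MonoidalCategory.tensoringLeft (ModuleCat.{u} A)).obj (ModuleCat.of A N)
  let K := (F.mapHomologicalComplex (ComplexShape.down ℕ)).obj H.chainComplex
  have tor_iso := H.projectiveResolution.isoLeftDerivedObj F i
  have sc_iso : K.homology i ≅ (K.sc' (i + 1) i (i - 1)).homology :=
    ShortComplex.homologyMapIso (K.isoSc' (i + 1) i (i - 1) (by simp) (by cases i <;> simp))
  have K_d (n : ℕ) (x : N ⊗[A] gr deg A A (n + 1 : ℕ)) :
      grTensor A N deg n ((K.d (n + 1) n).hom x) =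
        coeffEnd A N d (grTensor A N deg (n + 1) x) := by
    rw [← H.grTensor_component]
    exact congrArg (fun f : ModuleCat.of A (gr deg A A (n + 1 : ℕ)) ⟶ .of A (gr deg A A n) =>
      grTensor A N deg n (f.hom.lTensor N x)) (H.chainComplex_d n)
  refine (nonempty_shortComplex_homology_linearEquiv _ (grTensor A N deg (i + 1))
    (grTensor A N deg i) grTensor_injective range_grTensor range_grTensor (K_d i) fun x => ?_).map
    (tor_iso.trans sc_iso).toLinearEquiv.trans
  rcases i with _ | n
  · have hx : grTensor A N deg 0 x ∈ gr deg A N 0 := range_grTensor.le ⟨x, rfl⟩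
    have := apply_mem_of_mem_gradedEnd (w := -1) (coeffEnd_mem_gradedEnd H.differential_mem) hx
    rw [gr_eq_bot_of_neg (by norm_num), Submodule.mem_bot] at this
    refine iff_of_true ?_ this
    exact congrArg (fun f => f.hom x) (K.shape 0 0 (by simp))
  · exact (map_eq_zero_iff _ grTensor_injective).symm.trans (Eq.congr_left (K_d n x))

end IsResolution

end Tor

section Existence

universe u

variable {A : Type u} [CommRing A] (J : Ideal A)

/-- Bases and kernels of the successive free modules in a resolution of `A ⧸ J`: the first free
module is `A` with submodule `J`, and each next one is free on minimal generators of the previous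
kernel. -/
noncomputable def syzygies : ℕ → Σ κ : Type u, Submodule A (κ →₀ A)
  | 0 => ⟨PUnit, Submodule.comap (Finsupp.lapply PUnit.unit) J⟩
  | n + 1 => ⟨(syzygies n).2.generators,
      LinearMap.ker (Finsupp.linearCombination A (Subtype.val : (syzygies n).2.generators → _))⟩

instance [IsNoetherianRing A] (n : ℕ) : Finite (syzygies J n).1 := by
  induction n with
  | zero => exact inferInstanceAs (Finite PUnit)
  | succ n _ => exact (IsNoetherian.noetherian (syzygies J n).2).finite_generators

/-- The generators of the `n`-th kernel, as a map of free modules. -/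
noncomputable def syzygyMap (n : ℕ) : ((syzygies J (n + 1)).1 →₀ A) →ₗ[A] ((syzygies J n).1 →₀ A) :=
  Finsupp.linearCombination A (Subtype.val : (syzygies J n).2.generators → _)

lemma range_syzygyMap (n : ℕ) : LinearMap.range (syzygyMap J n) = (syzygies J n).2 :=
  (Finsupp.range_linearCombination A).trans <|
    (congrArg _ Subtype.range_coe).trans (Submodule.span_generators _)

lemma ker_syzygyMap (n : ℕ) : LinearMap.ker (syzygyMap J n) = (syzygies J (n + 1)).2 := rfl

/-- The inclusion of the `n`-th free module in the direct sum of all of them. -/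
noncomputable def syzygyInclusion (n : ℕ) :
    ((syzygies J n).1 →₀ A) →ₗ[A] ((Σ n, (syzygies J n).1) →₀ A) :=
  Finsupp.lmapDomain A A fun t => ⟨n, t⟩

variable {J}

lemma syzygyInclusion_single (n : ℕ) (t : (syzygies J n).1) (a : A) :
    syzygyInclusion J n (Finsupp.single t a) = Finsupp.single ⟨n, t⟩ a := by
  simp [syzygyInclusion]

lemma syzygyInclusion_injective (n : ℕ) : Function.Injective (syzygyInclusion J n) :=
  Finsupp.mapDomain_injective fun _ _ h => eq_of_heq (Sigma.mk.inj h).2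

lemma range_syzygyInclusion (n : ℕ) :
    LinearMap.range (syzygyInclusion J n) = gr Sigma.fst A A n := by
  refine le_antisymm ?_ (gr_le_iff.2 ?_)
  · rintro _ ⟨v, rfl⟩
    induction v using Finsupp.induction_linear with
    | zero => simp
    | add v w hv hw => simpa using add_mem hv hw
    | single t a => simpa [syzygyInclusion_single] using single_mem_gr (by simp) a
  · rintro ⟨m, t⟩ h a
    obtain rfl : m = n := by exact_mod_cast h
    exact ⟨_, syzygyInclusion_single m t a⟩

variable (J) in
/-- The total differential of the free resolution built from `syzygyMap`. -/
noncomputable def syzygyDifferential : Module.End A ((Σ n, (syzygies J n).1) →₀ A) :=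
  Finsupp.linearCombination A fun
    | ⟨0, _⟩ => 0
    | ⟨n + 1, t⟩ => syzygyInclusion J n (syzygyMap J n (Finsupp.single t 1))

lemma syzygyDifferential_inclusion_zero (v : (syzygies J 0).1 →₀ A) :
    syzygyDifferential J (syzygyInclusion J 0 v) = 0 := by
  have : syzygyDifferential J ∘ₗ syzygyInclusion J 0 = 0 := Finsupp.lhom_ext fun t a => by
    simp [syzygyDifferential, syzygyInclusion_single]
  exact LinearMap.congr_fun this v

lemma syzygyDifferential_inclusion_succ (n : ℕ) (v : (syzygies J (n + 1)).1 →₀ A) :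
    syzygyDifferential J (syzygyInclusion J (n + 1) v) = syzygyInclusion J n (syzygyMap J n v) := by
  have : syzygyDifferential J ∘ₗ syzygyInclusion J (n + 1) = syzygyInclusion J n ∘ₗ syzygyMap J n :=
    Finsupp.lhom_ext' fun t => LinearMap.ext_ring <| by
      simp [syzygyDifferential, syzygyInclusion_single]
  exact LinearMap.congr_fun this v

lemma exists_syzygyDifferential_eq_iff {n : ℕ} {v : (syzygies J n).1 →₀ A} :
    (∃ w ∈ gr Sigma.fst A A (n + 1), syzygyDifferential J w = syzygyInclusion J n v) ↔
      v ∈ (syzygies J n).2 := by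
  have range_succ : gr Sigma.fst A A (n + 1) = LinearMap.range (syzygyInclusion J (n + 1)) := by
    rw [range_syzygyInclusion]
    norm_cast
  rw [← range_syzygyMap, range_succ]
  constructor
  · rintro ⟨_, ⟨w, rfl⟩, hw⟩
    rw [syzygyDifferential_inclusion_succ] at hw
    exact ⟨w, syzygyInclusion_injective n hw⟩
  · rintro ⟨w, rfl⟩
    exact ⟨_, ⟨w, rfl⟩, syzygyDifferential_inclusion_succ n w⟩

variable (J) in
lemma isResolution_syzygyDifferential :
    IsResolution Sigma.fst (syzygyDifferential J) ⟨0, PUnit.unit⟩ J where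
  deg_eq_zero_iff := by
    rintro ⟨m, t⟩
    refine ⟨?_, fun h => congrArg Sigma.fst h⟩
    rintro rfl
    rfl
  differential_mem := mem_gradedEnd_iff_single.2 fun ⟨m, t⟩ a => by
    rw [← syzygyInclusion_single]
    rcases m with _ | m
    · rw [syzygyDifferential_inclusion_zero]
      exact zero_mem _
    · rw [syzygyDifferential_inclusion_succ, show ((m + 1 : ℕ) : ℤ) + -1 = m by simp,
        ← range_syzygyInclusion]
      exact ⟨_, rfl⟩
  mul_self := Finsupp.lhom_ext fun ⟨m, t⟩ a => by
    rw [← syzygyInclusion_single, Module.End.mul_apply]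
    rcases m with _ | _ | m
    · rw [syzygyDifferential_inclusion_zero, map_zero, LinearMap.zero_apply]
    · rw [syzygyDifferential_inclusion_succ, syzygyDifferential_inclusion_zero,
        LinearMap.zero_apply]
    · have : syzygyMap J (m + 1) (Finsupp.single t a) ∈ LinearMap.ker (syzygyMap J m) := by
        rw [ker_syzygyMap, ← range_syzygyMap]
        exact ⟨_, rfl⟩
      rw [syzygyDifferential_inclusion_succ, syzygyDifferential_inclusion_succ,
        LinearMap.mem_ker.1 this, map_zero, LinearMap.zero_apply]
  exact z hz v hv hdv := by
    obtain ⟨n, rfl⟩ : ∃ n : ℕ, z = ((n + 1 : ℕ) : ℤ) := ⟨(z - 1).toNat, by omega⟩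
    rw [← range_syzygyInclusion] at hv
    obtain ⟨v, rfl⟩ := hv
    rw [syzygyDifferential_inclusion_succ,
      map_eq_zero_iff _ (syzygyInclusion_injective n)] at hdv
    exact exists_syzygyDifferential_eq_iff.2 hdv
  mem_iff a := by
    have single_mem_iff : Finsupp.single PUnit.unit a ∈ (syzygies J 0).2 ↔ a ∈ J :=
      Iff.of_eq (congrArg (· ∈ J) Finsupp.single_eq_same)
    refine single_mem_iff.symm.trans (exists_syzygyDifferential_eq_iff.symm.trans ?_)
    rw [Nat.cast_zero, zero_add, ← syzygyInclusion_single 0 PUnit.unit a]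
    rfl

variable (J) in
lemma finite_setOf_sigma_fst_eq [IsNoetherianRing A] (z : ℤ) :
    {x : Σ n, (syzygies J n).1 | (x.1 : ℤ) = z}.Finite := by
  refine (Set.finite_range fun t : (syzygies J z.toNat).1 => Sigma.mk z.toNat t).subset ?_
  rintro ⟨m, t⟩ rfl
  exact ⟨t, rfl⟩

end Existence

section TorLength

universe u

variable {ι A B N : Type u} [CommRing A] [CommRing B] [Algebra A B] [AddCommGroup N] [Module A N]
  [Module B N] [IsScalarTower A B N] {J : Ideal A} {K : Ideal B}

variable (A N J) in
/-- The length of `Tor_i^A(N, A ⧸ J)`. For the maximal ideal `J` of a local ring this is the `i`-th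
Betti number of `N`, as an extended natural number. -/
noncomputable def torLength (i : ℕ) : ℕ∞ :=
  Module.length A
    (((Tor (ModuleCat.{u} A) i).obj (ModuleCat.of A N)).obj (ModuleCat.of A (A ⧸ J)))

lemma IsResolution.torLength_eq {deg : ι → ℕ} {d : Module.End A (ι →₀ A)} {i₀ : ι}
    (H : IsResolution deg d i₀ J) (i : ℕ) :
    torLength A N J i = Module.length A (homology (gr deg A N) (coeffEnd A N d) i) :=
  (H.nonempty_tor_linearEquiv i).some.length_eq

lemma torLength_eq_of_bijective (hAB : Function.Bijective (algebraMap A B))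
    (hJK : J = K.comap (algebraMap A B)) (i : ℕ) : torLength B N K i = torLength A N J i := by
  have H := isResolution_syzygyDifferential J
  have H' := H.baseChange_of_bijective hAB hJK
  rw [H.torLength_eq, H'.torLength_eq, length_homology_coeffEnd_coeffEnd hAB.2]

section Hypersurface

variable {f : A} (hAB : Function.Surjective (algebraMap A B)) (f_reg : IsSMulRegular A f)
  (ker_eq : RingHom.ker (algebraMap A B) = Ideal.span {f}) (hJK : J = K.comap (algebraMap A B))
  (hf : f ∈ J * Module.annihilator A N)
include hAB f_reg ker_eq hJK hf

lemma torLength_of_lt_two {i : ℕ} (hi : i < 2) : torLength B N K i = torLength A N J i := by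
  have H := isResolution_syzygyDifferential J
  obtain ⟨deg', e, H', length_eq⟩ := H.exists_shamash hAB f_reg ker_eq hJK hf
  rw [H.torLength_eq, H'.torLength_eq, length_eq, length_homology_eq_zero (z := i - 2)
    (gr_eq_bot_of_neg (by omega)), add_zero]

lemma torLength_add_two (i : ℕ) :
    torLength B N K (i + 2) = torLength A N J (i + 2) + torLength B N K i := by
  have H := isResolution_syzygyDifferential J
  obtain ⟨deg', e, H', length_eq⟩ := H.exists_shamash hAB f_reg ker_eq hJK hf
  rw [H.torLength_eq, H'.torLength_eq, H'.torLength_eq, length_eq, Nat.cast_add, Nat.cast_two,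
    add_sub_cancel_right]

lemma sum_multichoose_mul_torLength (n i : ℕ) :
    ∑ j ∈ Finset.range (i / 2 + 1), (n.multichoose j : ℕ∞) * torLength B N K (i - 2 * j) =
      ∑ j ∈ Finset.range (i / 2 + 1), ((n + 1).multichoose j : ℕ∞) * torLength A N J (i - 2 * j) :=
  sum_multichoose_eq_of_recursion
    (torLength_of_lt_two hAB f_reg ker_eq hJK hf zero_lt_two)
    (torLength_of_lt_two hAB f_reg ker_eq hJK hf one_lt_two)
    (torLength_add_two hAB f_reg ker_eq hJK hf) n i

end Hypersurface

end TorLength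

section RegularSequence

open RingTheory.Sequence

variable {A : Type*} [CommRing A]

lemma isWeaklyRegular_map_mk_of_cons {r : A} {rs : List A}
    (h : IsWeaklyRegular A (r :: rs)) :
    IsWeaklyRegular (A ⧸ Ideal.span {r}) (rs.map (algebraMap A (A ⧸ Ideal.span {r}))) := by
  rw [isWeaklyRegular_map_algebraMap_iff]
  refine (LinearEquiv.isWeaklyRegular_congr (Submodule.quotEquivOfEq _ _ ?_) rs).1
    ((isWeaklyRegular_cons_iff A r rs).1 h).2
  rw [← Submodule.ideal_span_singleton_smul, Ideal.smul_top_eq_map, Algebra.algebraMap_self,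
    Ideal.map_id]
  rfl

lemma map_ofList_cons_mk (r : A) (rs : List A) :
    (Ideal.ofList (r :: rs)).map (algebraMap A (A ⧸ Ideal.span {r})) =
      Ideal.ofList (rs.map (algebraMap A (A ⧸ Ideal.span {r}))) := by
  rw [Ideal.ofList_cons, Ideal.map_sup, Ideal.Quotient.algebraMap_eq, Ideal.map_quotient_self,
    bot_sup_eq, Ideal.map_ofList]

lemma map_comap_mul_annihilator_le {B N : Type*} [CommRing B] [Algebra A B] [AddCommGroup N]
    [Module A N] [Module B N] [IsScalarTower A B N] (K : Ideal B) :
    (K.comap (algebraMap A B) * Module.annihilator A N).map (algebraMap A B) ≤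
      K * Module.annihilator B N := by
  rw [Ideal.map_mul, ← Module.comap_annihilator (R := B) (R₀ := A)]
  exact Ideal.mul_mono Ideal.map_comap_le Ideal.map_comap_le

end RegularSequence

section Betti

lemma IsResolution.smul_homology_eq_zero {ι A N : Type*} [CommRing A] [AddCommGroup N] [Module A N]
    {deg : ι → ℕ} {d : Module.End A (ι →₀ A)} {i₀ : ι} {J : Ideal A} (H : IsResolution deg d i₀ J)
    {a : A} (ha : a ∈ J) {z : ℤ} (x : homology (gr deg A N) (coeffEnd A N d) z) : a • x = 0 := by
  obtain ⟨h, hh, homotopy⟩ := H.exists_homotopy_smul_one ha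
  obtain ⟨⟨v, hdv, hv⟩, rfl⟩ := Submodule.mkQ_surjective _ x
  have homotopy_coeff (v : ι →₀ N) : coeffEnd A N d (coeffEnd A N h v) +
      coeffEnd A N h (coeffEnd A N d v) = a • v := by
    induction v using Finsupp.induction_linear with
    | zero => simp
    | add v w hv hw => rw [smul_add, ← hv, ← hw]; simp only [map_add]; abel
    | single i x =>
      rw [← one_smul A x, ← scale_single (B := A)]
      simp only [coeffEnd_scale, ← LinearMap.add_apply, ← map_add, ← Module.End.mul_apply, homotopy]
      exact congrArg (· x) (map_smul (scale ι A A N) a _)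
  refine (homology_mk_eq_zero (a • _)).2 ⟨coeffEnd A N h v, ?_, ?_⟩
  · exact apply_mem_of_mem_gradedEnd (coeffEnd_mem_gradedEnd hh) hv rfl
  · simpa [LinearMap.mem_ker.1 hdv] using homotopy_coeff v

lemma finite_homology_gr {ι A N : Type*} [CommRing A] [IsNoetherianRing A] [AddCommGroup N]
    [Module A N] [Module.Finite A N] {deg : ι → ℕ} {z : ℤ} (hz : {i | (deg i : ℤ) = z}.Finite)
    (e : Module.End A (ι →₀ N)) : Module.Finite A (homology (gr deg A N) e z) := by
  have := hz.to_subtype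
  have : Module.Finite A (gr deg A N z) := .equiv (Finsupp.supportedEquivFinsupp _).symm
  have : Module.Finite A ↥(LinearMap.ker e ⊓ gr deg A N z) :=
    .of_injective (Submodule.inclusion inf_le_right) (Submodule.inclusion_injective _)
  infer_instance

lemma length_eq_finrank_residueField_tensor {A T : Type*} [CommRing A] [IsLocalRing A]
    [AddCommGroup T] [Module A T] [Module.Finite A T]
    (hT : ∀ a ∈ IsLocalRing.maximalIdeal A, ∀ x : T, a • x = 0) :
    Module.length A T = Module.finrank (IsLocalRing.ResidueField A)
      (IsLocalRing.ResidueField A ⊗[A] T) := by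
  have smul_top : IsLocalRing.maximalIdeal A • (⊤ : Submodule A T) = ⊥ :=
    (Submodule.eq_bot_iff _).2 fun x hx => Submodule.smul_induction_on hx
      (fun a ha x _ => hT a ha x) fun x y hx hy => by rw [hx, hy, add_zero]
  have e : IsLocalRing.ResidueField A ⊗[A] T ≃ₗ[A] T :=
    (TensorProduct.quotTensorEquivQuotSMul T (IsLocalRing.maximalIdeal A)).trans
      (Submodule.quotEquivOfEqBot _ smul_top)
  rw [← e.length_eq, ← Module.length_eq_finrank,
    Module.length_eq_of_surjective (R := IsLocalRing.ResidueField A)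
      IsLocalRing.residue_surjective]

lemma coe_bettiNumber (A M : Type) [CommRing A] [IsLocalRing A] [IsNoetherianRing A]
    [AddCommGroup M] [Module A M] [Module.Finite A M] (i : ℕ) :
    (bettiNumber A M i : ℕ∞) = torLength A M (IsLocalRing.maximalIdeal A) i := by
  let 𝔪 := IsLocalRing.maximalIdeal A
  let T := ((Tor (ModuleCat A) i).obj (.of A M)).obj (.of A (IsLocalRing.ResidueField A))
  have H := isResolution_syzygyDifferential 𝔪
  obtain ⟨e⟩ : Nonempty (T ≃ₗ[A]
      homology (gr Sigma.fst A M) (coeffEnd A M (syzygyDifferential 𝔪)) i) :=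
    H.nonempty_tor_linearEquiv i
  have := finite_homology_gr (finite_setOf_sigma_fst_eq 𝔪 i) (coeffEnd A M (syzygyDifferential 𝔪))
  have : Module.Finite A T := .equiv e.symm
  refine (length_eq_finrank_residueField_tensor fun a ha x => e.injective ?_).symm
  rw [map_smul, map_zero, H.smul_homology_eq_zero ha]

end Betti

end Shamash

open Shamash in
theorem betti_quotient_eq_of_regular_sequence_of_ann_general.{u} {Q R M : Type u} [CommRing Q]
    [CommRing R] [Algebra Q R] [AddCommGroup M] [Module Q M] [Module R M] [IsScalarTower Q R M]
    (K : Ideal R) {rs : List Q}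
    (hreg : RingTheory.Sequence.IsWeaklyRegular Q rs)
    (hQR : Function.Surjective (algebraMap Q R))
    (ker_eq : RingHom.ker (algebraMap Q R) = Ideal.ofList rs)
    (hann : Ideal.ofList rs ≤ K.comap (algebraMap Q R) * Module.annihilator Q M) (i : ℕ) :
    torLength R M K i = ∑ j ∈ Finset.range (i / 2 + 1),
      (rs.length.multichoose j : ℕ∞) * torLength Q M (K.comap (algebraMap Q R)) (i - 2 * j) := by
  induction hn : rs.length generalizing Q i with
  | zero =>
    obtain rfl := List.length_eq_zero_iff.1 hn
    have hQR' := (RingHom.injective_iff_ker_eq_bot _).2 (ker_eq.trans Ideal.ofList_nil)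
    rw [Finset.sum_range_succ', Finset.sum_eq_zero fun j _ => by simp]
    simpa using torLength_eq_of_bijective ⟨hQR', hQR⟩ rfl i
  | succ n ih =>
    obtain ⟨r, rs, rfl⟩ := List.exists_cons_of_length_eq_add_one hn
    have span_le : Ideal.span {r} ≤ Ideal.ofList (r :: rs) :=
      le_sup_left.trans_eq (Ideal.ofList_cons r rs).symm
    let Q' := Q ⧸ Ideal.span {r}
    let : Algebra Q' R := (Ideal.Quotient.lift (Ideal.span {r}) (algebraMap Q R) fun a ha =>
      RingHom.mem_ker.1 (ker_eq.ge (span_le ha))).toAlgebra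
    let : Module Q' M := Module.compHom M (algebraMap Q' R)
    have : IsScalarTower Q Q' R := .of_algebraMap_eq fun _ => rfl
    have : IsScalarTower Q' R M := .of_algebraMap_smul fun _ _ => rfl
    have : IsScalarTower Q Q' M := .of_algebraMap_smul fun a x => algebraMap_smul R a x
    have ker_eq' : RingHom.ker (algebraMap Q' R) = Ideal.ofList (rs.map (algebraMap Q Q')) :=
      (Ideal.ker_quotient_lift _ _).trans ((congrArg _ ker_eq).trans (map_ofList_cons_mk r rs))
    have hann' : Ideal.ofList (rs.map (algebraMap Q Q')) ≤
        K.comap (algebraMap Q' R) * Module.annihilator Q' M :=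
      (map_ofList_cons_mk r rs).ge.trans <| (Ideal.map_mono hann).trans <|
        map_comap_mul_annihilator_le (K.comap (algebraMap Q' R))
    have hr : r ∈ K.comap (algebraMap Q R) * Module.annihilator Q M :=
      hann (span_le (Ideal.mem_span_singleton_self r))
    have comap_comap :
        K.comap (algebraMap Q R) = (K.comap (algebraMap Q' R)).comap (algebraMap Q Q') := rfl
    rw [ih (isWeaklyRegular_map_mk_of_cons hreg) (.of_comp (g := algebraMap Q Q') hQR) ker_eq'
      hann' i (by simpa using hn)]
    exact sum_multichoose_mul_torLength (A := Q) (B := Q') Ideal.Quotient.mk_surjective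
      ((RingTheory.Sequence.isWeaklyRegular_cons_iff Q r rs).1 hreg).1 Ideal.mk_ker comap_comap hr
      n i

/-- **Shamash's equality.** If `f₁, …, fₙ` is a `Q`-regular sequence contained in
the maximal ideal of a Noetherian local ring `Q`, `I = (f₁, …, fₙ)`, `R = Q/I`, and
`M` is a finitely generated `R`-module with `I ⊆ m·ann_Q(M)`, then for all `i ≥ 0`,
`β_i^R(M) = ∑_{2j ≤ i} C(n−1+j, n−1) · β_{i−2j}^Q(M)`, i.e.
`P_M^R(t) = P_M^Q(t)·(1−t²)^{−n}`. -/
theorem betti_quotient_eq_of_regular_sequence_of_ann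
    (Q : Type) [CommRing Q] [IsNoetherianRing Q] [IsLocalRing Q]
    (n : ℕ) (f : Fin n → Q)
    (hreg : RingTheory.Sequence.IsRegular Q (List.ofFn f))
    (hfm : ∀ j, f j ∈ IsLocalRing.maximalIdeal Q)
    (I : Ideal Q) (hI : I = Ideal.span (Set.range f))
    [IsLocalRing (Q ⧸ I)]
    (M : Type) [AddCommGroup M] [Module Q M] [Module (Q ⧸ I) M]
    [IsScalarTower Q (Q ⧸ I) M] [Module.Finite (Q ⧸ I) M]
    (hann : I ≤ IsLocalRing.maximalIdeal Q * Module.annihilator Q M)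
    (i : ℕ) :
    bettiNumber (Q ⧸ I) M i =
      ∑ j ∈ Finset.range (i / 2 + 1),
        Nat.choose (n + j - 1) j * bettiNumber Q M (i - 2 * j) := by
  have : Module.Finite Q M := .trans (Q ⧸ I) M
  have ofList_eq : Ideal.ofList (List.ofFn f) = I := by
    simp only [hI, Ideal.ofList, List.mem_ofFn', Set.ofPred_mem_eq]
  have comap_eq : (IsLocalRing.maximalIdeal (Q ⧸ I)).comap (algebraMap Q (Q ⧸ I)) =
      IsLocalRing.maximalIdeal Q :=
    IsLocalRing.eq_maximalIdeal
      (Ideal.comap_isMaximal_of_surjective _ Ideal.Quotient.mk_surjective)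
  have general := betti_quotient_eq_of_regular_sequence_of_ann_general
    (IsLocalRing.maximalIdeal (Q ⧸ I)) (M := M) hreg.toIsWeaklyRegular Ideal.Quotient.mk_surjective
    (Ideal.mk_ker.trans ofList_eq.symm) (by rwa [ofList_eq, comap_eq]) i
  simp only [comap_eq, List.length_ofFn, ← Shamash.coe_bettiNumber, Nat.multichoose_eq] at general
  exact_mod_cast general
end

section
/- Let (Q, m, k) be a commutative Noetherian local ring, let f_1, …, f_n be a Q-regular sequence contained in m, set I = (f_1, …, f_n) and R = Q/I. If I ∩ m² ⊆ m·I (equivalently, f_1, …, f_n can be extended to a minimal generating set of m), then for every finitely generated R-module M and every integer i ≥ 0 one has the equality β_i^Q(M) = Σ_{j=0}^{min(n,i)} C(n, j) · β_{i−j}^R(M), where C(n,j) denotes the binomial coefficient. (Equivalently, P_M^Q(t) = P_M^R(t)·(1+t)^n.) -/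
open CategoryTheory TensorProduct

/-!
Let `f ∈ 𝔪 ∖ 𝔪²` be regular and `R = Q ⧸ (f)`. Apply `R ⊗ -` to `0 → 𝔪_Q → Q → k → 0`. The class
of `f` is part of a basis of `𝔪_Q / 𝔪_Q²`, so it splits off and `R ⊗ 𝔪_Q ≅ k ⊕ 𝔪_R`; and `f` is
regular on `𝔪_Q`, so a free resolution of `𝔪_Q` over `Q` stays a resolution after base change.
Dimension shifting over `Q` and over `R` then gives
`Tor^Q_{n+1}(M, k) ≅ Tor^R_n(M, k) ⊕ Tor^R_{n+1}(M, k)`, that is, `P_M^Q = (1 + t) P_M^R`.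
The condition `I ∩ 𝔪² ⊆ 𝔪 I` passes to initial segments of a regular sequence and keeps each `f_i`
outside the square of the maximal ideal modulo its predecessors, so the theorem follows by
induction on `n`.
-/

section DerivedFunctors

open CategoryTheory.Limits

universe v₁ v₂ v₃ u₁ u₂ u₃

variable {C : Type u₁} [Category.{v₁} C] [Abelian C]
variable {D : Type u₂} [Category.{v₂} D] [Abelian D]
variable {E : Type u₃} [Category.{v₃} E] [Abelian E]

/-- The augmentation `P₀ ⟶ Z` of a projective resolution, with codomain `Z` itself rather than the
degree `0` term of the complex concentrated in degree `0`. -/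
noncomputable def augmentation {Z : C} (P : ProjectiveResolution Z) : P.complex.X 0 ⟶ Z :=
  P.π.f 0

instance {Z : C} (P : ProjectiveResolution Z) : Epi (augmentation P) :=
  inferInstanceAs (Epi (P.π.f 0))

lemma d_comp_augmentation {Z : C} (P : ProjectiveResolution Z) :
    P.complex.d 1 0 ≫ augmentation P = 0 :=
  P.complex_d_comp_π_f_zero

lemma d_comp_augmentation_comp {Y Z : C} (P : ProjectiveResolution Z) (f : Z ⟶ Y) :
    P.complex.d 1 0 ≫ augmentation P ≫ f = 0 := by
  rw [← Category.assoc, d_comp_augmentation, zero_comp]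

lemma map_d_comp_map_augmentation (F : C ⥤ D) [F.PreservesZeroMorphisms] {Z : C}
    (P : ProjectiveResolution Z) : F.map (P.complex.d 1 0) ≫ F.map (augmentation P) = 0 := by
  rw [← F.map_comp, d_comp_augmentation, F.map_zero]

/-- A complex of projectives that is exact in positive degrees is a projective resolution of the
cokernel of its last differential. -/
noncomputable def projectiveResolutionOfExact (K : ChainComplex C ℕ)
    (hK : ∀ n, Projective (K.X n)) (exact_succ : ∀ n, K.ExactAt (n + 1)) {Z : C} {ε : K.X 0 ⟶ Z}
    {w : K.d 1 0 ≫ ε = 0} (hε : IsColimit (CokernelCofork.ofπ ε w)) :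
    ProjectiveResolution Z where
  complex := K
  projective := hK
  π := (ChainComplex.toSingle₀Equiv _ _).symm ⟨ε, w⟩
  quasiIso := ⟨fun n => by
    cases n with
    | zero =>
      rw [ChainComplex.quasiIsoAt₀_iff, ShortComplex.quasiIso_iff_of_zeros']
      · refine (ShortComplex.exact_and_epi_g_iff_of_iso
          (S₂ := ShortComplex.mk _ _ w) ?_).2
            ((ShortComplex.exact_and_epi_g_iff_g_is_cokernel _).2 ⟨hε⟩)
        refine ShortComplex.isoMk (Iso.refl _) (Iso.refl _) (Iso.refl _) ?_ ?_
        · exact (Category.id_comp _).trans (Category.comp_id _).symm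
        · refine (Category.id_comp _).trans (Eq.trans ?_ (Category.comp_id _).symm)
          exact (ChainComplex.toSingle₀Equiv_symm_apply_f_zero ε w).symm
      · exact K.shape _ _ (by simp)
      all_goals rfl
    | succ n =>
      rw [quasiIsoAt_iff_exactAt' _ _ (ChainComplex.exactAt_succ_single_obj _ _)]
      exact exact_succ n⟩

lemma exact_epi_comp (S : ShortComplex C) (hS : S.Exact) {X : C} (p : X ⟶ S.X₁) [Epi p] :
    (ShortComplex.mk (p ≫ S.f) S.g (by simp)).Exact := by
  let φ : ShortComplex.mk (p ≫ S.f) S.g (by simp) ⟶ S := { τ₁ := p, τ₂ := 𝟙 _, τ₃ := 𝟙 _ }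
  have : Epi φ.τ₁ := ‹_›
  have : IsIso φ.τ₂ := inferInstanceAs (IsIso (𝟙 _))
  have : Mono φ.τ₃ := inferInstanceAs (Mono (𝟙 _))
  exact (ShortComplex.exact_iff_of_epi_of_isIso_of_mono φ).2 hS

lemma exact_comp_mono (S : ShortComplex C) (hS : S.Exact) {X : C} (i : S.X₃ ⟶ X) [Mono i] :
    (ShortComplex.mk S.f (S.g ≫ i) (by simp)).Exact := by
  let φ : S ⟶ ShortComplex.mk S.f (S.g ≫ i) (by simp) := { τ₁ := 𝟙 _, τ₂ := 𝟙 _, τ₃ := i }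
  have : Epi φ.τ₁ := inferInstanceAs (Epi (𝟙 _))
  have : IsIso φ.τ₂ := inferInstanceAs (IsIso (𝟙 _))
  have : Mono φ.τ₃ := ‹_›
  exact (ShortComplex.exact_iff_of_epi_of_isIso_of_mono φ).1 hS

/-- If `p` is a cokernel of `d`, then the homology of `d` followed by `p ≫ f` is the kernel of
`f`. -/
noncomputable def homologyIsoKernelOfIsCokernel {T : ShortComplex C} {Q : C} {p : T.X₂ ⟶ Q}
    {w : T.f ≫ p = 0} (hp : IsColimit (CokernelCofork.ofπ p w)) (f : Q ⟶ T.X₃)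
    (hf : p ≫ f = T.g) : T.homology ≅ kernel f :=
  have desc_eq : hp.desc (CokernelCofork.ofπ T.g T.zero) = f :=
    Cofork.IsColimit.hom_ext hp ((hp.fac _ WalkingParallelPair.one).trans hf.symm)
  ShortComplex.RightHomologyData.homologyIso
    { Q := Q
      H := kernel f
      p := p
      ι := kernel.ι f
      wp := w
      hp := hp
      wι := by rw [desc_eq, kernel.condition]
      hι := KernelFork.IsLimit.ofι _ _
        (fun k hk => kernel.lift f k (by rwa [desc_eq] at hk))
        (fun _ _ => kernel.lift_ι _ _ _)
        (fun _ _ _ h => (cancel_mono (kernel.ι f)).1 (h.trans (kernel.lift_ι _ _ _).symm)) }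

section DimensionShifting

variable {S : ShortComplex C}

/-- Splicing a projective resolution of `S.X₁` with a short exact sequence `S` whose middle term is
projective gives a projective resolution of `S.X₃`. -/
noncomputable def splicedResolution (hS : S.ShortExact) [hP : Projective S.X₂]
    (P : ProjectiveResolution S.X₁) : ProjectiveResolution S.X₃ :=
  have := hS.mono_f
  have := hS.epi_g
  projectiveResolutionOfExact
    (ChainComplex.augment P.complex (augmentation P ≫ S.f) (d_comp_augmentation_comp P S.f))
    (fun n => match n with
      | 0 => hP
      | n + 1 => P.projective n)
    (fun n => by
      rw [HomologicalComplex.exactAt_iff' _ (n + 1 + 1) (n + 1) n (by simp) (by simp)]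
      exact match n with
      | 0 => exact_comp_mono (ShortComplex.mk _ _ (d_comp_augmentation P)) P.exact₀ S.f
      | n + 1 => P.exact_succ n)
    (exact_epi_comp S hS.exact (augmentation P)).gIsCokernel

variable [EnoughProjectives C] (F : C ⥤ D) [F.Additive]

/-- Dimension shifting in degrees at least two. -/
noncomputable def leftDerivedShift (hS : S.ShortExact) [Projective S.X₂] (n : ℕ) :
    (F.leftDerived (n + 2)).obj S.X₃ ≅ (F.leftDerived (n + 1)).obj S.X₁ := by
  let P := ProjectiveResolution.of S.X₁
  let K := (F.mapHomologicalComplex _).obj P.complex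
  let K' := (F.mapHomologicalComplex _).obj (splicedResolution hS P).complex
  have homologyIso : K'.homology (n + 2) ≅ K.homology (n + 1) :=
    ShortComplex.homologyMapIso (K'.isoSc' (n + 3) (n + 2) (n + 1) (by simp) (by simp)) ≪≫
      (ShortComplex.homologyMapIso (K.isoSc' (n + 2) (n + 1) n (by simp) (by simp))).symm
  exact (splicedResolution hS P).isoLeftDerivedObj F (n + 2) ≪≫ homologyIso ≪≫
    (P.isoLeftDerivedObj F (n + 1)).symm

/-- Dimension shifting from degree one to degree zero. -/
noncomputable def leftDerivedOneIsoKernel [PreservesFiniteColimits F] (hS : S.ShortExact)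
    [Projective S.X₂] : (F.leftDerived 1).obj S.X₃ ≅ kernel (F.map S.f) := by
  let P := ProjectiveResolution.of S.X₁
  let K := (F.mapHomologicalComplex _).obj (splicedResolution hS P).complex
  have isColimit : IsColimit
      (CokernelCofork.ofπ (F.map (augmentation P)) (map_d_comp_map_augmentation F P)) :=
    CokernelCofork.mapIsColimit _ P.isColimitCokernelCofork F
  have homologyIso : (K.sc' 2 1 0).homology ≅ kernel (F.map S.f) :=
    homologyIsoKernelOfIsCokernel (T := K.sc' 2 1 0) isColimit (F.map S.f) (F.map_comp _ _).symm
  exact (splicedResolution hS P).isoLeftDerivedObj F 1 ≪≫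
    ShortComplex.homologyMapIso (K.isoSc' 2 1 0 (by simp) (by simp)) ≪≫ homologyIso

end DimensionShifting

instance (F : C ⥤ D) [F.Additive] [EnoughProjectives C] (n : ℕ) :
    (F.leftDerived n).Additive where
  map_add {X Y f g} := by
    let P := ProjectiveResolution.of X
    let Q := ProjectiveResolution.of Y
    let φ := ProjectiveResolution.lift f P Q
    let ψ := ProjectiveResolution.lift g P Q
    have hφ : φ ≫ Q.π = P.π ≫ (ChainComplex.single₀ C).map f :=
      ProjectiveResolution.lift_commutes f P Q
    have hψ : ψ ≫ Q.π = P.π ≫ (ChainComplex.single₀ C).map g :=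
      ProjectiveResolution.lift_commutes g P Q
    have hφψ : (φ + ψ) ≫ Q.π = P.π ≫ (ChainComplex.single₀ C).map (f + g) := by
      rw [Preadditive.add_comp, hφ, hψ, ← Preadditive.comp_add, ← Functor.map_add]
    rw [F.leftDerived_map_eq n f φ hφ, F.leftDerived_map_eq n g ψ hψ,
      F.leftDerived_map_eq n (f + g) (φ + ψ) hφψ, Functor.map_add, Preadditive.add_comp,
      Preadditive.comp_add]

/-- Exact functors commute with left derived functors. -/
noncomputable def leftDerivedCompExactIso [EnoughProjectives C] (F : C ⥤ D) [F.Additive]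
    (G : D ⥤ E) [G.Additive] [G.PreservesHomology] (X : C) (n : ℕ) :
    ((F ⋙ G).leftDerived n).obj X ≅ G.obj ((F.leftDerived n).obj X) :=
  let P := ProjectiveResolution.of X
  P.isoLeftDerivedObj (F ⋙ G) n ≪≫
    (((F.mapHomologicalComplex _).obj P.complex).sc n).mapHomologyIso G ≪≫
    G.mapIso (P.isoLeftDerivedObj F n).symm

/-- Naturally isomorphic functors have isomorphic left derived functors. -/
noncomputable def leftDerivedCongr [EnoughProjectives C] {F G : C ⥤ D} [F.Additive] [G.Additive]
    (e : F ≅ G) (n : ℕ) : F.leftDerived n ≅ G.leftDerived n where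
  hom := NatTrans.leftDerived e.hom n
  inv := NatTrans.leftDerived e.inv n
  hom_inv_id := by
    rw [← NatTrans.leftDerived_comp, e.hom_inv_id, NatTrans.leftDerived_id]
  inv_hom_id := by
    rw [← NatTrans.leftDerived_comp, e.inv_hom_id, NatTrans.leftDerived_id]

/-- The kernel of the projection `A ⊞ B ⟶ B` followed by `f : B ⟶ Y` is `A ⊞ kernel f`. -/
noncomputable def kernelBiprodSndCompIso (A : D) {B Y : D} (f : B ⟶ Y) :
    kernel ((biprod.snd : A ⊞ B ⟶ B) ≫ f) ≅ A ⊞ kernel f where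
  hom := biprod.lift (kernel.ι _ ≫ biprod.fst) (kernel.lift f (kernel.ι _ ≫ biprod.snd) (by
    rw [Category.assoc, kernel.condition]))
  inv := kernel.lift _ (biprod.map (𝟙 A) (kernel.ι f)) (by simp)
  hom_inv_id := by
    ext <;> simp
  inv_hom_id := by
    ext <;> simp

section Comp

variable [EnoughProjectives C] (F : C ⥤ D) [F.Additive]
  [PreservesFiniteColimits F] [F.PreservesProjectiveObjects] {X : C}

/-- A right exact functor preserving projectives sends a projective resolution of an acyclic object
to a projective resolution. -/
noncomputable def mapResolution (hX : ∀ n, IsZero ((F.leftDerived (n + 1)).obj X))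
    (P : ProjectiveResolution X) : ProjectiveResolution (F.obj X) := by
  have isColimit : IsColimit
      (CokernelCofork.ofπ (F.map (augmentation P)) (map_d_comp_map_augmentation F P)) :=
    CokernelCofork.mapIsColimit _ P.isColimitCokernelCofork F
  exact projectiveResolutionOfExact ((F.mapHomologicalComplex _).obj P.complex)
    (fun n => F.projective_obj (P.complex.X n))
    (fun n => (HomologicalComplex.exactAt_iff_isZero_homology _ _).2
      ((hX n).of_iso (P.isoLeftDerivedObj F (n + 1)).symm))
    isColimit

variable [EnoughProjectives D] (G : D ⥤ E) [G.Additive]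

/-- The degenerate Grothendieck spectral sequence of `F ⋙ G` at an `F`-acyclic object. -/
noncomputable def leftDerivedCompIso (hX : ∀ n, IsZero ((F.leftDerived (n + 1)).obj X)) (n : ℕ) :
    ((F ⋙ G).leftDerived n).obj X ≅ (G.leftDerived n).obj (F.obj X) := by
  let P := ProjectiveResolution.of X
  exact P.isoLeftDerivedObj (F ⋙ G) n ≪≫ ((mapResolution F hX P).isoLeftDerivedObj G n).symm

variable {S : ShortComplex C} {T : ShortComplex D} [Projective S.X₂] [Projective T.X₂] {A : D}

theorem nonempty_leftDerived_comp_succ_iso [PreservesFiniteColimits G] (hS : S.ShortExact)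
    (hT : T.ShortExact) (hS₁ : ∀ n, IsZero ((F.leftDerived (n + 1)).obj S.X₁))
    (e₁ : F.obj S.X₁ ≅ A ⊞ T.X₁) (e₂ : F.obj S.X₂ ≅ T.X₂)
    (comm : F.map S.f ≫ e₂.hom = e₁.hom ≫ biprod.snd ≫ T.f) (n : ℕ) :
    Nonempty (((F ⋙ G).leftDerived (n + 1)).obj S.X₃ ≅
      (G.leftDerived n).obj A ⊞ (G.leftDerived (n + 1)).obj T.X₃) := by
  have := preservesBinaryBiproducts_of_preservesBiproducts G
  have := preservesBinaryBiproducts_of_preservesBiproducts (G.leftDerived n)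
  cases n with
  | zero =>
    have square : G.map (F.map S.f) ≫ G.map e₂.hom =
        (G.mapIso e₁ ≪≫ G.mapBiprod A T.X₁).hom ≫ biprod.snd ≫ G.map T.f := by
      rw [← G.map_comp, comm, Iso.trans_hom, Functor.mapBiprod_hom, Category.assoc,
        biprod.lift_snd_assoc, Functor.mapIso_hom, G.map_comp, G.map_comp]
    exact ⟨leftDerivedOneIsoKernel (F ⋙ G) hS ≪≫
      kernel.mapIso (G.map (F.map S.f)) (biprod.snd ≫ G.map T.f) _ (G.mapIso e₂) square ≪≫
      kernelBiprodSndCompIso _ (G.map T.f) ≪≫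
      biprod.mapIso (G.leftDerivedZeroIsoSelf.symm.app A) (leftDerivedOneIsoKernel G hT).symm⟩
  | succ n =>
    exact ⟨leftDerivedShift (F ⋙ G) hS n ≪≫ leftDerivedCompIso F G hS₁ (n + 1) ≪≫
      (G.leftDerived (n + 1)).mapIso e₁ ≪≫ (G.leftDerived (n + 1)).mapBiprod A T.X₁ ≪≫
      biprod.mapIso (Iso.refl _) (leftDerivedShift G hT n).symm⟩

end Comp

theorem leftDerived_succ_induction [EnoughProjectives C] (F : C ⥤ D) [F.Additive]
    [PreservesFiniteColimits F] (resolvable : ObjectProperty C) (target : ObjectProperty D)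
    [target.IsClosedUnderIsomorphisms]
    (syzygy : ∀ X, resolvable X → ∃ S : ShortComplex C, S.X₃ = X ∧ S.ShortExact ∧ Projective S.X₂ ∧
      resolvable S.X₁ ∧ target (kernel (F.map S.f))) (n : ℕ) {X : C} (hX : resolvable X) :
    target ((F.leftDerived (n + 1)).obj X) := by
  induction n generalizing X with
  | zero =>
    obtain ⟨S, rfl, hS, _, -, hW⟩ := syzygy X hX
    exact target.prop_of_iso (leftDerivedOneIsoKernel F hS).symm hW
  | succ n ih =>
    obtain ⟨S, rfl, hS, _, hK, -⟩ := syzygy X hX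
    exact target.prop_of_iso (leftDerivedShift F hS n).symm (ih hK)

end DerivedFunctors

section BaseChange

universe u

variable (Q R : Type u) [CommRing Q] [CommRing R] [Algebra Q R]

/-- The base change functor `R ⊗[Q] -`. Unlike `ModuleCat.extendScalars` it uses the given
`Q`-algebra structure on `R` instead of the one recovered from the ring homomorphism. -/
noncomputable def baseChangeFunctor : ModuleCat.{u} Q ⥤ ModuleCat.{u} R where
  obj N := ModuleCat.of R (R ⊗[Q] N)
  map φ := ModuleCat.ofHom (φ.hom.baseChange R)
  map_id N := by
    ext : 1
    exact LinearMap.baseChange_id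
  map_comp φ ψ := by
    ext : 1
    exact LinearMap.baseChange_comp φ.hom ψ.hom

instance : (baseChangeFunctor Q R).Additive where
  map_add {_ _ φ ψ} := by
    ext : 1
    exact LinearMap.baseChange_add φ.hom ψ.hom

instance : (baseChangeFunctor Q R).PreservesProjectiveObjects where
  projective_obj {P} hP := by
    have : Module.Projective Q P := (IsProjective.iff_projective P).2 hP
    exact (IsProjective.iff_projective (R ⊗[Q] P)).1 inferInstance

instance : Limits.PreservesFiniteColimits (baseChangeFunctor Q R) := by
  rw [Functor.preservesFiniteColimits_iff_forall_exact_map_and_epi]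
  intro S hS
  have surjective_g : Function.Surjective S.g := (ModuleCat.epi_iff_surjective _).1 hS.epi_g
  refine ⟨(ShortComplex.ShortExact.moduleCat_exact_iff_function_exact _).2 ?_,
    (ModuleCat.epi_iff_surjective _).2 (LinearMap.lTensor_surjective R surjective_g)⟩
  exact lTensor_exact R
    ((ShortComplex.ShortExact.moduleCat_exact_iff_function_exact S).1 hS.exact) surjective_g

instance (A : Type u) [CommRing A] (M : ModuleCat.{u} A) : Limits.PreservesFiniteColimits
    ((MonoidalCategory.tensoringLeft (ModuleCat A)).obj M) :=
  inferInstanceAs (Limits.PreservesFiniteColimits (MonoidalCategory.tensorLeft M))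

variable {Q R}
variable (surj : Function.Surjective (algebraMap Q R))

section

variable {N N' : Type*} [AddCommGroup N] [Module Q N] [AddCommGroup N'] [Module Q N'] [Module R N']
  [IsScalarTower Q R N']

include surj in
lemma one_tmul_eq_zero_iff (x : N) :
    (1 : R) ⊗ₜ[Q] x = 0 ↔ x ∈ RingHom.ker (algebraMap Q R) • (⊤ : Submodule Q N) := by
  let e : (Q ⧸ RingHom.ker (Algebra.ofId Q R)) ≃ₐ[Q] R :=
    Ideal.quotientKerAlgEquivOfSurjective (f := Algebra.ofId Q R) surj
  have map_one_tmul : e.toLinearEquiv.rTensor N (1 ⊗ₜ x) = 1 ⊗ₜ x := by simp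
  rw [← map_one_tmul, LinearEquiv.map_eq_zero_iff]
  exact SetLike.ext_iff.1
    (LinearMap.ker_tensorProductMk N (I := RingHom.ker (Algebra.ofId Q R))) x

/-- If `Q → R` is surjective with kernel `I`, then a surjection `N → N'` onto an `R`-module with
kernel inside `I N` exhibits `N'` as `R ⊗[Q] N`. -/
noncomputable def baseChangeEquivOfSurjective {φ : N →ₗ[Q] N'} (hφ : Function.Surjective φ)
    (ker_le : LinearMap.ker φ ≤ RingHom.ker (algebraMap Q R) • ⊤) : R ⊗[Q] N ≃ₗ[R] N' :=
  LinearEquiv.ofBijective (φ.liftBaseChange R) <| by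
    refine ⟨(injective_iff_map_eq_zero _).2 fun y hy => ?_, fun y => ?_⟩
    · obtain ⟨x, rfl⟩ := TensorProduct.mk_surjective Q N R surj y
      rw [TensorProduct.mk_apply, LinearMap.liftBaseChange_one_tmul] at hy
      exact (one_tmul_eq_zero_iff surj x).2 (ker_le hy)
    · obtain ⟨x, rfl⟩ := hφ y
      exact ⟨1 ⊗ₜ x, LinearMap.liftBaseChange_one_tmul R φ x⟩

include surj in
lemma lTensor_ker_subtype_injective_of_isSMulRegular {f : Q}
    (ker_eq : RingHom.ker (algebraMap Q R) = Ideal.span {f}) {X : Type*} [AddCommGroup X]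
    [Module Q X] (hX : IsSMulRegular X f) (p : N →ₗ[Q] X) :
    Function.Injective ((LinearMap.ker p).subtype.lTensor R) := by
  refine (injective_iff_map_eq_zero _).2 fun y hy => ?_
  obtain ⟨x, rfl⟩ := TensorProduct.mk_surjective Q _ R surj y
  rw [TensorProduct.mk_apply, LinearMap.lTensor_tmul, one_tmul_eq_zero_iff surj, ker_eq,
    Submodule.ideal_span_singleton_smul, Submodule.mem_smul_pointwise_iff_exists] at hy
  obtain ⟨z, -, hz⟩ := hy
  have hpz : p z = 0 := hX (by simp only [← map_smul, hz, smul_zero]; exact x.2)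
  rw [TensorProduct.mk_apply, one_tmul_eq_zero_iff surj, ker_eq,
    Submodule.ideal_span_singleton_smul, Submodule.mem_smul_pointwise_iff_exists]
  exact ⟨⟨z, hpz⟩, trivial, Subtype.ext hz⟩

end

lemma isZero_kernel_baseChangeFunctor_map {N N' : Type u} [AddCommGroup N] [Module Q N]
    [AddCommGroup N'] [Module Q N'] {φ : N →ₗ[Q] N'} (hφ : Function.Injective (φ.lTensor R)) :
    Limits.IsZero (Limits.kernel ((baseChangeFunctor Q R).map (ModuleCat.ofHom φ))) := by
  have : Mono ((baseChangeFunctor Q R).map (ModuleCat.ofHom φ)) :=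
    (ModuleCat.mono_iff_injective _).2 hφ
  exact Limits.isZero_kernel_of_mono _

theorem isZero_leftDerived_baseChangeFunctor_of_flat [Module.Flat Q R] (N : ModuleCat.{u} Q)
    (n : ℕ) : Limits.IsZero (((baseChangeFunctor Q R).leftDerived (n + 1)).obj N) :=
  leftDerived_succ_induction (baseChangeFunctor Q R) ⊤ Limits.IsZero
    (fun X _ => ⟨(Finsupp.linearCombination Q (id : X → X)).shortComplexKer, rfl,
      LinearMap.shortExact_shortComplexKer (Finsupp.linearCombination_id_surjective Q X),
      (IsProjective.iff_projective _).1 inferInstance, trivial,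
      isZero_kernel_baseChangeFunctor_map
        (Module.Flat.lTensor_preserves_injective_linearMap _ (Submodule.injective_subtype _))⟩)
    n trivial

include surj in
theorem isZero_leftDerived_baseChangeFunctor_of_isSMulRegular {f : Q}
    (ker_eq : RingHom.ker (algebraMap Q R) = Ideal.span {f}) (hf : IsSMulRegular Q f)
    {N : ModuleCat.{u} Q} (hN : IsSMulRegular N f) (n : ℕ) :
    Limits.IsZero (((baseChangeFunctor Q R).leftDerived (n + 1)).obj N) :=
  leftDerived_succ_induction (baseChangeFunctor Q R) (fun X => IsSMulRegular X f) Limits.IsZero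
    (fun X hX => ⟨(Finsupp.linearCombination Q (id : X → X)).shortComplexKer, rfl,
      LinearMap.shortExact_shortComplexKer (Finsupp.linearCombination_id_surjective Q X),
      (IsProjective.iff_projective _).1 inferInstance,
      (IsSMulRegular.finsupp hf).submodule _ _,
      isZero_kernel_baseChangeFunctor_map
        (lTensor_ker_subtype_injective_of_isSMulRegular surj ker_eq hX _)⟩)
    n hN

end BaseChange

section TorComparison

open MonoidalCategory

universe u

variable (Q R : Type u) [CommRing Q] [CommRing R] [Algebra Q R]
variable (M : Type u) [AddCommGroup M] [Module Q M] [Module R M] [IsScalarTower Q R M]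

/-- `M ⊗[Q] N ≅ M ⊗[R] (R ⊗[Q] N)`, naturally in the `Q`-module `N`. -/
noncomputable def tensoringLeftIsoBaseChange :
    (tensoringLeft (ModuleCat Q)).obj (ModuleCat.of Q M) ≅
      (baseChangeFunctor Q R ⋙ (tensoringLeft (ModuleCat R)).obj (ModuleCat.of R M)) ⋙
        ModuleCat.restrictScalars (algebraMap Q R) :=
  let e (N : ModuleCat Q) := (AlgebraTensorModule.cancelBaseChange Q R R M N).symm
  let eQ (N : ModuleCat Q) : M ⊗[Q] N ≃ₗ[Q]
      (ModuleCat.restrictScalars (algebraMap Q R)).obj (ModuleCat.of R (M ⊗[R] (R ⊗[Q] N))) :=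
    { e N with
      map_smul' q x := by
        rw [← algebraMap_smul R q x]
        exact map_smul (e N) _ x }
  NatIso.ofComponents (fun N => (eQ N).toModuleIso)
    fun φ => ModuleCat.hom_ext (TensorProduct.ext' fun _ _ => rfl)

/-- Tor over `Q` of an `R`-module is computed by the derived functors of base change to `R` followed
by the tensor product over `R`. -/
noncomputable def torIsoLeftDerivedBaseChange (N : ModuleCat.{u} Q) (n : ℕ) :
    ((Tor (ModuleCat Q) n).obj (ModuleCat.of Q M)).obj N ≅
      (ModuleCat.restrictScalars (algebraMap Q R)).obj
        (((baseChangeFunctor Q R ⋙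
          (tensoringLeft (ModuleCat R)).obj (ModuleCat.of R M)).leftDerived n).obj N) :=
  (leftDerivedCongr (tensoringLeftIsoBaseChange Q R M) n).app N ≪≫
    leftDerivedCompExactIso _ _ N n

end TorComparison

section Finiteness

universe u
variable {A : Type u} [CommRing A]

instance : (ModuleCat.isFG.{u} A).IsClosedUnderIsomorphisms where
  of_iso e hX :=
    have : Module.Finite A _ := hX
    Module.Finite.equiv e.toLinearEquiv

theorem finite_tor [IsNoetherianRing A] (M N : Type u) [AddCommGroup M] [Module A M]
    [Module.Finite A M] [AddCommGroup N] [Module A N] [Module.Finite A N] (n : ℕ) :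
    Module.Finite A (((Tor (ModuleCat A) n).obj (ModuleCat.of A M)).obj (ModuleCat.of A N)) := by
  let G := (MonoidalCategory.tensoringLeft (ModuleCat A)).obj (ModuleCat.of A M)
  have finite_tensor (X : ModuleCat A) (hX : ModuleCat.isFG A X) : Module.Finite A (G.obj X) := by
    have : Module.Finite A X := hX
    exact inferInstanceAs (Module.Finite A (M ⊗[A] X))
  cases n with
  | zero =>
    have := finite_tensor (ModuleCat.of A N) ‹_›
    exact Module.Finite.equiv (G.leftDerivedZeroIsoSelf.symm.app (ModuleCat.of A N)).toLinearEquiv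
  | succ n =>
    refine leftDerived_succ_induction G (ModuleCat.isFG A) (ModuleCat.isFG A) (fun X hX => ?_) n
      (X := ModuleCat.of A N) ‹_›
    have : Module.Finite A X := hX
    obtain ⟨r, p, hp⟩ := Module.Finite.exists_fin' A X
    have := finite_tensor (ModuleCat.of A (LinearMap.ker p)) (inferInstanceAs (Module.Finite A _))
    exact ⟨p.shortComplexKer, rfl, LinearMap.shortExact_shortComplexKer hp,
      (IsProjective.iff_projective _).1 inferInstance, inferInstanceAs (Module.Finite A _),
      Module.Finite.equiv (ModuleCat.kernelIsoKer _).symm.toLinearEquiv⟩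

end Finiteness

section LocalRings

open IsLocalRing

universe u

variable (Q R : Type u) [CommRing Q] [IsLocalRing Q] [CommRing R] [IsLocalRing R] [Algebra Q R]

/-- The short exact sequence `0 → 𝔪 → Q → k → 0` of a local ring `Q`. -/
noncomputable abbrev residueFieldSequence : ShortComplex (ModuleCat.{u} Q) :=
  .mk (ModuleCat.ofHom (maximalIdeal Q).subtype)
    (ModuleCat.ofHom (Algebra.linearMap Q (ResidueField Q)))
    (ModuleCat.hom_ext <| LinearMap.ext fun x => (residue_eq_zero_iff (x : Q)).2 x.2)

instance : Projective (residueFieldSequence Q).X₂ :=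
  inferInstanceAs (Projective (ModuleCat.of Q Q))

lemma residueFieldSequence_shortExact : (residueFieldSequence Q).ShortExact :=
  have residue_exact :
      Function.Exact (maximalIdeal Q).subtype (Algebra.linearMap Q (ResidueField Q)) :=
    LinearMap.exact_iff.2 ((Submodule.ext residue_eq_zero_iff).trans
      (Submodule.range_subtype _).symm)
  ModuleCat.shortComplex_shortExact _ residue_exact Subtype.val_injective residue_surjective

variable {Q R} (surj : Function.Surjective (algebraMap Q R))

include surj in
lemma algebraMap_residueField_surjective [IsLocalHom (algebraMap Q R)] :
    Function.Surjective (algebraMap (ResidueField Q) (ResidueField R)) := fun y => by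
  obtain ⟨r, rfl⟩ := residue_surjective y
  obtain ⟨q, rfl⟩ := surj r
  exact ⟨residue Q q, rfl⟩

/-- The residue field of `Q` base changes to the residue field of a quotient of `Q`. -/
noncomputable def residueFieldBaseChangeEquiv :
    R ⊗[Q] ResidueField Q ≃ₗ[R] ResidueField R :=
  have := surj.isLocalHom
  let ρ := IsScalarTower.toAlgHom Q (ResidueField Q) (ResidueField R)
  baseChangeEquivOfSurjective surj (φ := ρ.toLinearMap)
    (algebraMap_residueField_surjective surj)
    ((LinearMap.ker_eq_bot.2 (algebraMap (ResidueField Q) (ResidueField R)).injective).trans_le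
      bot_le)

/-- The map `𝔪_Q → 𝔪_R` induced by a surjection of local rings. -/
noncomputable def maximalIdealMap : maximalIdeal Q →ₗ[Q] maximalIdeal R :=
  (Algebra.linearMap Q R).restrict
    (q := (maximalIdeal R).restrictScalars Q) fun x hx =>
      have := surj.isLocalHom
      map_nonunit (algebraMap Q R) x hx

section HypersurfaceElement

variable {f : Q} (hfm : f ∈ maximalIdeal Q)

include surj in
lemma exists_linearMap_residueField_eq_one [IsNoetherianRing Q] (hf2 : f ∉ maximalIdeal Q ^ 2) :
    ∃ φ : maximalIdeal Q →ₗ[Q] ResidueField R, φ ⟨f, hfm⟩ = 1 := by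
  have := surj.isLocalHom
  have class_ne_zero : (maximalIdeal Q).toCotangent ⟨f, hfm⟩ ≠ 0 := fun h =>
    hf2 ((Ideal.toCotangent_eq_zero _ _).1 h)
  obtain ⟨g, hg⟩ := Module.Projective.exists_dual_eq_one (ResidueField Q) (V := CotangentSpace Q)
    class_ne_zero
  let ρ := IsScalarTower.toAlgHom Q (ResidueField Q) (ResidueField R)
  refine ⟨ρ.toLinearMap ∘ₗ g.restrictScalars Q ∘ₗ (maximalIdeal Q).toCotangent, ?_⟩
  exact (congrArg ρ hg).trans (map_one ρ)

variable {φ : maximalIdeal Q →ₗ[Q] ResidueField R} (hφ : φ ⟨f, hfm⟩ = 1)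

include hφ in
lemma prod_maximalIdealMap_surjective (hf : algebraMap Q R f = 0) :
    Function.Surjective (φ.prod (maximalIdealMap surj)) := by
  have := surj.isLocalHom
  rintro ⟨a, r, hr⟩
  obtain ⟨x, rfl⟩ := surj r
  have hx : x ∈ maximalIdeal Q := (map_mem_nonunits_iff (algebraMap Q R) x).1 hr
  obtain ⟨c, hc⟩ := (residue_surjective.comp surj) (a - φ ⟨x, hx⟩)
  refine ⟨⟨x, hx⟩ + c • ⟨f, hfm⟩, Prod.ext ?_ (Subtype.ext ?_)⟩
  · have smul_one : c • (1 : ResidueField R) = a - φ ⟨x, hx⟩ := by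
      rw [← hc, Algebra.smul_def, mul_one]
      rfl
    change φ _ = a
    rw [map_add, map_smul, hφ, smul_one, add_sub_cancel]
  · change algebraMap Q R (x + c * f) = algebraMap Q R x
    rw [map_add, map_mul, hf, mul_zero, add_zero]

include hφ in
lemma ker_prod_maximalIdealMap_le (ker_eq : RingHom.ker (algebraMap Q R) = Ideal.span {f}) :
    LinearMap.ker (φ.prod (maximalIdealMap surj)) ≤ RingHom.ker (algebraMap Q R) • ⊤ := by
  have := surj.isLocalHom
  rintro ⟨x, hx⟩ h
  have φ_eq_zero : φ ⟨x, hx⟩ = 0 := congrArg Prod.fst h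
  have mem_ker : x ∈ RingHom.ker (algebraMap Q R) := congrArg Subtype.val (congrArg Prod.snd h)
  obtain ⟨y, rfl⟩ := Ideal.mem_span_singleton'.1 (ker_eq ▸ mem_ker)
  rw [show (⟨y * f, hx⟩ : maximalIdeal Q) = y • ⟨f, hfm⟩ from rfl, map_smul, hφ, Algebra.smul_def,
    mul_one] at φ_eq_zero
  have hy : y ∈ maximalIdeal Q := (map_mem_nonunits_iff (algebraMap Q R) y).1
    ((residue_eq_zero_iff _).1 φ_eq_zero)
  rw [ker_eq, Submodule.ideal_span_singleton_smul, Submodule.mem_smul_pointwise_iff_exists]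
  exact ⟨⟨y, hy⟩, trivial, Subtype.ext (mul_comm f y)⟩

end HypersurfaceElement

include surj in
theorem nonempty_leftDerived_residueField_succ_iso [IsNoetherianRing Q] {f : Q}
    (hf : IsSMulRegular Q f) (hfm : f ∈ maximalIdeal Q) (hf2 : f ∉ maximalIdeal Q ^ 2)
    (ker_eq : RingHom.ker (algebraMap Q R) = Ideal.span {f})
    (G : ModuleCat.{u} R ⥤ ModuleCat.{u} R) [G.Additive] [Limits.PreservesFiniteColimits G]
    (n : ℕ) :
    Nonempty (((baseChangeFunctor Q R ⋙ G).leftDerived (n + 1)).obj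
        (ModuleCat.of Q (ResidueField Q)) ≅
      (G.leftDerived n).obj (ModuleCat.of R (ResidueField R)) ⊞
        (G.leftDerived (n + 1)).obj (ModuleCat.of R (ResidueField R))) := by
  obtain ⟨φ, hφ⟩ := exists_linearMap_residueField_eq_one surj hfm hf2
  have algebraMap_f : algebraMap Q R f = 0 := by
    rw [← RingHom.mem_ker, ker_eq]
    exact Ideal.mem_span_singleton_self f
  let e₁ : R ⊗[Q] maximalIdeal Q ≃ₗ[R] ResidueField R × maximalIdeal R :=
    baseChangeEquivOfSurjective surj (prod_maximalIdealMap_surjective surj hfm hφ algebraMap_f)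
      (ker_prod_maximalIdealMap_le surj hfm hφ ker_eq)
  let E₁ : (baseChangeFunctor Q R).obj (residueFieldSequence Q).X₁ ≅
      ModuleCat.of R (ModuleCat.of R (ResidueField R) × (residueFieldSequence R).X₁) :=
    e₁.toModuleIso
  let toBiprod := (ModuleCat.biprodIsoProd (ModuleCat.of R (ResidueField R))
    (residueFieldSequence R).X₁).symm
  let E₂ : (baseChangeFunctor Q R).obj (residueFieldSequence Q).X₂ ≅ (residueFieldSequence R).X₂ :=
    (AlgebraTensorModule.rid Q R R).toModuleIso
  have comm : (baseChangeFunctor Q R).map (residueFieldSequence Q).f ≫ E₂.hom =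
      (E₁ ≪≫ toBiprod).hom ≫ Limits.biprod.snd ≫ (residueFieldSequence R).f :=
    calc
      _ = E₁.hom ≫ ModuleCat.ofHom (LinearMap.snd R _ _) ≫ (residueFieldSequence R).f :=
        ModuleCat.hom_ext <| AlgebraTensorModule.ext fun r x =>
          (Algebra.smul_def _ r).trans (mul_comm _ r)
      _ = _ := by
        rw [← ModuleCat.biprodIsoProd_inv_comp_snd]
        simp only [toBiprod, Iso.trans_hom, Iso.symm_hom, Category.assoc]
  exact nonempty_leftDerived_comp_succ_iso (baseChangeFunctor Q R) G
    (residueFieldSequence_shortExact Q) (residueFieldSequence_shortExact R)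
    (isZero_leftDerived_baseChangeFunctor_of_isSMulRegular surj ker_eq hf (hf.submodule _ _))
    (E₁ ≪≫ toBiprod) E₂ comm n

end LocalRings

section FiberRank

open IsLocalRing

universe u

/-- The dimension of the fibre `k ⊗[A] T` over the residue field `k` of `A`, that is, the minimal
number of generators of `T` when `T` is finitely generated. -/
noncomputable def fiberRank (A T : Type*) [CommRing A] [IsLocalRing A] [AddCommGroup T]
    [Module A T] : ℕ :=
  Module.finrank (ResidueField A) (ResidueField A ⊗[A] T)

section

variable {A : Type u} [CommRing A] [IsLocalRing A]

lemma fiberRank_congr {X Y : ModuleCat.{u} A} (e : X ≅ Y) : fiberRank A X = fiberRank A Y :=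
  (e.toLinearEquiv.baseChange A (ResidueField A) X Y).finrank_eq

lemma fiberRank_prod (S T : Type*) [AddCommGroup S] [Module A S] [Module.Finite A S]
    [AddCommGroup T] [Module A T] [Module.Finite A T] :
    fiberRank A (S × T) = fiberRank A S + fiberRank A T :=
  (TensorProduct.prodRight A (ResidueField A) (ResidueField A) S T).finrank_eq.trans
    Module.finrank_prod

end

variable {Q R : Type u} [CommRing Q] [IsLocalRing Q] [CommRing R] [IsLocalRing R] [Algebra Q R]

lemma fiberRank_eq_of_surjective (surj : Function.Surjective (algebraMap Q R)) (T : Type*)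
    [AddCommGroup T] [Module Q T] [Module R T] [IsScalarTower Q R T] :
    fiberRank Q T = fiberRank R T := by
  have := surj.isLocalHom
  let e : ResidueField Q ⊗[Q] T ≃ₗ[Q] ResidueField R ⊗[R] T :=
    TensorProduct.comm Q (ResidueField Q) T ≪≫ₗ
      ((AlgebraTensorModule.cancelBaseChange Q R R T (ResidueField Q)).symm ≪≫ₗ
        (residueFieldBaseChangeEquiv surj).lTensor T ≪≫ₗ
        TensorProduct.comm R T (ResidueField R)).restrictScalars Q
  refine congrArg Cardinal.toNat (rank_eq_of_equiv_equiv (algebraMap _ _) e.toAddEquiv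
    ⟨RingHom.injective _, algebraMap_residueField_surjective surj⟩ fun r x => ?_)
  obtain ⟨q, rfl⟩ := residue_surjective r
  calc
    _ = e (q • x) := congrArg e (algebraMap_smul (ResidueField Q) q x)
    _ = q • e x := map_smul e q x
    _ = _ := (algebraMap_smul (ResidueField R) q (e x)).symm

end FiberRank

section MinimalGenerators

variable {A : Type*} [CommRing A] {J 𝔞 𝔪 : Ideal A} {g : A}

lemma exists_eq_add_mul_of_mem_mul_sup_span {x : A} (hx : x ∈ 𝔪 * (J ⊔ Ideal.span {g})) :
    ∃ z ∈ J, z ∈ 𝔪 * J ∧ ∃ c ∈ 𝔪, z + c * g = x := by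
  rw [Ideal.mul_sup] at hx
  obtain ⟨z, hz, _, hy, rfl⟩ := Submodule.mem_sup.1 hx
  obtain ⟨c, hc, rfl⟩ := Ideal.mem_mul_span_singleton.1 hy
  exact ⟨z, Ideal.mul_le_right hz, hz, c, hc, rfl⟩

variable (hg : IsSMulRegular (A ⧸ J) g)
  (hmin : (J ⊔ Ideal.span {g}) ⊓ 𝔞 ≤ 𝔪 * (J ⊔ Ideal.span {g}))

include hg hmin

lemma inf_le_mul_of_isSMulRegular_quotient (hgm : g ∈ 𝔪) : J ⊓ 𝔞 ≤ 𝔪 * J := by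
  rintro x ⟨hxJ, hxa⟩
  obtain ⟨z, hzJ, hz, c, -, rfl⟩ :=
    exists_eq_add_mul_of_mem_mul_sup_span (hmin ⟨Ideal.mem_sup_left hxJ, hxa⟩)
  have c_mem : c ∈ J := (isSMulRegular_quotient_iff_mem_of_smul_mem J g).1 hg c
    ((J.add_mem_iff_right hzJ).1 (by rwa [smul_eq_mul, mul_comm]))
  exact add_mem hz (mul_comm g c ▸ Ideal.mul_mem_mul hgm c_mem)

lemma mk_notMem_map_of_isSMulRegular_quotient (hJ : J ≤ 𝔪) (h𝔪 : 𝔪 ≠ ⊤) :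
    Ideal.Quotient.mk J g ∉ 𝔞.map (Ideal.Quotient.mk J) := fun h => by
  obtain ⟨x, hxa, j, hj, hxj⟩ := Submodule.mem_sup.1 (Ideal.mem_quotient_iff_mem_sup.1 h)
  have x_mem : x ∈ J ⊔ Ideal.span {g} := eq_sub_of_add_eq hxj ▸
    sub_mem (Ideal.mem_sup_right (Ideal.mem_span_singleton_self g)) (Ideal.mem_sup_left hj)
  obtain ⟨z, hzJ, -, c, hc, hx⟩ := exists_eq_add_mul_of_mem_mul_sup_span (hmin ⟨x_mem, hxa⟩)
  have smul_one_sub : g • (1 - c) = z + j := by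
    rw [smul_eq_mul]
    linear_combination -hxj - hx
  have one_sub_mem : 1 - c ∈ J := (isSMulRegular_quotient_iff_mem_of_smul_mem J g).1 hg _
    (smul_one_sub ▸ add_mem hzJ hj)
  exact h𝔪 ((Ideal.eq_top_iff_one _).2 (sub_add_cancel 1 c ▸ add_mem (hJ one_sub_mem) hc))

end MinimalGenerators

section PoincareSeries

open IsLocalRing MonoidalCategory PowerSeries RingTheory.Sequence

section Betti

variable {Q R : Type} [CommRing Q] [IsLocalRing Q] [CommRing R] [IsLocalRing R] [Algebra Q R]
  (M : Type) [AddCommGroup M] [Module Q M] [Module R M] [IsScalarTower Q R M]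
  (surj : Function.Surjective (algebraMap Q R))

include surj in
lemma bettiNumber_eq_fiberRank_leftDerived (n : ℕ) :
    bettiNumber Q M n = fiberRank R (((baseChangeFunctor Q R ⋙
      (tensoringLeft (ModuleCat R)).obj (ModuleCat.of R M)).leftDerived n).obj
        (ModuleCat.of Q (ResidueField Q))) := by
  let T := ((baseChangeFunctor Q R ⋙ (tensoringLeft (ModuleCat R)).obj
    (ModuleCat.of R M)).leftDerived n).obj (ModuleCat.of Q (ResidueField Q))
  let _ : Module Q T := Module.compHom T (algebraMap Q R)
  have : IsScalarTower Q R T := .of_algebraMap_smul fun _ _ => rfl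
  exact (fiberRank_congr (torIsoLeftDerivedBaseChange Q R M _ n)).trans
    (fiberRank_eq_of_surjective surj T)

include surj in
lemma bettiNumber_zero_eq : bettiNumber Q M 0 = bettiNumber R M 0 := by
  rw [bettiNumber_eq_fiberRank_leftDerived M surj]
  let G := (tensoringLeft (ModuleCat R)).obj (ModuleCat.of R M)
  exact fiberRank_congr ((baseChangeFunctor Q R ⋙ G).leftDerivedZeroIsoSelf.app _ ≪≫
    G.mapIso (residueFieldBaseChangeEquiv surj).toModuleIso ≪≫
    G.leftDerivedZeroIsoSelf.symm.app _)

lemma bettiNumber_eq_of_bijective (bij : Function.Bijective (algebraMap Q R)) (n : ℕ) :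
    bettiNumber Q M n = bettiNumber R M n := by
  have : Module.Flat Q R := .of_linearEquiv (.symm (.ofBijective (Algebra.linearMap Q R) bij))
  rw [bettiNumber_eq_fiberRank_leftDerived M bij.surjective]
  let G := (tensoringLeft (ModuleCat R)).obj (ModuleCat.of R M)
  exact fiberRank_congr (leftDerivedCompIso (baseChangeFunctor Q R) G
    (isZero_leftDerived_baseChangeFunctor_of_flat _) n ≪≫
      (G.leftDerived n).mapIso (residueFieldBaseChangeEquiv bij.surjective).toModuleIso)

include surj in
theorem bettiNumber_succ_eq [Module.Finite R M] [IsNoetherianRing Q] {f : Q}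
    (hf : IsSMulRegular Q f) (hfm : f ∈ maximalIdeal Q) (hf2 : f ∉ maximalIdeal Q ^ 2)
    (ker_eq : RingHom.ker (algebraMap Q R) = Ideal.span {f}) (n : ℕ) :
    bettiNumber Q M (n + 1) = bettiNumber R M n + bettiNumber R M (n + 1) := by
  have : IsNoetherianRing R := isNoetherianRing_of_surjective Q R _ surj
  let T (i : ℕ) := ((Tor (ModuleCat R) i).obj (ModuleCat.of R M)).obj
    (ModuleCat.of R (ResidueField R))
  have finite_T (i : ℕ) : Module.Finite R (T i) := finite_tor M (ResidueField R) i
  obtain ⟨e⟩ := nonempty_leftDerived_residueField_succ_iso surj hf hfm hf2 ker_eq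
    ((tensoringLeft (ModuleCat R)).obj (ModuleCat.of R M)) n
  calc
    _ = fiberRank R (T n × T (n + 1)) := (bettiNumber_eq_fiberRank_leftDerived M surj _).trans
      (fiberRank_congr (e ≪≫ ModuleCat.biprodIsoProd (T n) (T (n + 1))))
    _ = _ := fiberRank_prod (T n) (T (n + 1))

end Betti

/-- The Poincaré series `P_M^A(t) = ∑ β_i^A(M) t^i`. -/
noncomputable def poincareSeries (A : Type) [CommRing A] [IsLocalRing A]
    (M : Type) [AddCommGroup M] [Module A M] : PowerSeries ℕ :=
  PowerSeries.mk (bettiNumber A M)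

theorem poincareSeries_eq_mul_of_hypersurface {Q R : Type} [CommRing Q] [IsLocalRing Q]
    [IsNoetherianRing Q] [CommRing R] [IsLocalRing R] [Algebra Q R]
    (surj : Function.Surjective (algebraMap Q R)) {f : Q}
    (hf : IsSMulRegular Q f) (hfm : f ∈ maximalIdeal Q) (hf2 : f ∉ maximalIdeal Q ^ 2)
    (ker_eq : RingHom.ker (algebraMap Q R) = Ideal.span {f})
    (M : Type) [AddCommGroup M] [Module Q M] [Module R M] [IsScalarTower Q R M]
    [Module.Finite R M] :
    poincareSeries Q M = (1 + X) * poincareSeries R M := by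
  ext n
  rw [add_mul, one_mul, map_add]
  cases n with
  | zero =>
    simpa only [poincareSeries, coeff_mk, coeff_zero_X_mul, add_zero] using
      bettiNumber_zero_eq M surj
  | succ n =>
    simpa only [poincareSeries, coeff_mk, coeff_succ_X_mul, add_comm (bettiNumber R M n)] using
      bettiNumber_succ_eq M surj hf hfm hf2 ker_eq n

theorem poincareSeries_quotient_eq_mul {Q R : Type} [CommRing Q] [IsLocalRing Q]
    [IsNoetherianRing Q] [CommRing R] [IsLocalRing R] {J : Ideal Q} [IsLocalRing (Q ⧸ J)]
    (hJ : J ≤ maximalIdeal Q) {g : Q} (hgm : g ∈ maximalIdeal Q) (hg : IsSMulRegular (Q ⧸ J) g)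
    (hmin : (J ⊔ Ideal.span {g}) ⊓ maximalIdeal Q ^ 2 ≤
      maximalIdeal Q * (J ⊔ Ideal.span {g})) [Algebra (Q ⧸ J) R]
    (surj : Function.Surjective (algebraMap (Q ⧸ J) R))
    (ker_eq : RingHom.ker (algebraMap (Q ⧸ J) R) = Ideal.span {Ideal.Quotient.mk J g})
    (M : Type) [AddCommGroup M] [Module (Q ⧸ J) M] [Module R M] [IsScalarTower (Q ⧸ J) R M]
    [Module.Finite R M] :
    poincareSeries (Q ⧸ J) M = (1 + X) * poincareSeries R M := by
  have map_eq : (maximalIdeal Q).map (Ideal.Quotient.mk J) = maximalIdeal (Q ⧸ J) :=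
    map_maximalIdeal_of_surjective _ Ideal.Quotient.mk_surjective
  refine poincareSeries_eq_mul_of_hypersurface surj ((isSMulRegular_algebraMap_iff (Q ⧸ J)).2 hg)
    (map_eq ▸ Ideal.mem_map_of_mem _ hgm) ?_ ker_eq M
  rw [← map_eq, ← Ideal.map_pow]
  exact mk_notMem_map_of_isSMulRegular_quotient hg hmin hJ (maximalIdeal.isMaximal Q).ne_top

theorem poincareSeries_eq_one_add_X_pow_mul {Q : Type} [CommRing Q] [IsLocalRing Q]
    [IsNoetherianRing Q] {rs : List Q} (hreg : IsWeaklyRegular Q rs)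
    (hm : ∀ r ∈ rs, r ∈ maximalIdeal Q)
    (hmin : Ideal.ofList rs ⊓ maximalIdeal Q ^ 2 ≤ maximalIdeal Q * Ideal.ofList rs)
    {R : Type} [CommRing R] [IsLocalRing R] [Algebra Q R]
    (surj : Function.Surjective (algebraMap Q R))
    (ker_eq : RingHom.ker (algebraMap Q R) = Ideal.ofList rs)
    (M : Type) [AddCommGroup M] [Module Q M] [Module R M] [IsScalarTower Q R M]
    [Module.Finite R M] :
    poincareSeries Q M = (1 + X) ^ rs.length * poincareSeries R M := by
  induction rs using List.reverseRecOn generalizing R with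
  | nil =>
    have inj : Function.Injective (algebraMap Q R) :=
      (RingHom.injective_iff_ker_eq_bot _).2 (ker_eq.trans Ideal.ofList_nil)
    rw [List.length_nil, pow_zero, one_mul, poincareSeries, poincareSeries,
      funext (bettiNumber_eq_of_bijective M ⟨inj, surj⟩)]
  | append_singleton rs g ih =>
    rw [isWeaklyRegular_append_iff, isWeaklyRegular_singleton_iff, smul_eq_mul,
      Ideal.mul_top] at hreg
    rw [Ideal.ofList_append, Ideal.ofList_singleton] at hmin ker_eq
    rw [List.forall_mem_append, List.forall_mem_singleton] at hm
    set J := Ideal.ofList rs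
    have hJ : J ≤ maximalIdeal Q := Ideal.span_le.2 hm.1
    have : Nontrivial (Q ⧸ J) := Ideal.Quotient.nontrivial_iff.2
      (ne_top_of_le_ne_top (maximalIdeal.isMaximal Q).ne_top hJ)
    have : IsLocalRing (Q ⧸ J) := .of_surjective' _ Ideal.Quotient.mk_surjective
    have J_le : J ≤ RingHom.ker (algebraMap Q R) := ker_eq ▸ le_sup_left
    let _ : Algebra (Q ⧸ J) R := (Ideal.Quotient.lift J (algebraMap Q R) J_le).toAlgebra
    let _ : Module (Q ⧸ J) M := Module.compHom M (algebraMap (Q ⧸ J) R)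
    have : IsScalarTower Q (Q ⧸ J) R := .of_algebraMap_eq' rfl
    have : IsScalarTower (Q ⧸ J) R M := .of_algebraMap_smul fun _ _ => rfl
    have : IsScalarTower Q (Q ⧸ J) M := .to₁₂₄ Q (Q ⧸ J) R M
    have surj' : Function.Surjective (algebraMap (Q ⧸ J) R) :=
      Ideal.Quotient.lift_surjective_of_surjective J J_le surj
    have : Module.Finite (Q ⧸ J) R := .of_surjective (Algebra.linearMap (Q ⧸ J) R) surj'
    have : Module.Finite (Q ⧸ J) M := .trans R M
    have ker_eq' : RingHom.ker (algebraMap (Q ⧸ J) R) = Ideal.span {Ideal.Quotient.mk J g} := by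
      rw [← Set.image_singleton, ← Ideal.map_span, ← bot_sup_eq (Ideal.map _ _),
        ← Ideal.map_quotient_self J, ← Ideal.map_sup, ← ker_eq]
      exact Ideal.ker_quotient_lift _ J_le
    rw [ih hreg.1 hm.1 (inf_le_mul_of_isSMulRegular_quotient hreg.2 hmin hm.2)
        Ideal.Quotient.mk_surjective Ideal.mk_ker,
      poincareSeries_quotient_eq_mul hJ hm.2 hreg.2 hmin surj' ker_eq' M,
      List.length_append, List.length_singleton, pow_succ, mul_assoc]

lemma coeff_one_add_X_pow_mul_mk (n i : ℕ) (b : ℕ → ℕ) :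
    coeff i ((1 + X) ^ n * PowerSeries.mk b) =
      ∑ j ∈ Finset.range (min n i + 1), n.choose j * b (i - j) := by
  have coeff_pow (j : ℕ) : coeff j ((1 + X : PowerSeries ℕ) ^ n) = n.choose j := by
    have coe_eq : (((1 + Polynomial.X) ^ n : Polynomial ℕ) : PowerSeries ℕ) = (1 + X) ^ n := by
      simp
    rw [← coe_eq, Polynomial.coeff_coe, Polynomial.coeff_one_add_X_pow, Nat.cast_id]
  rw [coeff_mul, Finset.Nat.sum_antidiagonal_eq_sum_range_succ_mk]
  simp only [coeff_pow, coeff_mk]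
  refine (Finset.sum_subset (fun j hj => ?_) fun j hj hj' => ?_).symm
  · simp only [Finset.mem_range] at *
    omega
  · simp only [Finset.mem_range] at *
    rw [Nat.choose_eq_zero_of_lt (by omega), zero_mul]

end PoincareSeries

/-- **Nagata's equality.** If `f₁, …, fₙ` is a `Q`-regular sequence contained in
the maximal ideal `m` of a Noetherian local ring `Q`, `I = (f₁, …, fₙ)`, `R = Q/I`,
and `I ∩ m² ⊆ m·I`, then for every finitely generated `R`-module `M` and all `i ≥ 0`,
`β_i^Q(M) = ∑_{j=0}^{min(n,i)} C(n,j) · β_{i−j}^R(M)`, i.e.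
`P_M^Q(t) = P_M^R(t)·(1+t)^n`. -/
theorem betti_base_eq_of_regular_sequence_of_minimal
    (Q : Type) [CommRing Q] [IsNoetherianRing Q] [IsLocalRing Q]
    (n : ℕ) (f : Fin n → Q)
    (hreg : RingTheory.Sequence.IsRegular Q (List.ofFn f))
    (hfm : ∀ j, f j ∈ IsLocalRing.maximalIdeal Q)
    (I : Ideal Q) (hI : I = Ideal.span (Set.range f))
    [IsLocalRing (Q ⧸ I)]
    (hmin : I ⊓ (IsLocalRing.maximalIdeal Q) ^ 2 ≤ IsLocalRing.maximalIdeal Q * I)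
    (M : Type) [AddCommGroup M] [Module Q M] [Module (Q ⧸ I) M]
    [IsScalarTower Q (Q ⧸ I) M] [Module.Finite (Q ⧸ I) M]
    (i : ℕ) :
    bettiNumber Q M i =
      ∑ j ∈ Finset.range (min n i + 1),
        Nat.choose n j * bettiNumber (Q ⧸ I) M (i - j) := by
  have ofList_eq : Ideal.ofList (List.ofFn f) = I := by
    rw [hI, Ideal.ofList]
    congr 1
    ext x
    exact List.mem_ofFn' f x
  have mem_maximalIdeal : ∀ r ∈ List.ofFn f, r ∈ IsLocalRing.maximalIdeal Q :=
    (List.forall_mem_ofFn_iff).2 hfm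
  have poincareSeries_eq := poincareSeries_eq_one_add_X_pow_mul hreg.toIsWeaklyRegular
    mem_maximalIdeal (ofList_eq ▸ hmin) Ideal.Quotient.mk_surjective
    (Ideal.mk_ker.trans ofList_eq.symm) M
  rw [List.length_ofFn] at poincareSeries_eq
  calc
    bettiNumber Q M i = PowerSeries.coeff i (poincareSeries Q M) := (PowerSeries.coeff_mk _ _).symm
    _ = _ := congrArg (PowerSeries.coeff i) poincareSeries_eq
    _ = _ := coeff_one_add_X_pow_mul_mk n i _
end
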